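/- Let U be a bounded connected open set in ℂ^m. Then there exist a sequence of injective holomorphic maps F_j : B^m(0,1) → U and numbers 0 < s_j < 1, j = 1,2,…, such that: (i) F_{j+1}(B^m(0,s_{j+1})) ⊇ F_j(B^m(0,s_j)) for all j ≥ 1, and (ii) vol(F_j(B^m(0,s_j))) → vol(U) as j → ∞. -/

import Mathlib

/-!
It suffices to show that, given an injective holomorphic immersion `F` of the unit ball into `U` and
`s < 1`, there is another one, `G`, and `t < 1` with `F (closedBall 0 s) ⊆ G (ball 0 t)` and
`vol U ≤ vol (G (ball 0 t)) + ε` (`exists_almost_full`); the sequence is obtained by iteration, from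
a small affine ball.

The essential step is `exists_fill`. Let `d` be the distance from `x0` to `F (closedBall 0 a)`, where
`s < a < 1`, and suppose that `ball x0 d ⊆ U`. Then for `d' < d` the image can be enlarged so as to
contain `closedBall x0 d'` as well as `F (closedBall 0 s)`. Indeed, at a nearest point `F (a e)`
the derivative of `F` carries the outward normal directions into each other
(`nearest_point_frame`), so that a
conformal affine map `A` exists which agrees with `F` at `a e`, matches its normal derivative, and
carries a ball outside `closedBall 0 a` onto the ball of radius between `d'` and `d` around `x0`
(`exists_conformal`).
Consider the compact skeleton consisting of `closedBall 0 s₁` with `s < s₁ < a`, a segment on the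
ray of `e` through `a e`, and the outer closed ball. With the logistic function as a holomorphic
approximate step, `F` and `A` are interpolated by maps which, for a steep enough step, are injective
immersions near the skeleton (`exists_glued`, `exists_nhd_embedding`). An explicit
map of the form `z e + w ↦ φ z e + μ z w` (identity plus a thin logarithmic neck plus a ball
automorphism) embeds the unit ball in an arbitrarily small neighbourhood of the skeleton, covering
almost all of the two balls (`exists_dumbbell`). The composition is the required `G`.

By a connectedness argument the image can then be enlarged to contain any given point of `U`
(`exists_reach`). Since `U` minus a closed ball is still connected, finitely many disjoint closed
balls can be absorbed one after the other (`exists_absorb`), and the Besicovitch covering theorem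
provides finitely many such balls filling the complement of the image up to measure `ε`.
-/

open Metric MeasureTheory

noncomputable instance {m : ℕ} : MeasurableSpace (EuclideanSpace ℂ (Fin m)) := borel _
instance {m : ℕ} : BorelSpace (EuclideanSpace ℂ (Fin m)) := ⟨rfl⟩
noncomputable instance {m : ℕ} : InnerProductSpace ℝ (EuclideanSpace ℂ (Fin m)) :=
  InnerProductSpace.rclikeToReal ℂ _

/-- Lebesgue measure on `ℂ^m ≅ ℝ^{2m}`. -/
noncomputable instance {m : ℕ} : MeasureSpace (EuclideanSpace ℂ (Fin m)) :=
  measureSpaceOfInnerProductSpace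

set_option linter.unusedSectionVars false
set_option linter.unusedSimpArgs false

/-! ### Ball embeddings and stability of their images -/

section Emb
open Set Filter Topology

variable {V : Type*} [NormedAddCommGroup V] [InnerProductSpace ℂ V] [FiniteDimensional ℂ V]

/-- `F` restricts to an injective holomorphic immersion of the open unit ball into `U`. Holomorphy is
recorded as continuous complex differentiability. -/
structure IsBallEmb (F : V → V) (U : Set V) : Prop where
  contDiff : ContDiffOn ℂ 1 F (ball 0 1)
  inj : InjOn F (ball 0 1)
  immersion : ∀ x ∈ ball (0 : V) 1, Function.Injective (fderiv ℂ F x)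
  mapsTo : MapsTo F (ball 0 1) U

lemma exists_lower_bound_of_injective (L : V →L[ℂ] V) (h : Function.Injective L) :
    ∃ c > 0, ∀ u, c * ‖u‖ ≤ ‖L u‖ := by
  obtain ⟨K, hK, hL⟩ := (L : V →ₗ[ℂ] V).exists_antilipschitzWith (LinearMap.ker_eq_bot.2 h)
  refine ⟨(K : ℝ)⁻¹, by positivity, fun u => ?_⟩
  have := hL.le_mul_dist u 0
  simp only [dist_zero_right, map_zero] at this
  rw [inv_mul_le_iff₀ (by positivity)]
  exact this

lemma isOpen_image_of_immersion {F : V → V} {S : Set V} (hS : IsOpen S)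
    (hF : ∀ x ∈ S, ContDiffAt ℂ 1 F x) (hi : ∀ x ∈ S, Function.Injective (fderiv ℂ F x)) :
    IsOpen (F '' S) := by
  rw [isOpen_iff_mem_nhds]
  rintro _ ⟨x, hx, rfl⟩
  have hs := (hF x hx).hasStrictFDerivAt one_ne_zero
  have hsurj : Function.Surjective (fderiv ℂ F x : V →ₗ[ℂ] V) :=
    LinearMap.injective_iff_surjective.1 (hi x hx)
  have := hs.map_nhds_eq_of_surj (LinearMap.range_eq_top.2 hsurj)
  rw [← this]
  exact image_mem_map (hS.mem_nhds hx)

/-- A `C¹` map which is injective and immersive on a compact set is bi-Lipschitz there. -/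
lemma exists_bilipschitz {F : V → V} {K : Set V} (hK : IsCompact K)
    (hF : ∀ x ∈ K, ContDiffAt ℂ 1 F x) (hinj : InjOn F K)
    (hi : ∀ x ∈ K, Function.Injective (fderiv ℂ F x)) :
    ∃ c > 0, ∃ C > 0, ∀ x ∈ K, ∀ y ∈ K,
      c * ‖x - y‖ ≤ ‖F x - F y‖ ∧ ‖F x - F y‖ ≤ C * ‖x - y‖ := by
  have key : ∃ c > 0, ∃ C > 0, ∀ p ∈ K ×ˢ K,
      c * ‖p.1 - p.2‖ ≤ ‖F p.1 - F p.2‖ ∧ ‖F p.1 - F p.2‖ ≤ C * ‖p.1 - p.2‖ := by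
    refine (hK.prod hK).induction_on (p := fun S => ∃ c > 0, ∃ C > 0, ∀ p ∈ S,
      c * ‖p.1 - p.2‖ ≤ ‖F p.1 - F p.2‖ ∧ ‖F p.1 - F p.2‖ ≤ C * ‖p.1 - p.2‖) ?_ ?_ ?_ ?_
    · exact ⟨1, one_pos, 1, one_pos, by simp⟩
    · rintro s t hst ⟨c, hc, C, hC, h⟩
      exact ⟨c, hc, C, hC, fun p hp => h p (hst hp)⟩
    · rintro s t ⟨c, hc, C, hC, h⟩ ⟨c', hc', C', hC', h'⟩
      refine ⟨min c c', lt_min hc hc', max C C', lt_max_of_lt_left hC, ?_⟩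
      rintro p (hp | hp)
      · exact ⟨(mul_le_mul_of_nonneg_right (min_le_left _ _) (norm_nonneg _)).trans (h p hp).1,
          (h p hp).2.trans (mul_le_mul_of_nonneg_right (le_max_left _ _) (norm_nonneg _))⟩
      · exact ⟨(mul_le_mul_of_nonneg_right (min_le_right _ _) (norm_nonneg _)).trans (h' p hp).1,
          (h' p hp).2.trans (mul_le_mul_of_nonneg_right (le_max_right _ _) (norm_nonneg _))⟩
    · rintro ⟨x, y⟩ ⟨hx, hy⟩
      by_cases hxy : x = y
      · subst hxy
        have hs := (hF x hx).hasStrictFDerivAt one_ne_zero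
        obtain ⟨c, hc, hcL⟩ := exists_lower_bound_of_injective _ (hi x hx)
        have h1 := (hasStrictFDerivAt_iff_isLittleO.1 hs).def (half_pos hc)
        refine ⟨_, mem_nhdsWithin_of_mem_nhds h1, c / 2, half_pos hc,
          ‖fderiv ℂ F x‖ + c / 2, by positivity, ?_⟩
        rintro ⟨u, v⟩ huv
        simp only [mem_ofPred_eq] at huv ⊢
        have h2 := hcL (u - v)
        have h3 := (fderiv ℂ F x).le_opNorm (u - v)
        have h4 := norm_sub_norm_le (fderiv ℂ F x (u - v)) (F u - F v)
        have h5 := norm_sub_norm_le (F u - F v) (fderiv ℂ F x (u - v))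
        rw [norm_sub_rev (fderiv ℂ F x (u - v))] at h4
        constructor <;> nlinarith
      · have hd : 0 < ‖x - y‖ := norm_pos_iff.2 (sub_ne_zero.2 hxy)
        have hFd : 0 < ‖F x - F y‖ := norm_pos_iff.2 (sub_ne_zero.2 fun h => hxy (hinj hx hy h))
        have c1 : Tendsto (fun p : V × V => ‖p.1 - p.2‖) (𝓝 (x, y)) (𝓝 ‖x - y‖) :=
          (continuous_fst.sub continuous_snd).norm.tendsto (x, y)
        have c2 : Tendsto (fun p : V × V => ‖F p.1 - F p.2‖) (𝓝 (x, y)) (𝓝 ‖F x - F y‖) :=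
          ((((hF x hx).continuousAt.tendsto.comp (continuous_fst.tendsto (x, y))).sub
            ((hF y hy).continuousAt.tendsto.comp (continuous_snd.tendsto (x, y)))).norm)
        have e1 := c1.eventually (Ioo_mem_nhds (half_lt_self hd) (lt_two_mul_self hd))
        have e2 := c2.eventually (Ioo_mem_nhds (half_lt_self hFd) (lt_two_mul_self hFd))
        refine ⟨_, mem_nhdsWithin_of_mem_nhds (e1.and e2),
          (‖F x - F y‖ / 2) / (2 * ‖x - y‖), by positivity,
          (2 * ‖F x - F y‖) / (‖x - y‖ / 2), by positivity, ?_⟩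
        rintro ⟨u, v⟩ ⟨⟨h1, h2⟩, h3, h4⟩
        simp only at h1 h2 h3 h4 ⊢
        constructor
        · rw [div_mul_eq_mul_div, div_le_iff₀ (by positivity)]
          nlinarith
        · rw [div_mul_eq_mul_div, le_div_iff₀ (by positivity)]
          nlinarith
  obtain ⟨c, hc, C, hC, h⟩ := key
  exact ⟨c, hc, C, hC, fun x hx y hy => h (x, y) ⟨hx, hy⟩⟩

/-- Stability of images: a connected set `K₁` lies in the (open) image `H(ball)` when it meets it
and is at distance `≥ η` from the values on the sphere of a map `F` that is `η`-close to `H`. -/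
lemma subset_image_of_close {F H : V → V} {c : V} {R η : ℝ} {K₁ : Set V}
    (hK : IsPreconnected K₁) (hH : ContinuousOn H (closedBall c R))
    (hopen : IsOpen (H '' ball c R))
    (hclose : ∀ x ∈ closedBall c R, ‖H x - F x‖ < η)
    (hsph : ∀ x ∈ sphere c R, ∀ y ∈ K₁, η ≤ ‖F x - y‖)
    (hne : (K₁ ∩ H '' ball c R).Nonempty) : K₁ ⊆ H '' ball c R := by
  have : ProperSpace V := FiniteDimensional.proper ℂ V
  have hcl : IsClosed (H '' closedBall c R) :=
    ((isCompact_closedBall c R).image_of_continuousOn hH).isClosed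
  refine hK.subset_left_of_subset_union hopen hcl.isOpen_compl ?_ ?_ hne
  · rw [disjoint_compl_right_iff_subset]
    exact image_mono ball_subset_closedBall
  · intro y hy
    by_cases h : y ∈ H '' closedBall c R
    · obtain ⟨x, hx, rfl⟩ := h
      rw [← ball_union_sphere] at hx
      rcases hx with hx | hx
      · exact Or.inl ⟨x, hx, rfl⟩
      · have h1 := hsph x hx _ hy
        have h2 := hclose x (sphere_subset_closedBall hx)
        rw [norm_sub_rev] at h2
        linarith
    · exact Or.inr h

end Emb

/-! ### Maps adapted to a complex line -/

section Twist
open Set Filter Topology ComplexConjugate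

variable {V : Type*} [NormedAddCommGroup V] [InnerProductSpace ℂ V] [FiniteDimensional ℂ V]

/-- The map `z e + w ↦ φ(z) e + μ(z) w` for `w ⊥ e`, where `z = ⟪e, x⟫`. -/
noncomputable def twist (e : V) (φ μ : ℂ → ℂ) (x : V) : V :=
  μ (inner ℂ e x) • (x - inner ℂ e x • e) + φ (inner ℂ e x) • e

lemma inner_perp {e : V} (he : ‖e‖ = 1) (x : V) : inner ℂ e (x - inner ℂ e x • e) = 0 := by
  simp [inner_sub_right, inner_smul_right, inner_self_eq_norm_sq_to_K, he]

lemma inner_twist {e : V} (he : ‖e‖ = 1) (φ μ : ℂ → ℂ) (x : V) :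
    inner ℂ e (twist e φ μ x) = φ (inner ℂ e x) := by
  simp only [twist, inner_add_right, inner_smul_right, inner_perp he]
  simp [inner_self_eq_norm_sq_to_K, he]

lemma perp_twist {e : V} (he : ‖e‖ = 1) (φ μ : ℂ → ℂ) (x : V) :
    twist e φ μ x - inner ℂ e (twist e φ μ x) • e
      = μ (inner ℂ e x) • (x - inner ℂ e x • e) := by
  rw [inner_twist he]; simp [twist]

lemma norm_sq_perp {e : V} (he : ‖e‖ = 1) (x : V) :
    ‖x‖ ^ 2 = ‖inner ℂ e x‖ ^ 2 + ‖x - inner ℂ e x • e‖ ^ 2 := by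
  have h : inner ℂ (inner ℂ e x • e) (x - inner ℂ e x • e) = 0 := by
    rw [inner_smul_left, inner_perp he, mul_zero]
  have := norm_add_sq_eq_norm_sq_add_norm_sq_of_inner_eq_zero _ _ h
  rw [add_sub_cancel, norm_smul, he, mul_one] at this
  nlinarith

lemma norm_inner_le_of_unit {e : V} (he : ‖e‖ = 1) (x : V) : ‖inner ℂ e x‖ ≤ ‖x‖ := by
  simpa [he] using norm_inner_le_norm (𝕜 := ℂ) e x

lemma twist_contDiffAt {e : V} {φ μ : ℂ → ℂ} {x : V} (hφ : ContDiffAt ℂ 1 φ (inner ℂ e x))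
    (hμ : ContDiffAt ℂ 1 μ (inner ℂ e x)) : ContDiffAt ℂ 1 (twist e φ μ) x := by
  have hl : ContDiffAt ℂ 1 (fun x : V => inner ℂ e x) x := (innerSL ℂ e).contDiff.contDiffAt
  have h1 : ContDiffAt ℂ 1 (fun x : V => φ (inner ℂ e x)) x := hφ.comp x hl
  have h2 : ContDiffAt ℂ 1 (fun x : V => μ (inner ℂ e x)) x := hμ.comp x hl
  exact (h2.smul (contDiffAt_id.sub (hl.smul contDiffAt_const))).add (h1.smul contDiffAt_const)

lemma twist_immersion {e : V} (he : ‖e‖ = 1) {φ μ : ℂ → ℂ} {x : V} {φ' μ' : ℂ}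
    (hφ : HasDerivAt φ φ' (inner ℂ e x)) (hμ : HasDerivAt μ μ' (inner ℂ e x))
    (hφ0 : φ' ≠ 0) (hμ0 : μ (inner ℂ e x) ≠ 0) :
    Function.Injective (fderiv ℂ (twist e φ μ) x) := by
  have hl : HasFDerivAt (fun x : V => inner ℂ e x) (innerSL ℂ e) x := (innerSL ℂ e).hasFDerivAt
  have h1 := hφ.comp_hasFDerivAt x hl
  have h2 := hμ.comp_hasFDerivAt x hl
  have h := (h2.smul ((hasFDerivAt_id x).sub (hl.smul_const e))).add (h1.smul_const e)
  have hf : HasFDerivAt (twist e φ μ) _ x := h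
  rw [hf.fderiv, injective_iff_map_eq_zero]
  intro u hu
  simp only [add_apply, smul_apply,
    sub_apply, ContinuousLinearMap.smulRight_apply,
    ContinuousLinearMap.id_apply, innerSL_apply_apply, Function.comp, id] at hu
  have hz : inner ℂ e u = 0 := by
    have := congrArg (fun y => inner ℂ e y) hu
    simp only [inner_add_right, inner_smul_right, inner_perp he, inner_zero_right] at this
    simpa [inner_perp he, inner_self_eq_norm_sq_to_K, he, hφ0] using this
  simpa [hz, hμ0] using hu

lemma twist_injOn {e : V} (he : ‖e‖ = 1) {φ μ : ℂ → ℂ} (hφ : InjOn φ (ball 0 1))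
    (hμ : ∀ z ∈ ball (0 : ℂ) 1, μ z ≠ 0) : InjOn (twist e φ μ) (ball 0 1) := by
  intro x hx y hy hxy
  have hzx : inner ℂ e x ∈ ball (0 : ℂ) 1 := by
    rw [mem_ball_zero_iff] at *; exact (norm_inner_le_of_unit he x).trans_lt hx
  have hzy : inner ℂ e y ∈ ball (0 : ℂ) 1 := by
    rw [mem_ball_zero_iff] at *; exact (norm_inner_le_of_unit he y).trans_lt hy
  have h1 : inner ℂ e x = inner ℂ e y := by
    apply hφ hzx hzy
    rw [← inner_twist he φ μ x, ← inner_twist he φ μ y, hxy]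
  have h2 := perp_twist he φ μ x
  rw [hxy, perp_twist he, h1] at h2
  have h3 := smul_right_injective V (hμ _ hzy) h2
  simpa using h3.symm

/-- The Noshiro–Warschawski criterion, from the mean value theorem along a segment. -/
lemma injOn_of_re_deriv_pos {S : Set ℂ} (hS : Convex ℝ S) {f f' : ℂ → ℂ}
    (hf : ∀ z ∈ S, HasDerivAt f (f' z) z) (hpos : ∀ z ∈ S, 0 < (f' z).re) : InjOn f S := by
  intro a ha b hb hab
  by_contra hne
  let g : ℝ → ℂ := fun t => a + t * (b - a)
  have hgS : ∀ t ∈ Icc (0 : ℝ) 1, g t ∈ S := fun t ht => by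
    have := hS ha hb (sub_nonneg.2 ht.2) ht.1 (by ring)
    convert this using 1
    simp only [g, Complex.real_smul]; push_cast; ring
  have hg : ∀ t, HasDerivAt g (b - a) t := fun t => by
    simpa [g] using ((Complex.ofRealCLM.hasDerivAt (x := t)).mul_const (b - a)).const_add a
  have hd : ∀ t ∈ Icc (0 : ℝ) 1,
      HasDerivAt (fun t => (conj (b - a) * f (g t)).re) (‖b - a‖ ^ 2 * (f' (g t)).re) t := by
    intro t ht
    have h1 := ((hf _ (hgS t ht)).scomp t (hg t)).const_mul (conj (b - a))
    have h2 := Complex.reCLM.hasFDerivAt.comp_hasDerivAt t h1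
    refine HasDerivAt.congr_deriv (f := fun t => (conj (b - a) * f (g t)).re) h2 ?_
    change (conj (b - a) * ((b - a) * f' (g t))).re = _
    rw [← mul_assoc, Complex.conj_mul', ← Complex.ofReal_pow, Complex.re_ofReal_mul]
  obtain ⟨t, ht, h⟩ := exists_hasDerivAt_eq_slope _ _ (zero_lt_one (α := ℝ))
    (fun t ht => (hd t ht).continuousAt.continuousWithinAt)
    (fun t ht => hd t (Ioo_subset_Icc_self ht))
  have hne' : 0 < ‖b - a‖ := norm_pos_iff.2 (sub_ne_zero.2 (Ne.symm hne))
  have := hpos _ (hgS t (Ioo_subset_Icc_self ht))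
  simp only [g, hab] at h
  simp only [Complex.ofReal_one, one_mul, add_sub_cancel, Complex.ofReal_zero, zero_mul, add_zero, hab,
    sub_self, zero_div] at h
  have h3 : 0 < ‖b - a‖ ^ 2 * (f' (a + t * (b - a))).re := by positivity
  linarith

end Twist

/-! ### The profile of the dumbbell map -/

section Dumbbell1
open Set Filter Topology ComplexConjugate

/-- The profile function: identity, plus a thin logarithmic neck, plus a Möbius map onto a disc of
radius `β`. -/
noncomputable def neck (ε β τ : ℝ) (z : ℂ) : ℂ :=
  z - ε * Complex.log (1 - τ * z) + β * ((1 - τ) * (1 + z) / (1 - τ * z))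

/-- The transversal scaling factor that goes with `neck`. -/
noncomputable def neckScale (β τ : ℝ) (z : ℂ) : ℂ :=
  1 + β * (Real.sqrt (1 - τ ^ 2) / (1 - τ * z))

/-- The derivative of `neck`. -/
noncomputable def neckDeriv (ε β τ : ℝ) (z : ℂ) : ℂ :=
  1 + ε * τ / (1 - τ * z) + β * (1 - τ ^ 2) / (1 - τ * z) ^ 2

lemma re_one_sub_pos {τ : ℝ} (h1 : |τ| < 1) {z : ℂ} (hz : ‖z‖ < 1) :
    0 < (1 - τ * z).re := by
  have h2 : (τ * z : ℂ).re ≤ ‖(τ * z : ℂ)‖ := Complex.re_le_norm _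
  rw [norm_mul, Complex.norm_real, Real.norm_eq_abs] at h2
  have : |τ| * ‖z‖ < 1 := by nlinarith [abs_nonneg τ, norm_nonneg z]
  simp only [Complex.sub_re, Complex.one_re]
  linarith

lemma one_sub_ne {τ : ℝ} (h1 : |τ| < 1) {z : ℂ} (hz : ‖z‖ < 1) : (1 - τ * z : ℂ) ≠ 0 := fun h => by
  have := re_one_sub_pos h1 hz
  rw [h] at this; simp at this

lemma hasDerivAt_neck {ε β τ : ℝ} (h1 : |τ| < 1) {z : ℂ} (hz : ‖z‖ < 1) :
    HasDerivAt (neck ε β τ) (neckDeriv ε β τ z) z := by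
  have hD : HasDerivAt (fun z : ℂ => 1 - τ * z) (-τ) z := by
    simpa using ((hasDerivAt_id z).const_mul (τ : ℂ)).const_sub 1
  have hne := one_sub_ne h1 hz
  have hl := hD.clog (Or.inl (re_one_sub_pos h1 hz))
  have hm := (((hasDerivAt_id z).const_add 1).const_mul (1 - τ : ℂ)).div hD hne
  have := ((hasDerivAt_id z).sub (hl.const_mul (ε : ℂ))).add (hm.const_mul (β : ℂ))
  refine HasDerivAt.congr_deriv (f := neck ε β τ) this ?_
  simp only [neckDeriv, id]
  field_simp
  ring

lemma re_inv_pos {q : ℂ} (h : 0 < q.re) : 0 < (q⁻¹).re := by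
  rw [Complex.inv_re]
  have : 0 < Complex.normSq q := Complex.normSq_pos.2 fun h0 => by simp [h0] at h
  positivity

lemma re_term_pos {c A B C : ℝ} (hc : 0 < c) (hA : 0 ≤ A) (hB : 0 < B) (hC : 0 ≤ C) {p : ℂ}
    (hp : 0 < p.re) : 0 < ((c : ℂ) / (A * p + B + C * p⁻¹)).re := by
  rw [div_eq_mul_inv, Complex.re_ofReal_mul]
  refine mul_pos hc (re_inv_pos ?_)
  have := re_inv_pos hp
  simp only [Complex.add_re, Complex.re_ofReal_mul, Complex.ofReal_re]
  positivity

lemma neckDeriv_re_pos {ε β τ : ℝ} (hε : 0 < ε) (hβ : 0 < β) (h0 : 0 < τ) (h1 : τ < 1) {p : ℂ}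
    (hp : 0 < p.re) :
    0 < (neckDeriv ε β τ ((p - 1) / (p + 1)) * (2 * p / (p + 1) ^ 2)).re := by
  have hp0 : p ≠ 0 := fun h => by simp [h] at hp
  have hp1 : p + 1 ≠ 0 := fun h => by
    have := congrArg Complex.re h; simp at this; linarith
  have hD : ((1 - τ) * p + (1 + τ) : ℂ) ≠ 0 := fun h => by
    have := congrArg Complex.re h
    have e : ((1 - τ) * p + (1 + τ) : ℂ).re = (1 - τ) * p.re + (1 + τ) := by simp
    rw [e] at this
    simp at this; nlinarith
  have e0 : 1 - τ * ((p - 1) / (p + 1)) = ((1 - τ) * p + (1 + τ)) / (p + 1) := by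
    field_simp; ring
  have t1 := re_term_pos (c := 2) (A := 1) (B := 2) (C := 1) (by norm_num) (by norm_num) (by norm_num)
    (by norm_num) hp
  have t2 := re_term_pos (c := 2 * ε * τ) (A := 1 - τ) (B := 2) (C := 1 + τ) (by positivity)
    (by linarith) (by norm_num) (by linarith) hp
  have t3 := re_term_pos (c := 2 * β * (1 - τ ^ 2)) (A := (1 - τ) ^ 2) (B := 2 * (1 - τ ^ 2))
    (C := (1 + τ) ^ 2) (mul_pos (by positivity) (by nlinarith)) (by positivity) (by nlinarith)
    (by positivity) hp
  have key : neckDeriv ε β τ ((p - 1) / (p + 1)) * (2 * p / (p + 1) ^ 2)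
      = ((2 : ℝ) : ℂ) / ((1 : ℝ) * p + (2 : ℝ) + (1 : ℝ) * p⁻¹)
      + ((2 * ε * τ : ℝ) : ℂ) / ((1 - τ : ℝ) * p + (2 : ℝ) + (1 + τ : ℝ) * p⁻¹)
      + ((2 * β * (1 - τ ^ 2) : ℝ) : ℂ) /
        (((1 - τ) ^ 2 : ℝ) * p + (2 * (1 - τ ^ 2) : ℝ) + ((1 + τ) ^ 2 : ℝ) * p⁻¹) := by
    have d1 : ((1 : ℝ) * p + (2 : ℝ) + (1 : ℝ) * p⁻¹ : ℂ) = (p + 1) ^ 2 / p := by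
      push_cast; field_simp; ring
    have d2 : ((1 - τ : ℝ) * p + (2 : ℝ) + (1 + τ : ℝ) * p⁻¹ : ℂ)
        = (p + 1) * ((1 - τ) * p + (1 + τ)) / p := by
      push_cast; field_simp; ring
    have d3 : (((1 - τ) ^ 2 : ℝ) * p + (2 * (1 - τ ^ 2) : ℝ) + ((1 + τ) ^ 2 : ℝ) * p⁻¹ : ℂ)
        = ((1 - τ) * p + (1 + τ)) ^ 2 / p := by
      push_cast; field_simp; ring
    rw [d1, d2, d3, neckDeriv, e0]
    push_cast
    generalize ((1 - τ) * p + (1 + τ) : ℂ) = D at hD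
    field_simp
  rw [key, Complex.add_re, Complex.add_re]
  positivity

/-- The Cayley transform identifies the disc with the right half-plane. -/
lemma exists_cayley {z : ℂ} (hz : ‖z‖ < 1) :
    0 < ((1 + z) / (1 - z)).re ∧ ((1 + z) / (1 - z) - 1) / ((1 + z) / (1 - z) + 1) = z := by
  have hne : 1 - z ≠ 0 := fun h => by
    rw [sub_eq_zero] at h; rw [← h] at hz; simp at hz
  constructor
  · rw [Complex.div_re, ← add_div]
    refine div_pos ?_ (Complex.normSq_pos.2 hne)
    have : ‖z‖ ^ 2 < 1 := by nlinarith [norm_nonneg z]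
    rw [Complex.sq_norm, Complex.normSq_apply] at this
    simp
    nlinarith
  · field_simp
    ring

lemma neckDeriv_ne {ε β τ : ℝ} (hε : 0 < ε) (hβ : 0 < β) (h0 : 0 < τ) (h1 : τ < 1) {z : ℂ}
    (hz : ‖z‖ < 1) : neckDeriv ε β τ z ≠ 0 := fun h => by
  obtain ⟨hp, he⟩ := exists_cayley hz
  have := neckDeriv_re_pos hε hβ h0 h1 hp
  rw [he, h] at this
  simp at this

lemma neckScale_ne {β τ : ℝ} (hβ : 0 < β) (h0 : 0 < τ) (h1 : τ < 1) {z : ℂ}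
    (hz : ‖z‖ < 1) : neckScale β τ z ≠ 0 := fun h => by
  have h2 := re_inv_pos (re_one_sub_pos (by rwa [abs_of_pos h0]) hz)
  have : (neckScale β τ z).re = 1 + β * (Real.sqrt (1 - τ ^ 2) * ((1 - τ * z)⁻¹ : ℂ).re) := by
    rw [neckScale, div_eq_mul_inv, Complex.add_re, Complex.re_ofReal_mul, Complex.re_ofReal_mul,
      Complex.one_re]
  rw [h, Complex.zero_re] at this
  have h3 := Real.sqrt_nonneg (1 - τ ^ 2)
  have : 0 ≤ β * (Real.sqrt (1 - τ ^ 2) * ((1 - τ * z)⁻¹ : ℂ).re) := by positivity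
  linarith

/-- Precomposed with `ζ ↦ (exp ζ - 1)/(exp ζ + 1)` on a strip, `neck` has derivative of positive real
part, hence it is injective. -/
lemma neck_injOn {ε β τ : ℝ} (hε : 0 < ε) (hβ : 0 < β) (h0 : 0 < τ) (h1 : τ < 1) :
    InjOn (neck ε β τ) (ball 0 1) := by
  let S : Set ℂ := {ζ | |ζ.im| < Real.pi / 2}
  have hS : Convex ℝ S := by
    have : S = Complex.imLm ⁻¹' (Ioo (-(Real.pi / 2)) (Real.pi / 2)) := by
      ext ζ; simp [S, abs_lt]
    rw [this]
    exact (convex_Ioo _ _).linear_preimage _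
  have hre : ∀ ζ ∈ S, 0 < (Complex.exp ζ).re := fun ζ hζ => by
    rw [Complex.exp_re]
    exact mul_pos (Real.exp_pos _) (Real.cos_pos_of_mem_Ioo (abs_lt.1 hζ))
  let c : ℂ → ℂ := fun ζ => (Complex.exp ζ - 1) / (Complex.exp ζ + 1)
  have hc1 : ∀ ζ ∈ S, ‖c ζ‖ < 1 := fun ζ hζ => by
    have h := hre ζ hζ
    have hne : Complex.exp ζ + 1 ≠ 0 := fun h' => by
      have := congrArg Complex.re h'; rw [Complex.add_re, Complex.one_re, Complex.zero_re] at this; linarith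
    rw [norm_div, div_lt_one (norm_pos_iff.2 hne)]
    refine lt_of_pow_lt_pow_left₀ 2 (norm_nonneg _) ?_
    rw [Complex.sq_norm, Complex.sq_norm, Complex.normSq_apply, Complex.normSq_apply]
    simp only [Complex.sub_re, Complex.sub_im, Complex.add_re, Complex.add_im, Complex.one_re,
      Complex.one_im]
    nlinarith
  have hinj : InjOn (neck ε β τ ∘ c) S := by
    refine injOn_of_re_deriv_pos hS (f' := fun ζ => neckDeriv ε β τ (c ζ) *
      (2 * Complex.exp ζ / (Complex.exp ζ + 1) ^ 2)) (fun ζ hζ => ?_) (fun ζ hζ => ?_)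
    · have h := hre ζ hζ
      have hne : Complex.exp ζ + 1 ≠ 0 := fun h' => by
        have := congrArg Complex.re h'; rw [Complex.add_re, Complex.one_re, Complex.zero_re] at this; linarith
      refine (hasDerivAt_neck (by rwa [abs_of_pos h0]) (hc1 ζ hζ)).comp ζ ?_
      have := ((Complex.hasDerivAt_exp ζ).sub_const 1).div ((Complex.hasDerivAt_exp ζ).add_const 1) hne
      refine HasDerivAt.congr_deriv (f := c) this ?_
      field_simp
      ring
    · exact neckDeriv_re_pos hε hβ h0 h1 (hre ζ hζ)
  have hsur : ∀ z ∈ ball (0 : ℂ) 1, ∃ ζ ∈ S, c ζ = z := fun z hz => by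
    rw [mem_ball_zero_iff] at hz
    obtain ⟨hp, he⟩ := exists_cayley hz
    have hp0 : (1 + z) / (1 - z) ≠ 0 := fun h => by rw [h] at hp; simp at hp
    refine ⟨Complex.log ((1 + z) / (1 - z)), ?_, ?_⟩
    · simp only [S, mem_ofPred_eq, Complex.log_im]
      exact Complex.abs_arg_lt_pi_div_two_iff.2 (Or.inl hp)
    · simp only [c]
      rw [Complex.exp_log hp0, he]
  intro z hz z' hz' h
  obtain ⟨ζ, hζ, rfl⟩ := hsur z hz
  obtain ⟨ζ', hζ', rfl⟩ := hsur z' hz'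
  rw [hinj hζ hζ' h]

end Dumbbell1

/-! ### Ball automorphisms and the dumbbell map -/

section Dumbbell2
open Set Filter Topology ComplexConjugate

variable {V : Type*} [NormedAddCommGroup V] [InnerProductSpace ℂ V] [FiniteDimensional ℂ V]

/-- The ball automorphism moving `τ e` to the origin. -/
noncomputable def mob (e : V) (τ : ℝ) : V → V :=
  twist e (fun z => (z - τ) / (1 - τ * z)) (fun z => Real.sqrt (1 - τ ^ 2) / (1 - τ * z))

/-- The dumbbell map of the ball: the identity plus a logarithmic neck along `e` plus `β` times
`e + mob e τ`, see `dumb_eq`. It is studied for `τ` close to `1` and `ε` small. -/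
noncomputable def dumb (e : V) (ε β τ : ℝ) : V → V := twist e (neck ε β τ) (neckScale β τ)

lemma dumb_eq {e : V} (he : ‖e‖ = 1) {ε β τ : ℝ} (h1 : |τ| < 1) {x : V} (hx : ‖x‖ < 1) :
    dumb e ε β τ x = x - (ε * Complex.log (1 - τ * inner ℂ e x)) • e
      + (β : ℂ) • (e + mob e τ x) := by
  have hne := one_sub_ne h1 ((norm_inner_le_of_unit he x).trans_lt hx)
  set z := inner ℂ e x with hz
  have h2 : neck ε β τ z = z - ε * Complex.log (1 - τ * z) + β * (1 + (z - τ) / (1 - τ * z)) := by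
    rw [neck]; congr 2; field_simp; ring
  simp only [dumb, mob, twist, ← hz, h2, neckScale]
  module

lemma perp_sq_le {e : V} (he : ‖e‖ = 1) {x : V} (hx : ‖x‖ ≤ 1) :
    ‖x - inner ℂ e x • e‖ ^ 2 ≤ 1 - ‖inner ℂ e x‖ ^ 2 := by
  have := norm_sq_perp he x
  nlinarith [norm_nonneg x]

lemma norm_sq_mob {e : V} (he : ‖e‖ = 1) {τ : ℝ} (h1 : |τ| < 1) (x : V) :
    ‖mob e τ x‖ ^ 2 = ‖(inner ℂ e x - τ) / (1 - τ * inner ℂ e x)‖ ^ 2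
      + (1 - τ ^ 2) * ‖x - inner ℂ e x • e‖ ^ 2 / ‖(1 - τ * inner ℂ e x : ℂ)‖ ^ 2 := by
  have h2 : 0 ≤ 1 - τ ^ 2 := by nlinarith [abs_nonneg τ, sq_abs τ]
  rw [norm_sq_perp he, mob, perp_twist he, inner_twist he, norm_smul, norm_div, norm_div (Real.sqrt (1 - τ ^ 2) : ℂ),
    Complex.norm_real, Real.norm_eq_abs, abs_of_nonneg (Real.sqrt_nonneg _), mul_pow, div_pow, div_pow, Real.sq_sqrt h2]
  ring

lemma mob_identity (τ : ℝ) (z : ℂ) :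
    ‖z - τ‖ ^ 2 + (1 - τ ^ 2) * (1 - ‖z‖ ^ 2) = ‖(1 - τ * z : ℂ)‖ ^ 2 := by
  simp only [Complex.sq_norm, Complex.normSq_apply]
  simp
  ring

lemma norm_mob_lt {e : V} (he : ‖e‖ = 1) {τ : ℝ} (h1 : |τ| < 1) {x : V} (hx : ‖x‖ < 1) :
    ‖mob e τ x‖ < 1 := by
  have hne := one_sub_ne h1 ((norm_inner_le_of_unit he x).trans_lt hx)
  have h2 : 0 < 1 - τ ^ 2 := by nlinarith [abs_nonneg τ, sq_abs τ]
  refine lt_of_pow_lt_pow_left₀ 2 zero_le_one ?_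
  rw [norm_sq_mob he h1, norm_div, div_pow, ← add_div, one_pow, div_lt_one (by positivity),
    ← mob_identity]
  have := norm_sq_perp he x
  have h3 : ‖x‖ ^ 2 < 1 := by nlinarith [norm_nonneg x]
  nlinarith

lemma mob_mob {e : V} (he : ‖e‖ = 1) {τ : ℝ} (h1 : |τ| < 1) {x : V} (hx : ‖x‖ < 1) :
    mob e τ (mob e (-τ) x) = x := by
  have h2 : 0 < 1 - τ ^ 2 := by nlinarith [abs_nonneg τ, sq_abs τ]
  have hne := one_sub_ne (τ := -τ) (by rwa [abs_neg]) ((norm_inner_le_of_unit he x).trans_lt hx)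
  have hn := norm_mob_lt he (τ := -τ) (by rwa [abs_neg]) hx
  have hne2 := one_sub_ne h1 ((norm_inner_le_of_unit he _).trans_lt hn)
  have hz : inner ℂ e (mob e (-τ) x) = (inner ℂ e x + τ) / (1 + τ * inner ℂ e x) := by
    rw [mob, inner_twist he]; push_cast; ring
  have hp : mob e (-τ) x - inner ℂ e (mob e (-τ) x) • e
      = ((Real.sqrt (1 - τ ^ 2) : ℂ) / (1 + τ * inner ℂ e x)) • (x - inner ℂ e x • e) := by
    rw [mob, perp_twist he]; congr 1; push_cast; ring_nf
  have hD : (1 + τ * inner ℂ e x : ℂ) ≠ 0 := by convert hne using 1; push_cast; ring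
  have h2' : (1 - τ ^ 2 : ℂ) ≠ 0 := by exact_mod_cast h2.ne'
  have hs : ((Real.sqrt (1 - τ ^ 2) : ℝ) : ℂ) * (Real.sqrt (1 - τ ^ 2) : ℝ) = 1 - τ ^ 2 := by
    rw [← Complex.ofReal_mul, Real.mul_self_sqrt h2.le]; push_cast; rfl
  rw [mob, twist, hp, hz]
  set z := inner ℂ e x with hzd
  have e1 : (1 - τ * ((z + τ) / (1 + τ * z)) : ℂ) = (1 - τ ^ 2) / (1 + τ * z) := by
    field_simp; ring
  have e2 : ((z + τ) / (1 + τ * z) - τ) / (1 - τ * ((z + τ) / (1 + τ * z)) : ℂ) = z := by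
    rw [e1, div_sub' hD, div_div_div_cancel_right₀ hD, div_eq_iff h2']; ring
  have e3 : (Real.sqrt (1 - τ ^ 2) : ℂ) / (1 - τ * ((z + τ) / (1 + τ * z)) : ℂ)
      * ((Real.sqrt (1 - τ ^ 2) : ℂ) / (1 + τ * z)) = 1 := by
    rw [e1]; field_simp; rw [pow_two, hs]
  rw [smul_smul, e2, e3]
  simp

lemma one_sub_inner_mob {e : V} (he : ‖e‖ = 1) {τ : ℝ} (h1 : |τ| < 1) {x : V} (hx : ‖x‖ < 1) :
    (1 - τ * inner ℂ e (mob e (-τ) x) : ℂ) = (1 - τ ^ 2) / (1 + τ * inner ℂ e x) := by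
  have hne := one_sub_ne (τ := -τ) (by rwa [abs_neg]) ((norm_inner_le_of_unit he x).trans_lt hx)
  have hz : inner ℂ e (mob e (-τ) x) = (inner ℂ e x + τ) / (1 + τ * inner ℂ e x) := by
    rw [mob, inner_twist he]; push_cast; ring
  have hD : (1 + τ * inner ℂ e x : ℂ) ≠ 0 := by convert hne using 1; push_cast; ring
  rw [hz]; field_simp; ring

lemma kappa_le {e : V} (he : ‖e‖ = 1) {κ : ℝ} (h0 : 0 < κ) (h1 : κ < 1 / 2) {x : V}
    (hx : ‖x‖ < 1) : κ ≤ ‖(1 - (1 - κ : ℝ) * inner ℂ e x : ℂ)‖ := by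
  have hz := (norm_inner_le_of_unit he x).trans_lt hx
  have := norm_sub_norm_le (1 : ℂ) ((1 - κ : ℝ) * inner ℂ e x)
  rw [norm_mul, Complex.norm_real, Real.norm_eq_abs, abs_of_pos (by linarith), norm_one] at this
  nlinarith [norm_nonneg (inner ℂ e x)]

lemma one_sub_norm_le {e : V} {κ : ℝ} (h0 : 0 < κ) (h1 : κ < 1 / 2) {x : V} : 1 - ‖inner ℂ e x‖ ≤ ‖(1 - (1 - κ : ℝ) * inner ℂ e x : ℂ)‖ := by
  have := norm_sub_norm_le (1 : ℂ) ((1 - κ : ℝ) * inner ℂ e x)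
  rw [norm_mul, Complex.norm_real, Real.norm_eq_abs, abs_of_pos (by linarith), norm_one] at this
  nlinarith [norm_nonneg (inner ℂ e x)]

lemma rho_le_two {e : V} (he : ‖e‖ = 1) {κ : ℝ} (h0 : 0 < κ) (h1 : κ < 1 / 2) {x : V}
    (hx : ‖x‖ < 1) : ‖(1 - (1 - κ : ℝ) * inner ℂ e x : ℂ)‖ ≤ 2 := by
  have hz := (norm_inner_le_of_unit he x).trans_lt hx
  have := norm_sub_le (1 : ℂ) ((1 - κ : ℝ) * inner ℂ e x)
  rw [norm_mul, Complex.norm_real, Real.norm_eq_abs, abs_of_pos (by linarith), norm_one] at this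
  nlinarith [norm_nonneg (inner ℂ e x)]

lemma perp_le {e : V} (he : ‖e‖ = 1) {κ : ℝ} (h0 : 0 < κ) (h1 : κ < 1 / 2) {x : V}
    (hx : ‖x‖ < 1) : ‖x - inner ℂ e x • e‖
    ≤ 2 * Real.sqrt ‖(1 - (1 - κ : ℝ) * inner ℂ e x : ℂ)‖ := by
  have h2 := one_sub_norm_le (e := e) (x := x) h0 h1
  have h3 := perp_sq_le he hx.le
  refine le_of_sq_le_sq ?_ (by positivity)
  rw [mul_pow, Real.sq_sqrt (norm_nonneg _)]
  nlinarith [norm_nonneg (inner ℂ e x), (norm_inner_le_of_unit he x).trans_lt hx]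

lemma norm_sub_e_le {e : V} (he : ‖e‖ = 1) {κ : ℝ} (h0 : 0 < κ) (h1 : κ < 1 / 2) {x : V}
    (hx : ‖x‖ < 1) : ‖x - e‖ ≤ 4 * ‖(1 - (1 - κ : ℝ) * inner ℂ e x : ℂ)‖
    + 2 * Real.sqrt ‖(1 - (1 - κ : ℝ) * inner ℂ e x : ℂ)‖ := by
  have hk := kappa_le he h0 h1 hx
  have hp := perp_le he h0 h1 hx
  set z := inner ℂ e x with hz
  have e1 : x - e = (z - 1) • e + (x - z • e) := by module
  have e2 : ((1 - κ : ℝ) : ℂ) * (z - 1) = κ - (1 - (1 - κ : ℝ) * z) := by push_cast; ring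
  have h3 : ‖z - 1‖ ≤ 4 * ‖(1 - (1 - κ : ℝ) * z : ℂ)‖ := by
    have h4 := congrArg norm e2
    have h5 := norm_sub_le (κ : ℂ) (1 - (1 - κ : ℝ) * z)
    rw [← h4, norm_mul, Complex.norm_real, Complex.norm_real, Real.norm_eq_abs, Real.norm_eq_abs,
      abs_of_pos h0, abs_of_pos (by linarith)] at h5
    nlinarith [norm_nonneg (z - 1)]
  rw [e1]
  refine (norm_add_le _ _).trans ?_
  rw [norm_smul, he, mul_one]
  linarith

lemma norm_e_add_mob_le {e : V} (he : ‖e‖ = 1) {κ : ℝ} (h0 : 0 < κ) (h1 : κ < 1 / 2) {x : V}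
    (hx : ‖x‖ < 1) : ‖e + mob e (1 - κ) x‖
    ≤ 2 * (κ / ‖(1 - (1 - κ : ℝ) * inner ℂ e x : ℂ)‖)
      + 3 * Real.sqrt (κ / ‖(1 - (1 - κ : ℝ) * inner ℂ e x : ℂ)‖) := by
  have hk := kappa_le he h0 h1 hx
  have hp := perp_le he h0 h1 hx
  have hz1 := (norm_inner_le_of_unit he x).trans_lt hx
  have hne := one_sub_ne (τ := 1 - κ) (by rw [abs_of_pos] <;> linarith) hz1
  have e1 : e + mob e (1 - κ) x = (κ * (1 + inner ℂ e x) / (1 - (1 - κ : ℝ) * inner ℂ e x)) • e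
      + ((Real.sqrt (1 - (1 - κ) ^ 2) : ℂ) / (1 - (1 - κ : ℝ) * inner ℂ e x)) •
        (x - inner ℂ e x • e) := by
    have : (κ * (1 + inner ℂ e x) / (1 - (1 - κ : ℝ) * inner ℂ e x)) =
      1 + (inner ℂ e x - (1 - κ : ℝ)) / (1 - (1 - κ : ℝ) * inner ℂ e x) := by
      rw [eq_comm, eq_div_iff hne, add_mul, div_mul_cancel₀ _ hne]; push_cast; ring
    rw [this, mob, twist]
    module
  rw [e1]
  set z := inner ℂ e x with hz
  set ρ := ‖(1 - (1 - κ : ℝ) * z : ℂ)‖ with hρ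
  have hρ0 : 0 < ρ := by linarith
  refine (norm_add_le _ _).trans (add_le_add ?_ ?_)
  · rw [norm_smul, he, mul_one, norm_div, norm_mul, Complex.norm_real, Real.norm_eq_abs,
      abs_of_pos h0, ← hρ, ← mul_div_assoc]
    have := norm_add_le (1 : ℂ) z
    rw [norm_one] at this
    refine div_le_div_of_nonneg_right ?_ hρ0.le
    nlinarith
  · rw [norm_smul, norm_div, Complex.norm_real, Real.norm_eq_abs, ← hρ,
      abs_of_nonneg (Real.sqrt_nonneg _)]
    have h4 : Real.sqrt (1 - (1 - κ) ^ 2) ≤ Real.sqrt (2 * κ) := Real.sqrt_le_sqrt (by nlinarith)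
    have h5 : Real.sqrt (2 * κ) ≤ 3 / 2 * Real.sqrt κ := by
      rw [Real.sqrt_le_left (by positivity), mul_pow, Real.sq_sqrt h0.le]; linarith
    have h6 := h4.trans h5
    calc Real.sqrt (1 - (1 - κ) ^ 2) / ρ * ‖x - z • e‖
        ≤ (3 / 2 * Real.sqrt κ) / ρ * (2 * Real.sqrt ρ) := by gcongr
      _ = 3 * (Real.sqrt κ * (Real.sqrt ρ / ρ)) := by ring
      _ = 3 * Real.sqrt (κ / ρ) := by
        rw [Real.sqrt_div h0.le, Real.sqrt_div_self', mul_one_div]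

lemma norm_log_sub (D : ℂ) : ‖Complex.log D - Real.log ‖D‖‖ ≤ Real.pi := by
  have : Complex.log D - Real.log ‖D‖ = D.arg * Complex.I := by
    apply Complex.ext <;> simp [Complex.log_re, Complex.log_im]
  rw [this, norm_mul, Complex.norm_I, mul_one, Complex.norm_real, Real.norm_eq_abs]
  exact Complex.abs_arg_le_pi D

end Dumbbell2

/-! ### Embeddings of the ball into neighbourhoods of dumbbells -/

section Dumbbell3
open Set Filter Topology ComplexConjugate

variable {V : Type*} [NormedAddCommGroup V] [InnerProductSpace ℂ V] [FiniteDimensional ℂ V]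

lemma exists_small_params (ℓ β : ℝ) {δ ρ₀ : ℝ} (hδ : 0 < δ) :
    ∃ κ : ℝ, 0 < κ ∧ κ < 1 / 2 ∧
      ℓ / (-Real.log κ) * (-Real.log ρ₀ + 1 + Real.pi)
        + β * (2 * (κ / ρ₀) + 3 * Real.sqrt (κ / ρ₀)) < δ ∧
      ℓ / (-Real.log κ) * Real.pi < δ / 2 ∧
      4 * (κ / ρ₀) + 2 * Real.sqrt (κ / ρ₀)
        + ℓ / (-Real.log κ) * (-Real.log ρ₀ + Real.pi) < δ := by
  have hε : Tendsto (fun κ : ℝ => ℓ / (-Real.log κ)) (𝓝[>] 0) (𝓝 0) := by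
    have := (tendsto_inv_atTop_zero.comp
      (tendsto_neg_atBot_atTop.comp Real.tendsto_log_nhdsGT_zero)).const_mul ℓ
    simpa [div_eq_mul_inv, Function.comp_def] using this
  have hκ : Tendsto (fun κ : ℝ => κ / ρ₀) (𝓝[>] 0) (𝓝 0) := by
    have : Tendsto (fun κ : ℝ => κ / ρ₀) (𝓝 0) (𝓝 (0 / ρ₀)) := by
      exact (continuous_id.div_const ρ₀).tendsto 0
    rw [zero_div] at this
    exact this.mono_left nhdsWithin_le_nhds
  have hs : Tendsto (fun κ : ℝ => Real.sqrt (κ / ρ₀)) (𝓝[>] 0) (𝓝 0) := by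
    have := (Real.continuous_sqrt.tendsto 0).comp hκ
    simpa [Function.comp_def] using this
  have a : Tendsto (fun κ : ℝ => ℓ / (-Real.log κ) * (-Real.log ρ₀ + 1 + Real.pi)
      + β * (2 * (κ / ρ₀) + 3 * Real.sqrt (κ / ρ₀))) (𝓝[>] 0) (𝓝 0) := by
    simpa using (hε.mul_const (-Real.log ρ₀ + 1 + Real.pi)).add
      (((hκ.const_mul 2).add (hs.const_mul 3)).const_mul β)
  have b : Tendsto (fun κ : ℝ => ℓ / (-Real.log κ) * Real.pi) (𝓝[>] 0) (𝓝 0) := by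
    simpa using hε.mul_const Real.pi
  have c : Tendsto (fun κ : ℝ => 4 * (κ / ρ₀) + 2 * Real.sqrt (κ / ρ₀)
      + ℓ / (-Real.log κ) * (-Real.log ρ₀ + Real.pi)) (𝓝[>] 0) (𝓝 0) := by
    simpa using ((hκ.const_mul 4).add (hs.const_mul 2)).add
      (hε.mul_const (-Real.log ρ₀ + Real.pi))
  have h0 : ∀ᶠ κ : ℝ in 𝓝[>] 0, κ ∈ Ioo (0 : ℝ) (1 / 2) := Ioo_mem_nhdsGT (by norm_num)
  obtain ⟨κ, ⟨⟨h1, h2⟩, h3, h4⟩, h5⟩ := ((h0.and ((a.eventually_lt_const hδ).and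
    (b.eventually_lt_const (half_pos hδ)))).and (c.eventually_lt_const hδ)).exists
  exact ⟨κ, h1, h2, h3, h4, h5⟩

lemma exists_small_rho (β : ℝ) {δ ρ₁ : ℝ} (hδ : 0 < δ) (hρ : 0 < ρ₁) :
    ∃ ρ₀ : ℝ, 0 < ρ₀ ∧ ρ₀ ≤ ρ₁ ∧ ρ₀ < 1 ∧
      4 * ρ₀ + 2 * Real.sqrt ρ₀ + β * (2 * ρ₀ + 3 * Real.sqrt ρ₀) < δ / 2 := by
  have hc : Continuous fun r : ℝ => 4 * r + 2 * Real.sqrt r + β * (2 * r + 3 * Real.sqrt r) := by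
    fun_prop
  have h1 := (hc.tendsto 0).mono_left (nhdsWithin_le_nhds (s := Ioi 0))
  simp only [mul_zero, Real.sqrt_zero, add_zero] at h1
  have h0 : ∀ᶠ r : ℝ in 𝓝[>] 0, r ∈ Ioo (0 : ℝ) (min ρ₁ 1) := Ioo_mem_nhdsGT (by positivity)
  obtain ⟨r, ⟨h2, h3⟩, h4⟩ := (h0.and (h1.eventually_lt_const (half_pos hδ))).exists
  exact ⟨r, h2, h3.le.trans (min_le_left _ _), h3.trans_le (min_le_right _ _), h4⟩

/-- The dumbbell map is close to the identity away from `e`, to a segment near `e`, and to an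
affine copy of a ball automorphism very near `e`. -/
lemma dumb_estimates {e : V} (he : ‖e‖ = 1) {ℓ β δ ρ₁ : ℝ} (hℓ : 0 < ℓ) (hβ : 0 < β) (hδ : 0 < δ)
    (hρ : 0 < ρ₁) : ∃ κ ρ₀ ε : ℝ, 0 < κ ∧ κ < 1 / 2 ∧ 0 < ρ₀ ∧ ρ₀ ≤ ρ₁ ∧ 0 < ε ∧
      ∀ x : V, ‖x‖ < 1 →
        (ρ₀ ≤ ‖(1 - (1 - κ : ℝ) * inner ℂ e x : ℂ)‖ → ‖dumb e ε β (1 - κ) x - x‖ < δ) ∧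
        (‖(1 - (1 - κ : ℝ) * inner ℂ e x : ℂ)‖ ≤ ρ₀ →
          κ / ρ₀ ≤ ‖(1 - (1 - κ : ℝ) * inner ℂ e x : ℂ)‖ →
            ∃ t ∈ Icc 0 ℓ, ‖dumb e ε β (1 - κ) x - ((1 + t : ℝ) : ℂ) • e‖ < δ) ∧
        (‖(1 - (1 - κ : ℝ) * inner ℂ e x : ℂ)‖ ≤ κ / ρ₀ →
          ‖dumb e ε β (1 - κ) x - (((1 + ℓ + β : ℝ) : ℂ) • e + (β : ℂ) • mob e (1 - κ) x)‖ < δ) := by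
  obtain ⟨ρ₀, hρ0, hρ1, hρ2, hr⟩ := exists_small_rho β hδ hρ
  obtain ⟨κ, hκ0, hκ1, ha, hb, hc⟩ := exists_small_params ℓ β (ρ₀ := ρ₀) hδ
  have hlogκ : Real.log κ < 0 := Real.log_neg hκ0 (by linarith)
  have hlogρ₀ : Real.log ρ₀ < 0 := Real.log_neg hρ0 hρ2
  have hε : 0 < ℓ / (-Real.log κ) := div_pos hℓ (by linarith)
  refine ⟨κ, ρ₀, ℓ / (-Real.log κ), hκ0, hκ1, hρ0, hρ1, hε, fun x hx => ?_⟩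
  have hεκ : ℓ / (-Real.log κ) * (-Real.log κ) = ℓ := div_mul_cancel₀ _ (by linarith)
  set ε := ℓ / (-Real.log κ) with hεdef
  have hk := kappa_le he hκ0 hκ1 hx
  have h2 := rho_le_two he hκ0 hκ1 hx
  have hxe := norm_sub_e_le he hκ0 hκ1 hx
  have hem := norm_e_add_mob_le he hκ0 hκ1 hx
  rw [dumb_eq he (by rw [abs_of_pos] <;> linarith) hx]
  set D : ℂ := 1 - (1 - κ : ℝ) * inner ℂ e x with hD
  set ρ := ‖D‖ with hρdef
  have hρpos : 0 < ρ := hκ0.trans_le hk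
  have hlog : ‖Complex.log D - Real.log ρ‖ ≤ Real.pi := norm_log_sub D
  set m := e + mob e (1 - κ) x with hm
  refine ⟨fun h => ?_, fun h h' => ?_, fun h => ?_⟩
  · have e1 : x - (ε * Complex.log D) • e + (β : ℂ) • m - x
        = (β : ℂ) • m - (ε * Complex.log D) • e := by module
    have h3 : |Real.log ρ| ≤ -Real.log ρ₀ + 1 := by
      rw [abs_le]
      have h4 := Real.log_le_log hρ0 h
      have h5 := Real.log_le_sub_one_of_pos hρpos
      constructor <;> linarith
    have h4 : ‖Complex.log D‖ ≤ -Real.log ρ₀ + 1 + Real.pi := by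
      have h5 := norm_sub_norm_le (Complex.log D) (Real.log ρ)
      rw [Complex.norm_real, Real.norm_eq_abs] at h5
      linarith
    have h6 : ‖m‖ ≤ 2 * (κ / ρ₀) + 3 * Real.sqrt (κ / ρ₀) := by
      refine hem.trans ?_
      gcongr
    rw [e1]
    refine (norm_sub_le _ _).trans_lt ?_
    rw [norm_smul, norm_smul, he, norm_mul, Complex.norm_real, Complex.norm_real, Real.norm_eq_abs,
      Real.norm_eq_abs, abs_of_pos hβ, abs_of_pos hε]
    nlinarith
  · have h3 := Real.log_le_log hκ0 hk
    have h4 := Real.log_le_log hρpos h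
    refine ⟨-ε * Real.log ρ, ⟨by nlinarith, by nlinarith⟩, ?_⟩
    have e1 : x - (ε * Complex.log D) • e + (β : ℂ) • m - ((1 + -ε * Real.log ρ : ℝ) : ℂ) • e
        = (x - e) - (ε * (Complex.log D - Real.log ρ)) • e + (β : ℂ) • m := by
      push_cast; module
    have h5 : κ / ρ ≤ ρ₀ := by
      rw [div_le_iff₀ hρpos]; rw [div_le_iff₀ hρ0] at h'; linarith
    have h6 : ‖m‖ ≤ 2 * ρ₀ + 3 * Real.sqrt ρ₀ := by
      refine hem.trans ?_
      gcongr
    have h7 : ‖x - e‖ ≤ 4 * ρ₀ + 2 * Real.sqrt ρ₀ := by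
      refine hxe.trans ?_
      gcongr
    rw [e1]
    refine (norm_add_le _ _).trans_lt ((add_le_add_left (norm_sub_le _ _) _).trans_lt ?_)
    rw [norm_smul, norm_smul, he, norm_mul, Complex.norm_real, Complex.norm_real, Real.norm_eq_abs,
      Real.norm_eq_abs, abs_of_pos hβ, abs_of_pos hε]
    nlinarith
  · have h3 := Real.log_le_log hκ0 hk
    have h4 := Real.log_le_log hρpos h
    rw [Real.log_div hκ0.ne' hρ0.ne'] at h4
    have e1 : x - (ε * Complex.log D) • e + (β : ℂ) • m
        - (((1 + ℓ + β : ℝ) : ℂ) • e + (β : ℂ) • mob e (1 - κ) x)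
        = (x - e) - (ε * (Complex.log D - Real.log κ)) • e := by
      rw [hm]
      have : (ℓ : ℂ) = ε * -Real.log κ := by exact_mod_cast hεκ.symm
      push_cast
      rw [this]
      module
    have h5 : ‖Complex.log D - Real.log κ‖ ≤ -Real.log ρ₀ + Real.pi := by
      have e2 : Complex.log D - Real.log κ
          = (Complex.log D - Real.log ρ) + ((Real.log ρ - Real.log κ : ℝ) : ℂ) := by
        push_cast; ring
      rw [e2]
      refine (norm_add_le _ _).trans ?_
      rw [Complex.norm_real, Real.norm_eq_abs, abs_of_nonneg (by linarith)]
      linarith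
    have h7 : ‖x - e‖ ≤ 4 * (κ / ρ₀) + 2 * Real.sqrt (κ / ρ₀) := by
      refine hxe.trans ?_
      gcongr
    rw [e1]
    refine (norm_sub_le _ _).trans_lt ?_
    rw [norm_smul, he, norm_mul, Complex.norm_real, Real.norm_eq_abs, abs_of_pos hε]
    nlinarith

lemma neck_contDiffAt {ε β τ : ℝ} (h1 : |τ| < 1) {z : ℂ} (hz : ‖z‖ < 1) :
    ContDiffAt ℂ 1 (neck ε β τ) z := by
  have hD : ContDiffAt ℂ 1 (fun z : ℂ => 1 - τ * z) z := by fun_prop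
  have hne := one_sub_ne h1 hz
  have hl : ContDiffAt ℂ 1 (fun z : ℂ => Complex.log (1 - τ * z)) z :=
    ContDiffAt.comp (g := Complex.log) z
      (Complex.contDiffAt_log (Or.inl (re_one_sub_pos h1 hz))) hD
  have hn : ContDiffAt ℂ 1 (fun z : ℂ => (1 - τ) * (1 + z)) z := by fun_prop
  exact (contDiffAt_id.sub (contDiffAt_const.mul hl)).add (contDiffAt_const.mul (hn.div hD hne))

lemma neckScale_contDiffAt {β τ : ℝ} (h1 : |τ| < 1) {z : ℂ} (hz : ‖z‖ < 1) :
    ContDiffAt ℂ 1 (neckScale β τ) z := by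
  have hD : ContDiffAt ℂ 1 (fun z : ℂ => 1 - τ * z) z := by fun_prop
  exact contDiffAt_const.add (contDiffAt_const.mul (contDiffAt_const.div hD (one_sub_ne h1 hz)))

lemma mob_contDiffAt {e : V} (he : ‖e‖ = 1) {τ : ℝ} (h1 : |τ| < 1) {x : V} (hx : ‖x‖ < 1) :
    ContDiffAt ℂ 1 (mob e τ) x := by
  have hz := (norm_inner_le_of_unit he x).trans_lt hx
  have hD : ContDiffAt ℂ 1 (fun z : ℂ => 1 - τ * z) (inner ℂ e x) := by fun_prop
  have hN : ContDiffAt ℂ 1 (fun z : ℂ => z - τ) (inner ℂ e x) := by fun_prop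
  exact twist_contDiffAt (hN.div hD (one_sub_ne h1 hz)) (contDiffAt_const.div hD (one_sub_ne h1 hz))

lemma mob_immersion {e : V} (he : ‖e‖ = 1) {τ : ℝ} (h1 : |τ| < 1) {x : V} (hx : ‖x‖ < 1) :
    Function.Injective (fderiv ℂ (mob e τ) x) := by
  have hz := (norm_inner_le_of_unit he x).trans_lt hx
  have hne := one_sub_ne h1 hz
  have h2 : 0 < 1 - τ ^ 2 := by nlinarith [abs_nonneg τ, sq_abs τ]
  have h2' : (1 - τ ^ 2 : ℂ) ≠ 0 := by exact_mod_cast h2.ne'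
  have hD : HasDerivAt (fun z : ℂ => 1 - τ * z) (-τ) (inner ℂ e x) := by
    simpa using ((hasDerivAt_id (inner ℂ e x)).const_mul (τ : ℂ)).const_sub 1
  have hN := (hasDerivAt_id (inner ℂ e x)).sub_const (τ : ℂ)
  refine twist_immersion he (hN.div hD hne) ((hasDerivAt_const _ _).div hD hne) ?_ ?_
  · refine div_ne_zero ?_ (pow_ne_zero _ hne)
    convert h2' using 1
    simp only [id]; ring
  · refine div_ne_zero ?_ hne
    exact_mod_cast (Real.sqrt_pos.2 h2).ne'

lemma dumb_isBallEmb {e : V} (he : ‖e‖ = 1) {ε β τ : ℝ} (hε : 0 < ε) (hβ : 0 < β) (h0 : 0 < τ)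
    (h1 : τ < 1) {N : Set V} (hN : MapsTo (dumb e ε β τ) (ball 0 1) N) :
    IsBallEmb (dumb e ε β τ) N := by
  have h1' : |τ| < 1 := by rwa [abs_of_pos h0]
  have hz : ∀ x ∈ ball (0 : V) 1, ‖inner ℂ e x‖ < 1 := fun x hx =>
    (norm_inner_le_of_unit he x).trans_lt (mem_ball_zero_iff.1 hx)
  refine ⟨fun x hx => (twist_contDiffAt (neck_contDiffAt h1' (hz x hx))
    (neckScale_contDiffAt h1' (hz x hx))).contDiffWithinAt,
    twist_injOn he (neck_injOn hε hβ h0 h1)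
      (fun z hz => neckScale_ne hβ h0 h1 (mem_ball_zero_iff.1 hz)), fun x hx => ?_, hN⟩
  exact twist_immersion he (hasDerivAt_neck h1' (hz x hx))
    ((neckScale_contDiffAt h1' (hz x hx)).differentiableAt one_ne_zero).hasDerivAt
    (neckDeriv_ne hε hβ h0 h1 (hz x hx)) (neckScale_ne hβ h0 h1 (hz x hx))

lemma IsBallEmb.contDiffAt {F : V → V} {U : Set V} (h : IsBallEmb F U) {x : V}
    (hx : x ∈ ball (0 : V) 1) : ContDiffAt ℂ 1 F x :=
  h.contDiff.contDiffAt (isOpen_ball.mem_nhds hx)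

lemma IsBallEmb.isOpen_image {F : V → V} {U S : Set V} (h : IsBallEmb F U) (hS : IsOpen S)
    (hS1 : S ⊆ ball 0 1) : IsOpen (F '' S) :=
  isOpen_image_of_immersion hS (fun _ hx => h.contDiffAt (hS1 hx))
    (fun x hx => h.immersion x (hS1 hx))

/-- Embeddings of the ball into small neighbourhoods of two balls joined by a segment. -/
lemma exists_dumbbell {e : V} (he : ‖e‖ = 1) {ℓ β r : ℝ} (hℓ : 0 < ℓ) (hβ : 0 < β) (hr0 : 0 < r)
    (hr1 : r < 1) {N : Set V} (hN : IsOpen N) (hN1 : closedBall 0 1 ⊆ N)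
    (hN2 : ∀ t ∈ Icc 0 ℓ, ((1 + t : ℝ) : ℂ) • e ∈ N)
    (hN3 : closedBall (((1 + ℓ + β : ℝ) : ℂ) • e) β ⊆ N) :
    ∃ Φ : V → V, IsBallEmb Φ N ∧ closedBall 0 r ⊆ Φ '' ball 0 1 ∧
      closedBall (((1 + ℓ + β : ℝ) : ℂ) • e) (β * r) ⊆ Φ '' ball 0 1 := by
  have : ProperSpace V := FiniteDimensional.proper ℂ V
  set c := (((1 + ℓ + β : ℝ) : ℂ) • e) with hc
  -- a uniform thickening of the skeleton inside `N`
  obtain ⟨δ₀, hδ₀, hthick⟩ : ∃ δ > 0, thickening δ (closedBall (0 : V) 1 ∪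
      (fun t : ℝ => ((1 + t : ℝ) : ℂ) • e) '' Icc 0 ℓ ∪ closedBall c β) ⊆ N := by
    refine IsCompact.exists_thickening_subset_open ?_ hN ?_
    · refine ((isCompact_closedBall _ _).union (isCompact_Icc.image ?_)).union
        (isCompact_closedBall _ _)
      fun_prop
    · rintro x ((hx | ⟨t, ht, rfl⟩) | hx)
      exacts [hN1 hx, hN2 t ht, hN3 hx]
  obtain ⟨r', hr, hr'⟩ := exists_between hr1
  have hsep : 0 < min (min δ₀ r) (min (r' - r) (min (β * r) (β * (r' - r)))) := by
    have : 0 < r' - r := sub_pos.2 hr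
    positivity
  obtain ⟨δ, hδ, hδ'⟩ := exists_between hsep
  simp only [lt_min_iff] at hδ'
  obtain ⟨⟨d1, d2⟩, d3, d4, d5⟩ := hδ'
  have hr'0 : 0 < r' := hr0.trans hr
  obtain ⟨κ, ρ₀, ε, hκ0, hκ1, hρ0, hρ1, hε, hest⟩ := dumb_estimates he hℓ hβ hδ
    (ρ₁ := (1 - r') / 2) (by linarith)
  have hτ : |1 - κ| < 1 := by rw [abs_of_pos] <;> linarith
  have hmaps : MapsTo (dumb e ε β (1 - κ)) (ball 0 1) N := by
    intro x hx
    rw [mem_ball_zero_iff] at hx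
    obtain ⟨z1, z2, z3⟩ := hest x hx
    apply hthick
    rw [mem_thickening_iff]
    simp only [dist_eq_norm]
    rcases le_total ρ₀ ‖(1 - (1 - κ : ℝ) * inner ℂ e x : ℂ)‖ with h | h
    · exact ⟨x, Or.inl (Or.inl (mem_closedBall_zero_iff.2 hx.le)), (z1 h).trans d1⟩
    rcases le_total (κ / ρ₀) ‖(1 - (1 - κ : ℝ) * inner ℂ e x : ℂ)‖ with h' | h'
    · obtain ⟨t, ht, h2⟩ := z2 h h'
      exact ⟨_, Or.inl (Or.inr ⟨t, ht, rfl⟩), h2.trans d1⟩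
    · refine ⟨_, Or.inr ?_, (z3 h').trans d1⟩
      rw [mem_closedBall, dist_eq_norm, add_sub_cancel_left, norm_smul, Complex.norm_real,
        Real.norm_eq_abs, abs_of_pos hβ]
      have := norm_mob_lt he hτ hx
      nlinarith
  have hemb := dumb_isBallEmb he hε hβ (by linarith : 0 < 1 - κ) (by linarith) hmaps
  have hcb : closedBall (0 : V) r' ⊆ ball 0 1 := closedBall_subset_ball hr'
  refine ⟨_, hemb, ?_, ?_⟩
  · have hz1 : ∀ x ∈ closedBall (0 : V) r', ‖dumb e ε β (1 - κ) x - x‖ < δ := fun x hx => by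
      have hx' := mem_closedBall_zero_iff.1 hx
      refine (hest x (hx'.trans_lt hr')).1 ?_
      have := one_sub_norm_le (e := e) (x := x) hκ0 hκ1
      have := norm_inner_le_of_unit he x
      linarith
    refine (subset_image_of_close (F := id) (R := r') (η := δ)
      (convex_closedBall (0 : V) r).isPreconnected
      (fun x hx => (hemb.contDiffAt (hcb hx)).continuousAt.continuousWithinAt)
      (hemb.isOpen_image isOpen_ball (ball_subset_closedBall.trans hcb)) hz1 ?_ ?_).trans
      (image_mono (ball_subset_closedBall.trans hcb))
    · intro x hx y hy
      rw [mem_sphere_zero_iff_norm] at hx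
      rw [mem_closedBall_zero_iff] at hy
      have := norm_sub_norm_le x y
      simp only [id]
      linarith
    · refine ⟨_, ?_, 0, mem_ball_self hr'0, rfl⟩
      have := hz1 0 (mem_closedBall_self hr'0.le)
      rw [sub_zero] at this
      rw [mem_closedBall_zero_iff]
      linarith
  · have hS : ∀ p ∈ closedBall (0 : V) r', mob e (-(1 - κ)) p ∈ ball (0 : V) 1 := fun p hp => by
      rw [mem_ball_zero_iff]
      exact norm_mob_lt he (by rwa [abs_neg]) (mem_ball_zero_iff.1 (hcb hp))
    have hScd : ∀ p ∈ closedBall (0 : V) r', ContDiffAt ℂ 1 (mob e (-(1 - κ))) p := fun p hp =>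
      mob_contDiffAt he (by rwa [abs_neg]) (mem_ball_zero_iff.1 (hcb hp))
    have hz3 : ∀ p ∈ closedBall (0 : V) r',
        ‖(dumb e ε β (1 - κ) ∘ mob e (-(1 - κ))) p - (c + (β : ℂ) • p)‖ < δ := fun p hp => by
      have hp1 := mem_ball_zero_iff.1 (hcb hp)
      have h := (hest _ (mem_ball_zero_iff.1 (hS p hp))).2.2
      rw [mob_mob he hτ hp1] at h
      refine h ?_
      rw [one_sub_inner_mob he hτ hp1, norm_div]
      have hz := norm_inner_le_of_unit he p
      have hp2 := mem_closedBall_zero_iff.1 hp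
      have h2 : 1 - r' ≤ ‖(1 + (1 - κ : ℝ) * inner ℂ e p : ℂ)‖ := by
        have h3 := norm_sub_norm_le (1 : ℂ) (-((1 - κ : ℝ) * inner ℂ e p))
        rw [sub_neg_eq_add, norm_neg, norm_mul, Complex.norm_real, Real.norm_eq_abs, norm_one] at h3
        nlinarith [norm_nonneg (inner ℂ e p)]
      have h3 : ‖(1 - ((1 - κ : ℝ) : ℂ) ^ 2)‖ ≤ 2 * κ := by
        have : (1 - ((1 - κ : ℝ) : ℂ) ^ 2) = ((1 - (1 - κ) ^ 2 : ℝ) : ℂ) := by push_cast; ring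
        rw [this, Complex.norm_real, Real.norm_eq_abs, abs_of_nonneg (by nlinarith)]
        nlinarith
      rw [div_le_div_iff₀ (by linarith) hρ0]
      nlinarith
    have hopen : IsOpen ((dumb e ε β (1 - κ) ∘ mob e (-(1 - κ))) '' ball 0 r') := by
      rw [image_comp]
      refine hemb.isOpen_image (isOpen_image_of_immersion isOpen_ball
        (fun p hp => hScd p (ball_subset_closedBall hp)) fun p hp => ?_) ?_
      · exact mob_immersion he (by rwa [abs_neg])
          (mem_ball_zero_iff.1 (hcb (ball_subset_closedBall hp)))
      · rintro _ ⟨p, hp, rfl⟩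
        exact hS p (ball_subset_closedBall hp)
    have hsub := subset_image_of_close (F := fun p => c + (β : ℂ) • p) (R := r') (η := δ)
      (convex_closedBall c (β * r)).isPreconnected
      (fun p hp => ((hemb.contDiffAt (hS p hp)).continuousAt.comp
        (hScd p hp).continuousAt).continuousWithinAt) hopen hz3 ?_ ?_
    · refine hsub.trans ?_
      rw [image_comp]
      refine image_mono ?_
      rintro _ ⟨p, hp, rfl⟩
      exact hS p (ball_subset_closedBall hp)
    · intro p hp y hy
      rw [mem_sphere_zero_iff_norm] at hp
      rw [mem_closedBall, dist_eq_norm] at hy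
      have h1 := norm_sub_norm_le ((β : ℂ) • p) (y - c)
      rw [norm_smul, Complex.norm_real, Real.norm_eq_abs, abs_of_pos hβ, hp] at h1
      have e1 : c + (β : ℂ) • p - y = (β : ℂ) • p - (y - c) := by abel
      rw [e1]
      nlinarith
    · refine ⟨_, ?_, 0, mem_ball_self hr'0, rfl⟩
      have := hz3 0 (mem_closedBall_self hr'0.le)
      rw [smul_zero, add_zero] at this
      rw [mem_closedBall, dist_eq_norm]
      exact this.le.trans d4.le

end Dumbbell3

/-! ### Rescaled dumbbells and embeddings near compact sets -/

section Tools
open Set Filter Topology ComplexConjugate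

variable {V : Type*} [NormedAddCommGroup V] [InnerProductSpace ℂ V] [FiniteDimensional ℂ V]

lemma IsBallEmb.comp_left {Φ G : V → V} {N U : Set V} (h : IsBallEmb Φ N)
    (hG : ∀ x ∈ N, ContDiffAt ℂ 1 G x) (hinj : InjOn G N)
    (hi : ∀ x ∈ N, Function.Injective (fderiv ℂ G x)) (hm : MapsTo G N U) :
    IsBallEmb (G ∘ Φ) U := by
  refine ⟨fun x hx => ((hG _ (h.mapsTo hx)).comp x (h.contDiffAt hx)).contDiffWithinAt,
    hinj.comp h.inj h.mapsTo, fun x hx => ?_, hm.comp h.mapsTo⟩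
  rw [fderiv_comp x ((hG _ (h.mapsTo hx)).differentiableAt one_ne_zero)
    ((h.contDiffAt hx).differentiableAt one_ne_zero)]
  exact (hi _ (h.mapsTo hx)).comp (h.immersion x hx)

lemma fderiv_affine_injective {c : ℂ} (hc : c ≠ 0) (w x : V) :
    Function.Injective (fderiv ℂ (fun u : V => w + c • u) x) := by
  have h : HasFDerivAt (fun u : V => w + c • u) (c • ContinuousLinearMap.id ℂ V) x :=
    ((hasFDerivAt_id x).const_smul c).const_add w
  rw [h.fderiv]
  intro u v huv
  exact smul_right_injective V hc huv

lemma affine_injective {c : ℂ} (hc : c ≠ 0) (w : V) : Function.Injective (fun u : V => w + c • u) :=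
  fun _ _ h => smul_right_injective V hc (add_left_cancel h)

/-- `exists_dumbbell` rescaled, with a first ball of arbitrary radius `s`. -/
lemma exists_dumbbell' {e : V} (he : ‖e‖ = 1) {s b R r : ℝ} (hs : 0 < s) (hb : s < b) (hR : 0 < R)
    (hr0 : 0 < r) (hr1 : r < 1) {N : Set V} (hN : IsOpen N) (hN1 : closedBall 0 s ⊆ N)
    (hN2 : ∀ t ∈ Icc s b, (t : ℂ) • e ∈ N)
    (hN3 : closedBall (((b + R : ℝ) : ℂ) • e) R ⊆ N) :
    ∃ Φ : V → V, IsBallEmb Φ N ∧ closedBall 0 (s * r) ⊆ Φ '' ball 0 1 ∧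
      closedBall (((b + R : ℝ) : ℂ) • e) (R * r) ⊆ Φ '' ball 0 1 := by
  have hs' : (s : ℂ) ≠ 0 := by exact_mod_cast hs.ne'
  have hbs : 0 < b - s := sub_pos.2 hb
  let sc : V → V := fun u => 0 + (s : ℂ) • u
  have hscn : ∀ u w : V, ‖sc u - sc w‖ = s * ‖u - w‖ := fun u w => by
    simp only [sc, zero_add]
    rw [← smul_sub, norm_smul, Complex.norm_real, Real.norm_eq_abs, abs_of_pos hs]
  have hsc0 : sc 0 = 0 := by simp [sc]
  have hcont : Continuous sc := by fun_prop
  have hsurj : ∀ y, ∃ u, sc u = y := fun y => ⟨(s : ℂ)⁻¹ • y, by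
    simp only [sc, zero_add, smul_smul, mul_inv_cancel₀ hs', one_smul]⟩
  have hscc : sc (((1 + (b - s) / s + R / s : ℝ) : ℂ) • e) = ((b + R : ℝ) : ℂ) • e := by
    simp only [sc, zero_add, smul_smul, ← Complex.ofReal_mul]
    congr 2
    field_simp
    ring
  have k1 : closedBall (0 : V) 1 ⊆ sc ⁻¹' N := by
    intro u hu
    apply hN1
    rw [mem_closedBall, dist_eq_norm] at hu ⊢
    rw [← hsc0, hscn]
    nlinarith
  have k2 : ∀ t ∈ Icc 0 ((b - s) / s), ((1 + t : ℝ) : ℂ) • e ∈ sc ⁻¹' N := by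
    rintro t ⟨ht0, ht1⟩
    rw [le_div_iff₀ hs] at ht1
    have : sc (((1 + t : ℝ) : ℂ) • e) = ((s + t * s : ℝ) : ℂ) • e := by
      simp only [sc, zero_add, smul_smul, ← Complex.ofReal_mul]
      congr 2
      ring
    rw [mem_preimage, this]
    exact hN2 _ ⟨by nlinarith, by linarith⟩
  have k3 : closedBall (((1 + (b - s) / s + R / s : ℝ) : ℂ) • e) (R / s) ⊆ sc ⁻¹' N := by
    intro u hu
    apply hN3
    rw [mem_closedBall, dist_eq_norm] at hu ⊢
    rw [← hscc, hscn]
    rw [le_div_iff₀ hs] at hu; linarith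
  obtain ⟨Φ, hΦ, h1, h2⟩ := exists_dumbbell he (ℓ := (b - s) / s) (β := R / s) (N := sc ⁻¹' N)
    (div_pos hbs hs) (div_pos hR hs) hr0 hr1 (hN.preimage hcont) k1 k2 k3
  refine ⟨sc ∘ Φ, hΦ.comp_left (fun x _ => by fun_prop) (affine_injective hs' 0).injOn
    (fun x _ => fderiv_affine_injective hs' 0 x) (fun x hx => hx), ?_, ?_⟩
  · intro y hy
    obtain ⟨u, rfl⟩ := hsurj y
    rw [image_comp]
    refine mem_image_of_mem _ (h1 ?_)
    rw [mem_closedBall, dist_eq_norm] at hy ⊢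
    rw [← hsc0, hscn] at hy
    exact le_of_mul_le_mul_left hy hs
  · intro y hy
    obtain ⟨u, rfl⟩ := hsurj y
    rw [image_comp]
    refine mem_image_of_mem _ (h2 ?_)
    rw [mem_closedBall, dist_eq_norm] at hy ⊢
    rw [← hscc, hscn] at hy
    rw [div_mul_eq_mul_div, le_div_iff₀ hs]; linarith

lemma eventually_of_compact {X : Type*} [TopologicalSpace X] {K : Set X} (hK : IsCompact K)
    {P : ℕ → X → Prop} (h : ∀ x ∈ K, ∀ᶠ z in atTop ×ˢ 𝓝 x, z.2 ∈ K → P z.1 z.2) :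
    ∀ᶠ k in atTop, ∀ u ∈ K, P k u := by
  have h1 : {z : ℕ × X | z.2 ∈ K → P z.1 z.2} ∈ (atTop : Filter ℕ) ×ˢ 𝓝ˢ K :=
    hK.mem_prod_nhdsSet_of_forall h
  obtain ⟨A, hA, B, hB, hAB⟩ := mem_prod_iff.1 h1
  filter_upwards [hA] with k hk u hu
  exact hAB (show (k, u) ∈ A ×ˢ B from ⟨hk, subset_of_mem_nhdsSet hB hu⟩) hu

/-- Injectivity of a linear map is stable under small perturbations. -/
lemma injective_of_close {L L' : V →L[ℂ] V} {c : ℝ} (hL : ∀ u, c * ‖u‖ ≤ ‖L u‖)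
    (h : ‖L' - L‖ < c) : Function.Injective L' := by
  rw [injective_iff_map_eq_zero]
  intro u hu
  have h1 := (L' - L).le_opNorm u
  rw [sub_apply, hu, zero_sub, norm_neg] at h1
  have h2 := hL u
  by_contra hne
  have := norm_pos_iff.2 hne
  nlinarith

lemma eventually_immersion {G : V → V} {x : V} (hG : ContDiffAt ℂ 1 G x)
    (hi : Function.Injective (fderiv ℂ G x)) :
    ∀ᶠ u in 𝓝 x, Function.Injective (fderiv ℂ G u) := by
  obtain ⟨c, hc, hL⟩ := exists_lower_bound_of_injective _ hi
  have h1 : ContinuousAt (fderiv ℂ G) x := hG.continuousAt_fderiv one_ne_zero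
  filter_upwards [Metric.continuousAt_iff'.1 h1 c hc] with u hu
  exact injective_of_close hL (by rwa [dist_eq_norm] at hu)

lemma exists_injOn_nhds {G : V → V} {x : V} (hG : ContDiffAt ℂ 1 G x)
    (hi : Function.Injective (fderiv ℂ G x)) : ∃ u ∈ 𝓝 x, InjOn G u := by
  obtain ⟨c, hc, hcL⟩ := exists_lower_bound_of_injective _ hi
  have h1 := (hasStrictFDerivAt_iff_isLittleO.1 (hG.hasStrictFDerivAt one_ne_zero)).def (half_pos hc)
  obtain ⟨S, hS, hS'⟩ := mem_nhds_prod_iff.1 h1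
  obtain ⟨T, hT, hST⟩ := hS'
  refine ⟨S ∩ T, inter_mem hS hT, fun u hu v hv huv => ?_⟩
  have := hST (show (u, v) ∈ S ×ˢ T from ⟨hu.1, hv.2⟩)
  simp only [mem_ofPred_eq, huv, sub_self, zero_sub, norm_neg] at this
  have h2 := hcL (u - v)
  have : ‖u - v‖ = 0 := by nlinarith [norm_nonneg (u - v)]
  exact sub_eq_zero.1 (norm_eq_zero.1 this)

/-- An injective immersion of a compact set extends to a neighbourhood. -/
lemma exists_nhd_embedding {G : V → V} {K U : Set V} (hK : IsCompact K) (hU : IsOpen U)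
    (hG : ∀ x ∈ K, ContDiffAt ℂ 1 G x) (hinj : InjOn G K)
    (hi : ∀ x ∈ K, Function.Injective (fderiv ℂ G x)) (hm : MapsTo G K U) :
    ∃ N : Set V, IsOpen N ∧ K ⊆ N ∧ (∀ x ∈ N, ContDiffAt ℂ 1 G x) ∧ InjOn G N ∧
      (∀ x ∈ N, Function.Injective (fderiv ℂ G x)) ∧ MapsTo G N U := by
  obtain ⟨T, hT, hTinj⟩ := hinj.exists_mem_nhdsSet hK (fun x hx => (hG x hx).continuousAt)
    (fun x hx => exists_injOn_nhds (hG x hx) (hi x hx))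
  have h2 : ∀ᶠ x in 𝓝ˢ K, ContDiffAt ℂ 1 G x ∧ Function.Injective (fderiv ℂ G x) ∧ G x ∈ U := by
    rw [eventually_nhdsSet_iff_forall]
    intro x hx
    exact ((hG x hx).eventually (by simp)).and ((eventually_immersion (hG x hx) (hi x hx)).and
      ((hG x hx).continuousAt.eventually_mem (hU.mem_nhds (hm hx))))
  obtain ⟨N, hN, hKN, hN'⟩ := mem_nhdsSet_iff_exists.1 (inter_mem hT h2)
  exact ⟨N, hN, hKN, fun x hx => (hN' hx).2.1, hTinj.mono fun x hx => (hN' hx).1,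
    fun x hx => (hN' hx).2.2.1, fun x hx => (hN' hx).2.2.2⟩

end Tools

/-! ### The complex logistic function -/

section Sigmoid
open Set Filter Topology ComplexConjugate

/-- The complex logistic function. -/
noncomputable def sg (ζ : ℂ) : ℂ := (1 + Complex.exp (-ζ))⁻¹

/-- The derivative of `sg`. -/
noncomputable def sgd (ζ : ℂ) : ℂ := Complex.exp (-ζ) / (1 + Complex.exp (-ζ)) ^ 2

lemma hasDerivAt_sg {ζ : ℂ} (h : 1 + Complex.exp (-ζ) ≠ 0) : HasDerivAt sg (sgd ζ) ζ := by
  have h1 : HasDerivAt (fun ζ : ℂ => 1 + Complex.exp (-ζ)) (-Complex.exp (-ζ)) ζ := by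
    simpa using ((hasDerivAt_neg ζ).cexp).const_add 1
  refine (h1.inv h).congr_deriv ?_
  rw [sgd, neg_neg]

lemma contDiffAt_sg {ζ : ℂ} (h : 1 + Complex.exp (-ζ) ≠ 0) : ContDiffAt ℂ 1 sg ζ := by
  have h1 : ContDiffAt ℂ 1 (fun ζ : ℂ => 1 + Complex.exp (-ζ)) ζ := by fun_prop
  exact h1.inv h

lemma norm_exp_neg (ζ : ℂ) : ‖Complex.exp (-ζ)‖ = Real.exp (-ζ.re) := by
  rw [Complex.norm_exp, Complex.neg_re]

lemma denom_lower {ζ : ℂ} (h : ζ.re ≤ -1) :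
    Real.exp (-ζ.re) / 2 ≤ ‖1 + Complex.exp (-ζ)‖ := by
  have h1 : 2 ≤ Real.exp (-ζ.re) := by
    have := Real.add_one_le_exp (-ζ.re); linarith
  have h2 := norm_sub_norm_le (Complex.exp (-ζ)) (-1)
  rw [norm_exp_neg, norm_neg, norm_one, sub_neg_eq_add, add_comm (Complex.exp (-ζ))] at h2
  linarith

lemma denom_ne_of_re_le {ζ : ℂ} (h : ζ.re ≤ -1) : 1 + Complex.exp (-ζ) ≠ 0 := fun h0 => by
  have := denom_lower h
  rw [h0, norm_zero] at this
  linarith [Real.exp_pos (-ζ.re)]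

lemma norm_sg_le {ζ : ℂ} (h : ζ.re ≤ -1) : ‖sg ζ‖ ≤ 2 * Real.exp ζ.re := by
  have h1 := denom_lower h
  rw [sg, norm_inv]
  have : 2 * Real.exp ζ.re = (Real.exp (-ζ.re) / 2)⁻¹ := by
    rw [Real.exp_neg]; field_simp
  rw [this]
  exact inv_anti₀ (by positivity) h1

lemma norm_sgd_le {ζ : ℂ} (h : ζ.re ≤ -1) : ‖sgd ζ‖ ≤ 4 * Real.exp ζ.re := by
  have h1 := denom_lower h
  rw [sgd, norm_div, norm_pow, norm_exp_neg]
  have h2 := Real.exp_pos (-ζ.re)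
  have : 4 * Real.exp ζ.re = Real.exp (-ζ.re) / (Real.exp (-ζ.re) / 2) ^ 2 := by
    rw [Real.exp_neg]; field_simp; ring
  rw [this]
  gcongr

lemma denom_neg (ζ : ℂ) : 1 + Complex.exp (- -ζ) = Complex.exp ζ * (1 + Complex.exp (-ζ)) := by
  rw [neg_neg, mul_add, ← Complex.exp_add]; simp; ring

lemma denom_ne_of_le_re {ζ : ℂ} (h : 1 ≤ ζ.re) : 1 + Complex.exp (-ζ) ≠ 0 := fun h0 => by
  have := denom_ne_of_re_le (ζ := -ζ) (by simpa using h)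
  rw [denom_neg, h0, mul_zero] at this
  exact this rfl

lemma one_sub_sg {ζ : ℂ} (h : 1 + Complex.exp (-ζ) ≠ 0) : 1 - sg ζ = sg (-ζ) := by
  have h1 : Complex.exp ζ * Complex.exp (-ζ) = 1 := by rw [← Complex.exp_add]; simp
  have h2 := mul_ne_zero (Complex.exp_ne_zero ζ) h
  have h3 : sg ζ * (1 + Complex.exp (-ζ)) = 1 := inv_mul_cancel₀ h
  have h4 : sg (-ζ) * (Complex.exp ζ * (1 + Complex.exp (-ζ))) = 1 := by
    rw [sg, denom_neg]; exact inv_mul_cancel₀ h2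
  refine mul_right_cancel₀ h2 ?_
  rw [h4]
  linear_combination (-Complex.exp ζ) * h3 + h1

lemma sgd_neg (ζ : ℂ) : sgd (-ζ) = sgd ζ := by
  rw [sgd, sgd, denom_neg, neg_neg, mul_pow, Complex.exp_neg]
  have := Complex.exp_ne_zero ζ
  rw [pow_two, pow_two, mul_assoc, div_mul_eq_div_div, div_self this, one_div,
    mul_inv, div_eq_mul_inv]

/-- Along `k → ∞`, the logistic step `sg (k ζ)` is `C¹`-small near a point with `Re ζ < 0`. -/
lemma sg_left {ζ₀ : ℂ} (h : ζ₀.re < 0) :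
    (∀ᶠ z : ℕ × ℂ in atTop ×ˢ 𝓝 ζ₀, 1 + Complex.exp (-(z.1 * z.2)) ≠ 0) ∧
    Tendsto (fun z : ℕ × ℂ => sg (z.1 * z.2)) (atTop ×ˢ 𝓝 ζ₀) (𝓝 0) ∧
    Tendsto (fun z : ℕ × ℂ => z.1 * sgd (z.1 * z.2)) (atTop ×ˢ 𝓝 ζ₀) (𝓝 0) := by
  obtain ⟨δ, hδ0, hδ⟩ := exists_between (neg_pos.2 h)
  have hev : ∀ᶠ z : ℕ × ℂ in atTop ×ˢ 𝓝 ζ₀, ((z.1 : ℂ) * z.2).re ≤ -((z.1 : ℝ) * δ) ∧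
      1 ≤ (z.1 : ℝ) * δ := by
    have h1 : ∀ᶠ ζ in 𝓝 ζ₀, ζ.re < -δ :=
      Complex.continuous_re.continuousAt.eventually_lt_const (by linarith)
    have h2 : ∀ᶠ k : ℕ in atTop, 1 ≤ (k : ℝ) * δ :=
      (tendsto_natCast_atTop_atTop.atTop_mul_const hδ0).eventually_ge_atTop 1
    filter_upwards [h2.prod_mk h1] with z hz
    refine ⟨?_, hz.1⟩
    have : ((z.1 : ℂ) * z.2).re = z.1 * z.2.re := by simp
    rw [this]
    have h3 : (0 : ℝ) ≤ z.1 := Nat.cast_nonneg _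
    nlinarith [hz.2]
  have hk : Tendsto (fun z : ℕ × ℂ => (z.1 : ℝ) * δ) (atTop ×ˢ 𝓝 ζ₀) atTop :=
    (tendsto_natCast_atTop_atTop.atTop_mul_const hδ0).comp tendsto_fst
  refine ⟨?_, ?_, ?_⟩
  · filter_upwards [hev] with z hz
    exact denom_ne_of_re_le (by linarith)
  · have h2 : Tendsto (fun z : ℕ × ℂ => 2 * Real.exp (-((z.1 : ℝ) * δ))) (atTop ×ˢ 𝓝 ζ₀) (𝓝 0) := by
      simpa using (Real.tendsto_exp_neg_atTop_nhds_zero.comp hk).const_mul 2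
    refine squeeze_zero_norm' ?_ h2
    filter_upwards [hev] with z hz
    refine (norm_sg_le (by linarith)).trans ?_
    have := Real.exp_le_exp.2 hz.1
    linarith
  · have h2 : Tendsto (fun z : ℕ × ℂ => 4 / δ * (((z.1 : ℝ) * δ) ^ 1 * Real.exp (-((z.1 : ℝ) * δ))))
        (atTop ×ˢ 𝓝 ζ₀) (𝓝 0) := by
      simpa using ((Real.tendsto_pow_mul_exp_neg_atTop_nhds_zero 1).comp hk).const_mul (4 / δ)
    refine squeeze_zero_norm' ?_ h2
    filter_upwards [hev] with z hz
    rw [norm_mul, Complex.norm_natCast]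
    have h3 := norm_sgd_le (ζ := z.1 * z.2) (by linarith)
    have h4 := Real.exp_le_exp.2 hz.1
    calc (z.1 : ℝ) * ‖sgd (z.1 * z.2)‖ ≤ z.1 * (4 * Real.exp (-((z.1 : ℝ) * δ))) := by
          gcongr; linarith
      _ = _ := by field_simp

lemma sg_right {ζ₀ : ℂ} (h : 0 < ζ₀.re) :
    (∀ᶠ z : ℕ × ℂ in atTop ×ˢ 𝓝 ζ₀, 1 + Complex.exp (-(z.1 * z.2)) ≠ 0) ∧
    Tendsto (fun z : ℕ × ℂ => 1 - sg (z.1 * z.2)) (atTop ×ˢ 𝓝 ζ₀) (𝓝 0) ∧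
    Tendsto (fun z : ℕ × ℂ => z.1 * sgd (z.1 * z.2)) (atTop ×ˢ 𝓝 ζ₀) (𝓝 0) := by
  obtain ⟨h1, h2, h3⟩ := sg_left (ζ₀ := -ζ₀) (by simpa using h)
  have hn : Tendsto (fun z : ℕ × ℂ => (z.1, -z.2)) (atTop ×ˢ 𝓝 ζ₀) (atTop ×ˢ 𝓝 (-ζ₀)) :=
    tendsto_fst.prodMk (tendsto_neg ζ₀ |>.comp tendsto_snd)
  have h1' : ∀ᶠ z : ℕ × ℂ in atTop ×ˢ 𝓝 ζ₀, 1 + Complex.exp (-(z.1 * z.2)) ≠ 0 := by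
    filter_upwards [hn.eventually h1] with z hz
    simp only [mul_neg] at hz
    rw [denom_neg] at hz
    exact right_ne_zero_of_mul hz
  refine ⟨h1', ?_, ?_⟩
  · refine (h2.comp hn).congr' ?_
    filter_upwards [h1'] with z hz
    simp only [Function.comp, mul_neg]
    rw [one_sub_sg hz]
  · refine (h3.comp hn).congr fun z => ?_
    simp only [Function.comp, mul_neg]
    rw [sgd_neg]

lemma sg_ofReal (t : ℝ) : sg t = (Real.sigmoid t : ℝ) := by
  rw [sg, Real.sigmoid]; push_cast; rfl

lemma denom_ne_ofReal (t : ℝ) : 1 + Complex.exp (-(t : ℂ)) ≠ 0 := by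
  have : (1 + Real.exp (-t) : ℝ) ≠ 0 := by positivity
  exact_mod_cast this

lemma sgd_ofReal (t : ℝ) : sgd t = (Real.sigmoid t * (1 - Real.sigmoid t) : ℝ) := by
  rw [sgd, Real.sigmoid]
  have := denom_ne_ofReal t
  push_cast
  field_simp
  ring

lemma abs_mul_sigmoid_le (t : ℝ) : |t * (Real.sigmoid t * (1 - Real.sigmoid t))| ≤ 1 := by
  have key : ∀ t : ℝ, 0 ≤ t → t * (Real.sigmoid t * (1 - Real.sigmoid t)) ≤ 1 := fun t ht => by
    have h1 : 1 - Real.sigmoid t ≤ Real.exp (-t) := by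
      rw [← Real.sigmoid_neg, ← Real.sigmoid_mul_rexp_neg]
      exact mul_le_of_le_one_left (Real.exp_pos _).le (Real.sigmoid_lt_one t).le
    have h2 := Real.sigmoid_pos t
    have h3 := Real.sigmoid_lt_one t
    have h4 : t * Real.exp (-t) ≤ 1 := by
      rw [Real.exp_neg, ← div_eq_mul_inv, div_le_one (Real.exp_pos t)]
      linarith [Real.add_one_le_exp t]
    refine le_trans ?_ h4
    refine mul_le_mul_of_nonneg_left (le_trans ?_ h1) ht
    exact mul_le_of_le_one_left (by linarith) h3.le
  have h2 := Real.sigmoid_pos t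
  have h3 := Real.sigmoid_lt_one t
  rcases le_total 0 t with ht | ht
  · rw [abs_of_nonneg (by apply mul_nonneg ht; nlinarith)]
    exact key t ht
  · have := key (-t) (by linarith)
    rw [Real.sigmoid_neg] at this
    rw [abs_of_nonpos (by apply mul_nonpos_of_nonpos_of_nonneg ht; nlinarith)]
    linarith

end Sigmoid

/-! ### Gluing an embedding to an affine map -/

section GlueAbstract
open Set Filter Topology ComplexConjugate

variable {V : Type*} [NormedAddCommGroup V] [InnerProductSpace ℂ V] [FiniteDimensional ℂ V]

lemma eventually_of_compact_within {X : Type*} [TopologicalSpace X] {K : Set X} (hK : IsCompact K)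
    {P : ℕ → X → Prop} (h : ∀ x ∈ K, ∀ᶠ z in atTop ×ˢ 𝓝[K] x, P z.1 z.2) :
    ∀ᶠ k in atTop, ∀ u ∈ K, P k u := by
  refine eventually_of_compact hK fun x hx => ?_
  obtain ⟨A, hA, B, hB, hAB⟩ := mem_prod_iff.1 (h x hx)
  refine mem_prod_iff.2 ⟨A, hA, _, mem_nhdsWithin_iff_eventually.1 hB, ?_⟩
  rintro ⟨k, u⟩ ⟨h1, h2⟩ h3
  exact hAB (show (k, u) ∈ A ×ˢ B from ⟨h1, h2 h3⟩)

/-- The map `u ↦ F (p u) + M' (u - p u)`, which is `F` where `p = id` and an affine map where `p` is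
constant. -/
def glue (F : V → V) (M' : V →L[ℂ] V) (p : V → V) (u : V) : V := F (p u) + M' (u - p u)

/-- Local nondegeneracy at `x ∈ K` of a sequence of interpolating maps `p k` with limit `P` at `x`;
`L` stands for the derivative at `P` of the map `F` to be glued. Both the infinitesimal and the finite
increments of `L ∘ p + M' ∘ (id - p)` are bounded below. -/
structure GlueLocal (p : ℕ → V → V) (L M' : V →L[ℂ] V) (K : Set V) (x P : V) (c C : ℝ) : Prop where
  tendsto : Tendsto (fun z : ℕ × V => p z.1 z.2) (atTop ×ˢ 𝓝[K] x) (𝓝 P)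
  contDiff : ∀ᶠ z : ℕ × V in atTop ×ˢ 𝓝[K] x, ContDiffAt ℂ 1 (p z.1) z.2
  pos : 0 < c
  pos' : 0 < C
  inf : ∀ᶠ z : ℕ × V in atTop ×ˢ 𝓝[K] x, ∀ v,
    c * ‖v‖ ≤ ‖L (fderiv ℂ (p z.1) z.2 v) + M' (v - fderiv ℂ (p z.1) z.2 v)‖ ∧
    ‖fderiv ℂ (p z.1) z.2 v‖ ≤ C * ‖v‖
  fin : ∀ᶠ z : ℕ × V × V in atTop ×ˢ 𝓝[K ×ˢ K] (x, x),
    c * ‖z.2.1 - z.2.2‖ ≤ ‖L (p z.1 z.2.1 - p z.1 z.2.2) +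
      M' ((z.2.1 - z.2.2) - (p z.1 z.2.1 - p z.1 z.2.2))‖ ∧
    ‖p z.1 z.2.1 - p z.1 z.2.2‖ ≤ C * ‖z.2.1 - z.2.2‖

variable {p : ℕ → V → V} {M' : V →L[ℂ] V} {K : Set V} {x P : V} {F : V → V} {c C : ℝ}

lemma tendsto_snd_within (K : Set V) (x : V) :
    Tendsto (fun z : ℕ × V => z.2) (atTop ×ˢ 𝓝[K] x) (𝓝 x) :=
  (tendsto_id'.2 nhdsWithin_le_nhds).comp tendsto_snd

lemma tendsto_glue (hF : ContinuousAt F P)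
    (h : Tendsto (fun z : ℕ × V => p z.1 z.2) (atTop ×ˢ 𝓝[K] x) (𝓝 P)) :
    Tendsto (fun z : ℕ × V => glue F M' (p z.1) z.2) (atTop ×ˢ 𝓝[K] x)
      (𝓝 (F P + M' (x - P))) :=
  (hF.tendsto.comp h).add ((M'.continuous.tendsto _).comp ((tendsto_snd_within K x).sub h))

lemma GlueLocal.immersion (h : GlueLocal p (fderiv ℂ F P) M' K x P c C) (hF : ContDiffAt ℂ 1 F P) :
    ∀ᶠ z : ℕ × V in atTop ×ˢ 𝓝[K] x, ContDiffAt ℂ 1 (glue F M' (p z.1)) z.2 ∧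
      Function.Injective (fderiv ℂ (glue F M' (p z.1)) z.2) := by
  have hε : 0 < c / (2 * C) := by have := h.pos; have := h.pos'; positivity
  have h1 : ContinuousAt (fderiv ℂ F) P := hF.continuousAt_fderiv one_ne_zero
  have h2 := h.tendsto.eventually (Metric.continuousAt_iff'.1 h1 _ hε)
  have h3 := h.tendsto.eventually (hF.eventually (by simp))
  filter_upwards [h2, h3, h.contDiff, h.inf] with z hz1 hz2 hz3 hz4
  have hcd : ContDiffAt ℂ 1 (glue F M' (p z.1)) z.2 := by
    refine (hz2.comp z.2 hz3).add ?_
    exact M'.contDiff.contDiffAt.comp z.2 (contDiffAt_id.sub hz3)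
  refine ⟨hcd, ?_⟩
  have hp := (hz3.differentiableAt one_ne_zero).hasFDerivAt
  have hd : HasFDerivAt (glue F M' (p z.1)) ((fderiv ℂ F (p z.1 z.2)).comp (fderiv ℂ (p z.1) z.2) +
      M'.comp (ContinuousLinearMap.id ℂ V - fderiv ℂ (p z.1) z.2)) z.2 :=
    ((hz2.differentiableAt one_ne_zero).hasFDerivAt.comp z.2 hp).add
      (M'.hasFDerivAt.comp z.2 ((hasFDerivAt_id _).sub hp))
  rw [hd.fderiv, injective_iff_map_eq_zero]
  intro v hv
  simp only [add_apply, ContinuousLinearMap.comp_apply, sub_apply,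
    ContinuousLinearMap.id_apply] at hv
  obtain ⟨k1, k2⟩ := hz4 v
  set w := fderiv ℂ (p z.1) z.2 v
  have k3 : fderiv ℂ F P w + M' (v - w) = -(fderiv ℂ F (p z.1 z.2) - fderiv ℂ F P) w := by
    rw [sub_apply, ← sub_eq_zero, ← hv]; abel
  rw [k3, norm_neg] at k1
  have k4 := (fderiv ℂ F (p z.1 z.2) - fderiv ℂ F P).le_opNorm w
  rw [dist_eq_norm] at hz1
  have k5 : c * ‖v‖ ≤ c / (2 * C) * (C * ‖v‖) := by
    refine k1.trans (k4.trans ?_)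
    gcongr
  have hC := h.pos'
  have k6 : c / (2 * C) * (C * ‖v‖) = c / 2 * ‖v‖ := by field_simp
  rw [k6] at k5
  have : ‖v‖ ≤ 0 := by nlinarith [h.pos, norm_nonneg v]
  exact norm_le_zero_iff.1 this

lemma GlueLocal.injective (h : GlueLocal p (fderiv ℂ F P) M' K x P c C)
    (hF : ContDiffAt ℂ 1 F P) :
    ∀ᶠ z : ℕ × V × V in atTop ×ˢ 𝓝[K ×ˢ K] (x, x),
      glue F M' (p z.1) z.2.1 = glue F M' (p z.1) z.2.2 → z.2.1 = z.2.2 := by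
  have hε : 0 < c / (2 * C) := by have := h.pos; have := h.pos'; positivity
  have h1 := (hasStrictFDerivAt_iff_isLittleO.1 (hF.hasStrictFDerivAt one_ne_zero)).def hε
  have t1 : Tendsto (fun z : ℕ × V × V => (z.1, z.2.1)) (atTop ×ˢ 𝓝[K ×ˢ K] (x, x))
      (atTop ×ˢ 𝓝[K] x) := by
    rw [nhdsWithin_prod_eq]
    exact tendsto_fst.prodMk (tendsto_fst.comp tendsto_snd)
  have t2 : Tendsto (fun z : ℕ × V × V => (z.1, z.2.2)) (atTop ×ˢ 𝓝[K ×ˢ K] (x, x))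
      (atTop ×ˢ 𝓝[K] x) := by
    rw [nhdsWithin_prod_eq]
    exact tendsto_fst.prodMk (tendsto_snd.comp tendsto_snd)
  have t3 := (h.tendsto.comp t1).prodMk_nhds (h.tendsto.comp t2)
  filter_upwards [t3.eventually h1, h.fin] with z hz1 hz2 heq
  simp only [Function.comp, mem_ofPred_eq] at hz1
  obtain ⟨k1, k2⟩ := hz2
  simp only [glue] at heq
  set w := p z.1 z.2.1 - p z.1 z.2.2 with hw
  have k3 : fderiv ℂ F P w + M' ((z.2.1 - z.2.2) - w) =
      -(F (p z.1 z.2.1) - F (p z.1 z.2.2) - fderiv ℂ F P w) := by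
    have : (z.2.1 - z.2.2) - w = (z.2.1 - p z.1 z.2.1) - (z.2.2 - p z.1 z.2.2) := by
      rw [hw]; abel
    rw [this, M'.map_sub, ← sub_eq_zero, ← sub_eq_zero.2 heq]; abel
  rw [k3, norm_neg] at k1
  have hC := h.pos'
  have k5 : c * ‖z.2.1 - z.2.2‖ ≤ c / (2 * C) * (C * ‖z.2.1 - z.2.2‖) := by
    refine k1.trans (hz1.trans ?_)
    gcongr
  have k6 : c / (2 * C) * (C * ‖z.2.1 - z.2.2‖) = c / 2 * ‖z.2.1 - z.2.2‖ := by field_simp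
  rw [k6] at k5
  have : ‖z.2.1 - z.2.2‖ ≤ 0 := by nlinarith [h.pos, norm_nonneg (z.2.1 - z.2.2)]
  exact sub_eq_zero.1 (norm_le_zero_iff.1 this)

/-- By compactness the local conditions make the glued maps embeddings of `K` into `U` for large
`k`, provided that the limiting map `x ↦ F (P x) + M' (x - P x)` is injective into `U`. -/
lemma eventually_glue_embedding {P : V → V} {U : Set V} (hK : IsCompact K) (hU : IsOpen U)
    (hF : ∀ x ∈ K, ContDiffAt ℂ 1 F (P x))
    (h : ∀ x ∈ K, ∃ c C, GlueLocal p (fderiv ℂ F (P x)) M' K x (P x) c C)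
    (hinj : InjOn (fun x => F (P x) + M' (x - P x)) K)
    (hm : ∀ x ∈ K, F (P x) + M' (x - P x) ∈ U) :
    ∀ᶠ k in atTop, (∀ x ∈ K, ContDiffAt ℂ 1 (glue F M' (p k)) x) ∧ InjOn (glue F M' (p k)) K ∧
      (∀ x ∈ K, Function.Injective (fderiv ℂ (glue F M' (p k)) x)) ∧
      MapsTo (glue F M' (p k)) K U := by
  have ht : ∀ x ∈ K, Tendsto (fun z : ℕ × V => glue F M' (p z.1) z.2) (atTop ×ˢ 𝓝[K] x)
      (𝓝 (F (P x) + M' (x - P x))) := fun x hx => by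
    obtain ⟨c, C, hc⟩ := h x hx
    exact tendsto_glue (hF x hx).continuousAt hc.tendsto
  have h1 : ∀ᶠ k in atTop, ∀ x ∈ K, (ContDiffAt ℂ 1 (glue F M' (p k)) x ∧
      Function.Injective (fderiv ℂ (glue F M' (p k)) x)) ∧ glue F M' (p k) x ∈ U := by
    refine eventually_of_compact_within hK fun x hx => ?_
    obtain ⟨c, C, hc⟩ := h x hx
    exact (hc.immersion (hF x hx)).and ((ht x hx).eventually (hU.mem_nhds (hm x hx)))
  have h2 : ∀ᶠ k in atTop, ∀ w ∈ K ×ˢ K,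
      glue F M' (p k) w.1 = glue F M' (p k) w.2 → w.1 = w.2 := by
    refine eventually_of_compact_within (hK.prod hK) ?_
    rintro ⟨x, y⟩ ⟨hx, hy⟩
    by_cases hxy : x = y
    · subst hxy
      obtain ⟨c, C, hc⟩ := h x hx
      exact hc.injective (hF x hx)
    · have hne : F (P x) + M' (x - P x) ≠ F (P y) + M' (y - P y) := fun h0 => hxy (hinj hx hy h0)
      have t1 : Tendsto (fun z : ℕ × V × V => (z.1, z.2.1)) (atTop ×ˢ 𝓝[K ×ˢ K] (x, y))
          (atTop ×ˢ 𝓝[K] x) := by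
        rw [nhdsWithin_prod_eq]
        exact tendsto_fst.prodMk (tendsto_fst.comp tendsto_snd)
      have t2 : Tendsto (fun z : ℕ × V × V => (z.1, z.2.2)) (atTop ×ˢ 𝓝[K ×ˢ K] (x, y))
          (atTop ×ˢ 𝓝[K] y) := by
        rw [nhdsWithin_prod_eq]
        exact tendsto_fst.prodMk (tendsto_snd.comp tendsto_snd)
      have := (((ht x hx).comp t1).sub ((ht y hy).comp t2)).eventually_ne (sub_ne_zero.2 hne)
      filter_upwards [this] with z hz h0
      exact absurd (sub_eq_zero.2 h0) hz
  filter_upwards [h1, h2] with k hk1 hk2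
  exact ⟨fun x hx => (hk1 x hx).1.1, fun x hx y hy hxy => hk2 (x, y) ⟨hx, hy⟩ hxy,
    fun x hx => (hk1 x hx).1.2, fun x hx => (hk1 x hx).2⟩

/-- Uniform convergence of the glued maps on a compact part of `K` where the limit is `G`. -/
lemma eventually_glue_close {P : V → V} {S : Set V} {G : V → V} {η : ℝ} (hη : 0 < η)
    (hS : IsCompact S) (hSK : S ⊆ K)
    (hF : ∀ x ∈ S, ContDiffAt ℂ 1 F (P x))
    (h : ∀ x ∈ S, Tendsto (fun z : ℕ × V => p z.1 z.2) (atTop ×ˢ 𝓝[K] x) (𝓝 (P x)))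
    (hG : ContinuousOn G S) (hGP : ∀ x ∈ S, F (P x) + M' (x - P x) = G x) :
    ∀ᶠ k in atTop, ∀ x ∈ S, ‖glue F M' (p k) x - G x‖ < η := by
  refine eventually_of_compact_within hS fun x hx => ?_
  have h1 := tendsto_glue (M' := M') (hF x hx).continuousAt (h x hx)
  have h2 := h1.mono_left (Filter.prod_mono_right atTop (nhdsWithin_mono x hSK))
  rw [hGP x hx] at h2
  have h3 : Tendsto (fun z : ℕ × V => G z.2) (atTop ×ˢ 𝓝[S] x) (𝓝 (G x)) :=
    (hG x hx).tendsto.comp tendsto_snd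
  have h4 := (h2.sub h3).norm
  rw [sub_self, norm_zero] at h4
  exact h4.eventually (gt_mem_nhds hη)

end GlueAbstract

/-! ### The logistic interpolation satisfies the gluing conditions -/

section GlueLocalConds
open Set Filter Topology ComplexConjugate

variable {V : Type*} [NormedAddCommGroup V] [InnerProductSpace ℂ V] [FiniteDimensional ℂ V]

lemma eventually_increment {f : ℕ → V → V} {A : V →L[ℂ] V} {x : V} {η : ℝ}
    (h : ∀ᶠ z : ℕ × V in atTop ×ˢ 𝓝 x, DifferentiableAt ℂ (f z.1) z.2 ∧
      ‖fderiv ℂ (f z.1) z.2 - A‖ ≤ η) :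
    ∀ᶠ z : ℕ × V × V in atTop ×ˢ 𝓝 (x, x),
      ‖f z.1 z.2.1 - f z.1 z.2.2 - A (z.2.1 - z.2.2)‖ ≤ η * ‖z.2.1 - z.2.2‖ := by
  obtain ⟨S, hS, T, hT, hST⟩ := mem_prod_iff.1 h
  obtain ⟨ε, hε, hεT⟩ := Metric.mem_nhds_iff.1 hT
  have hb : ball x ε ×ˢ ball x ε ∈ 𝓝 (x, x) := prod_mem_nhds (ball_mem_nhds x hε) (ball_mem_nhds x hε)
  filter_upwards [prod_mem_prod hS hb]
  rintro ⟨k, u, v⟩ ⟨hk, hu, hv⟩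
  have hk' : ∀ y ∈ ball x ε, DifferentiableAt ℂ (f k) y ∧ ‖fderiv ℂ (f k) y - A‖ ≤ η :=
    fun y hy => hST (show (k, y) ∈ S ×ˢ T from ⟨hk, hεT hy⟩)
  exact (convex_ball x ε).norm_image_sub_le_of_norm_fderiv_le' (𝕜 := ℂ) (fun y hy => (hk' y hy).1)
    (fun y hy => (hk' y hy).2) hv hu

/-- If the derivatives of `p k` converge near `x` to `A` and `L ∘ A + M' ∘ (1 - A)` is injective, the
local gluing conditions hold at `x`. -/
lemma exists_glueLocal_of_tendsto {p : ℕ → V → V} {L M' A : V →L[ℂ] V} {K : Set V} {x P : V}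
    (hp : Tendsto (fun z : ℕ × V => p z.1 z.2) (atTop ×ˢ 𝓝 x) (𝓝 P))
    (hc : ∀ᶠ z : ℕ × V in atTop ×ˢ 𝓝 x, ContDiffAt ℂ 1 (p z.1) z.2)
    (hd : Tendsto (fun z : ℕ × V => fderiv ℂ (p z.1) z.2) (atTop ×ˢ 𝓝 x) (𝓝 A))
    (hi : Function.Injective (L.comp A + M'.comp (ContinuousLinearMap.id ℂ V - A))) :
    ∃ c C, GlueLocal p L M' K x P c C := by
  obtain ⟨c, hc0, hcT⟩ := exists_lower_bound_of_injective _ hi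
  set T := L.comp A + M'.comp (ContinuousLinearMap.id ℂ V - A) with hT
  have hle : atTop ×ˢ 𝓝[K] x ≤ (atTop : Filter ℕ) ×ˢ 𝓝 x := Filter.prod_mono_right _ nhdsWithin_le_nhds
  set η := c / (2 * (‖L - M'‖ + 1)) with hη
  have hη0 : 0 < η := by positivity
  have hηc : ‖L - M'‖ * η ≤ c / 2 := by
    rw [hη, mul_div_assoc', div_le_div_iff₀ (by positivity) two_pos]
    nlinarith [norm_nonneg (L - M')]
  have alg : ∀ v w : V, ‖w - A v‖ ≤ η * ‖v‖ →
      c / 2 * ‖v‖ ≤ ‖L w + M' (v - w)‖ ∧ ‖w‖ ≤ (‖A‖ + η) * ‖v‖ := by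
    intro v w hw
    constructor
    · have e1 : L w + M' (v - w) = T v + (L - M') (w - A v) := by
        simp only [hT, add_apply, ContinuousLinearMap.comp_apply, sub_apply,
          ContinuousLinearMap.id_apply, map_sub]
        abel
      rw [e1]
      have h1 := norm_sub_le_norm_add (T v) ((L - M') (w - A v))
      have h2 := (L - M').le_opNorm (w - A v)
      have h3 : ‖L - M'‖ * ‖w - A v‖ ≤ ‖L - M'‖ * (η * ‖v‖) := by gcongr
      have h4 : ‖L - M'‖ * (η * ‖v‖) ≤ c / 2 * ‖v‖ := by
        rw [← mul_assoc]; gcongr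
      have := hcT v
      linarith
    · have h1 := norm_sub_norm_le w (A v)
      have h2 := A.le_opNorm v
      linarith
  have hde : ∀ᶠ z : ℕ × V in atTop ×ˢ 𝓝 x, ‖fderiv ℂ (p z.1) z.2 - A‖ ≤ η := by
    filter_upwards [Metric.tendsto_nhds.1 hd η hη0] with z hz
    rw [dist_eq_norm] at hz
    exact hz.le
  refine ⟨c / 2, ‖A‖ + η, hp.mono_left hle, hle hc, by positivity, by positivity, ?_, ?_⟩
  · refine hle ?_
    filter_upwards [hde] with z hz v
    refine alg v _ ?_
    rw [← sub_apply]
    exact ((fderiv ℂ (p z.1) z.2 - A).le_opNorm v).trans (by gcongr)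
  · have h1 := eventually_increment (A := A) (η := η) ((hc.and hde).mono fun z hz =>
      ⟨hz.1.differentiableAt one_ne_zero, hz.2⟩)
    have h2 : ∀ᶠ z : ℕ × V × V in atTop ×ˢ 𝓝[K ×ˢ K] (x, x),
      ‖p z.1 z.2.1 - p z.1 z.2.2 - A (z.2.1 - z.2.2)‖ ≤ η * ‖z.2.1 - z.2.2‖ :=
      (Filter.prod_mono_right _ nhdsWithin_le_nhds) h1
    filter_upwards [h2] with z hz
    exact alg _ _ hz

/-- A holomorphic map which for `k → ∞` tends to the identity on `Re ⟪e, u⟫ < a` and to the constant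
`q = a e` on `Re ⟪e, u⟫ > a`. -/
noncomputable def interp (e : V) (a : ℝ) (k : ℕ) (u : V) : V :=
  u - sg (k * (inner ℂ e u - a)) • (u - (a : ℂ) • e)

/-- The derivative of `interp e a k` at `u` is the identity minus this map. -/
noncomputable def interpDeriv (e : V) (a : ℝ) (k : ℕ) (u : V) : V →L[ℂ] V :=
  sg (k * (inner ℂ e u - a)) • ContinuousLinearMap.id ℂ V +
    (k * sgd (k * (inner ℂ e u - a))) •
      ContinuousLinearMap.smulRightL ℂ V V (innerSL ℂ e) (u - (a : ℂ) • e)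

variable {e : V} {a : ℝ} {k : ℕ} {u : V}

lemma interp_hasFDerivAt (h : 1 + Complex.exp (-(k * (inner ℂ e u - a))) ≠ 0) :
    HasFDerivAt (interp e a k) (ContinuousLinearMap.id ℂ V - interpDeriv e a k u) u := by
  have h0 : HasFDerivAt (fun u : V => (k : ℂ) * (inner ℂ e u - a)) ((k : ℂ) • innerSL ℂ e) u :=
    (((innerSL ℂ e).hasFDerivAt (x := u)).sub_const (a : ℂ)).const_mul (k : ℂ)
  have h1 := (hasDerivAt_sg h).comp_hasFDerivAt u h0
  have h2 := h1.smul ((hasFDerivAt_id (𝕜 := ℂ) u).sub_const ((a : ℂ) • e))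
  refine ((hasFDerivAt_id (𝕜 := ℂ) u).sub h2).congr_fderiv ?_
  ext v
  simp only [interpDeriv, sub_apply, add_apply, smul_apply, ContinuousLinearMap.id_apply,
    ContinuousLinearMap.smulRightL_apply_apply, ContinuousLinearMap.smulRight_apply,
    innerSL_apply_apply, smul_smul, Function.comp, id, smul_eq_mul]
  congr 4
  ring

lemma interp_contDiffAt (h : 1 + Complex.exp (-(k * (inner ℂ e u - a))) ≠ 0) :
    ContDiffAt ℂ 1 (interp e a k) u := by
  have h0 : ContDiffAt ℂ 1 (fun u : V => (k : ℂ) * (inner ℂ e u - a)) u :=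
    contDiffAt_const.mul (((innerSL ℂ e).contDiff.contDiffAt (x := u)).sub contDiffAt_const)
  have h1 : ContDiffAt ℂ 1 (fun u : V => sg (k * (inner ℂ e u - a))) u :=
    ContDiffAt.comp (g := sg) (f := fun u : V => (k : ℂ) * (inner ℂ e u - a)) u
      (contDiffAt_sg h) h0
  exact contDiffAt_id.sub (h1.smul (contDiffAt_id.sub contDiffAt_const))

lemma tendsto_interp_arg (e : V) (a : ℝ) (x : V) :
    Tendsto (fun z : ℕ × V => (z.1, inner ℂ e z.2 - (a : ℂ))) (atTop ×ˢ 𝓝 x)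
      (atTop ×ˢ 𝓝 (inner ℂ e x - (a : ℂ))) := by
  have : Continuous fun u : V => inner ℂ e u - (a : ℂ) := by fun_prop
  exact tendsto_fst.prodMk ((this.tendsto x).comp tendsto_snd)

lemma exists_glueLocal_left {L M' : V →L[ℂ] V} {K : Set V} {x : V}
    (hx : (inner ℂ e x).re < a) (hL : Function.Injective L) :
    ∃ c C, GlueLocal (interp e a) L M' K x x c C := by
  have hre : (inner ℂ e x - (a : ℂ)).re < 0 := by simpa using hx
  obtain ⟨h1, h2, h3⟩ := sg_left hre
  have ht := tendsto_interp_arg e a x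
  have hs : Tendsto (fun z : ℕ × V => z.2) ((atTop : Filter ℕ) ×ˢ 𝓝 x) (𝓝 x) := tendsto_snd
  have hq := hs.sub_const ((a : ℂ) • e)
  refine exists_glueLocal_of_tendsto (A := ContinuousLinearMap.id ℂ V) ?_ ?_ ?_ ?_
  · have := hs.sub ((h2.comp ht).smul hq)
    simpa [interp] using this
  · filter_upwards [ht.eventually h1] with z hz
    exact interp_contDiffAt hz
  · have h4 : Tendsto (fun z : ℕ × V => interpDeriv e a z.1 z.2) (atTop ×ˢ 𝓝 x) (𝓝 0) := by
      have k1 := (h2.comp ht).smul_const (ContinuousLinearMap.id ℂ V)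
      have k2 := (h3.comp ht).smul
        (((ContinuousLinearMap.smulRightL ℂ V V (innerSL ℂ e)).continuous.tendsto _).comp hq)
      simpa [interpDeriv] using k1.add k2
    have h5 := (tendsto_const_nhds (x := ContinuousLinearMap.id ℂ V)).sub h4
    rw [sub_zero] at h5
    refine h5.congr' ?_
    filter_upwards [ht.eventually h1] with z hz
    exact (interp_hasFDerivAt hz).fderiv.symm
  · simpa using hL

lemma exists_glueLocal_right {L M' : V →L[ℂ] V} {K : Set V} {x : V}
    (hx : a < (inner ℂ e x).re) (hM : Function.Injective M') :
    ∃ c C, GlueLocal (interp e a) L M' K x ((a : ℂ) • e) c C := by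
  have hre : 0 < (inner ℂ e x - (a : ℂ)).re := by simpa using hx
  obtain ⟨h1, h2, h3⟩ := sg_right hre
  have ht := tendsto_interp_arg e a x
  have hs : Tendsto (fun z : ℕ × V => z.2) ((atTop : Filter ℕ) ×ˢ 𝓝 x) (𝓝 x) := tendsto_snd
  have hq := hs.sub_const ((a : ℂ) • e)
  have h2' : Tendsto (fun z : ℕ × V => sg (z.1 * (inner ℂ e z.2 - a))) (atTop ×ˢ 𝓝 x) (𝓝 1) := by
    have := (h2.comp ht).const_sub 1
    simpa using this
  refine exists_glueLocal_of_tendsto (A := 0) ?_ ?_ ?_ ?_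
  · have := hs.sub (h2'.smul hq)
    simpa [interp] using this
  · filter_upwards [ht.eventually h1] with z hz
    exact interp_contDiffAt hz
  · have h4 : Tendsto (fun z : ℕ × V => interpDeriv e a z.1 z.2) (atTop ×ˢ 𝓝 x)
        (𝓝 (ContinuousLinearMap.id ℂ V)) := by
      have k1 := h2'.smul_const (ContinuousLinearMap.id ℂ V)
      have k2 := (h3.comp ht).smul
        (((ContinuousLinearMap.smulRightL ℂ V V (innerSL ℂ e)).continuous.tendsto _).comp hq)
      simpa [interpDeriv] using k1.add k2
    have h5 := (tendsto_const_nhds (x := ContinuousLinearMap.id ℂ V)).sub h4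
    rw [sub_self] at h5
    refine h5.congr' ?_
    filter_upwards [ht.eventually h1] with z hz
    exact (interp_hasFDerivAt hz).fderiv.symm
  · simpa using hM

/-- The convex-type family of linear maps occurring at the junction is uniformly injective. -/
lemma exists_uniform_lower {M M' : V →L[ℂ] V}
    (hT : ∀ χ ∈ Icc (0 : ℝ) 1, ∀ κ : ℝ, ∀ u : V,
      M (u - ((χ : ℂ) • u + ((κ : ℂ) * inner ℂ e u) • e)) +
        M' ((χ : ℂ) • u + ((κ : ℂ) * inner ℂ e u) • e) = 0 → u = 0) :
    ∃ c > 0, ∀ χ ∈ Icc (0 : ℝ) 1, ∀ κ ∈ Icc (-1 : ℝ) 1, ∀ u : V,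
      c * ‖u‖ ≤ ‖M (u - ((χ : ℂ) • u + ((κ : ℂ) * inner ℂ e u) • e)) +
        M' ((χ : ℂ) • u + ((κ : ℂ) * inner ℂ e u) • e)‖ := by
  have : ProperSpace V := FiniteDimensional.proper ℂ V
  let f : ℝ × ℝ × V → ℝ := fun w =>
    ‖M (w.2.2 - ((w.1 : ℂ) • w.2.2 + ((w.2.1 : ℂ) * inner ℂ e w.2.2) • e)) +
        M' ((w.1 : ℂ) • w.2.2 + ((w.2.1 : ℂ) * inner ℂ e w.2.2) • e)‖
  have hf : Continuous f := by fun_prop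
  obtain ⟨c, hc, h⟩ := (isCompact_Icc.prod (isCompact_Icc.prod (isCompact_sphere (0 : V) 1))
    |>.exists_forall_le' (s := Icc (0 : ℝ) 1 ×ˢ (Icc (-1 : ℝ) 1 ×ˢ sphere (0 : V) 1))
      hf.continuousOn (a := 0) (by
      rintro ⟨χ, κ, u⟩ ⟨h1, -, h3⟩
      refine norm_pos_iff.2 fun h0 => ?_
      have := hT χ h1 κ u h0
      simp only [this] at h3
      simp at h3))
  refine ⟨c, hc, fun χ hχ κ hκ u => ?_⟩
  by_cases hu : u = 0
  · simp [hu]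
  have hun := norm_pos_iff.2 hu
  have hs : ((‖u‖⁻¹ : ℝ) : ℂ) • u ∈ sphere (0 : V) 1 := by
    rw [mem_sphere_zero_iff_norm, norm_smul, Complex.norm_real, norm_inv, norm_norm,
      inv_mul_cancel₀ hun.ne']
  have h1 := h (χ, κ, ((‖u‖⁻¹ : ℝ) : ℂ) • u) ⟨hχ, hκ, hs⟩
  set lam : ℂ := ((‖u‖⁻¹ : ℝ) : ℂ) with hlam
  have e0 : (χ : ℂ) • (lam • u) + ((κ : ℂ) * inner ℂ e (lam • u)) • e =
      lam • ((χ : ℂ) • u + ((κ : ℂ) * inner ℂ e u) • e) := by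
    rw [inner_smul_right, smul_add, smul_smul, smul_smul, smul_smul]
    congr 2 <;> ring
  have e1 : f (χ, κ, lam • u) = ‖u‖⁻¹ * f (χ, κ, u) := by
    simp only [f]
    rw [e0, ← smul_sub, M.map_smul, M'.map_smul, ← smul_add, norm_smul, hlam, Complex.norm_real,
      norm_inv, norm_norm]
  rw [e1, ← div_eq_inv_mul, le_div_iff₀ hun] at h1
  exact h1

lemma interp_segment (he : ‖e‖ = 1) (t : ℝ) :
    interp e a k ((t : ℂ) • e) = ((t - Real.sigmoid (k * (t - a)) * (t - a) : ℝ) : ℂ) • e := by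
  have : (k : ℂ) * (inner ℂ e ((t : ℂ) • e) - a) = ((k * (t - a) : ℝ) : ℂ) := by
    simp [inner_smul_right, inner_self_eq_norm_sq_to_K, he]
  rw [interp, this, sg_ofReal, ← sub_smul, smul_smul, ← sub_smul]
  push_cast
  rfl

lemma sigmoid_lipschitz (k : ℕ) (a t t' : ℝ) :
    |(t - Real.sigmoid (k * (t - a)) * (t - a)) - (t' - Real.sigmoid (k * (t' - a)) * (t' - a))| ≤
      3 * |t - t'| := by
  have hd : ∀ t : ℝ, HasDerivAt (fun t : ℝ => t - Real.sigmoid (k * (t - a)) * (t - a))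
      (1 - (Real.sigmoid (k * (t - a)) + (k * (t - a)) * (Real.sigmoid (k * (t - a)) *
        (1 - Real.sigmoid (k * (t - a)))))) t := fun t => by
    have h0 : HasDerivAt (fun t : ℝ => (k : ℝ) * (t - a)) k t := by
      simpa using ((hasDerivAt_id t).sub_const a).const_mul (k : ℝ)
    have h1 := (Real.hasDerivAt_sigmoid (k * (t - a))).comp t h0
    refine ((hasDerivAt_id t).sub (h1.mul ((hasDerivAt_id t).sub_const a))).congr_deriv ?_
    simp only [Function.comp, id]
    ring
  have := convex_univ.norm_image_sub_le_of_norm_hasDerivWithin_le (C := 3)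
    (fun t _ => (hd t).hasDerivWithinAt) (fun t _ => ?_) (mem_univ t') (mem_univ t)
  · simpa using this
  · have h1 := abs_le.1 (abs_mul_sigmoid_le (k * (t - a)))
    have h2 := Real.sigmoid_pos (k * (t - a))
    have h3 := Real.sigmoid_lt_one (k * (t - a))
    rw [Real.norm_eq_abs, abs_le]
    constructor <;> linarith

/-- The local gluing conditions at the junction point `q = a e`, near which `K` is a segment. -/
lemma exists_glueLocal_mid (he : ‖e‖ = 1) {M M' : V →L[ℂ] V} {K : Set V} {n : V} {c : ℝ}
    (hn : ‖n‖ = 1) (hc : 0 < c)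
    (hM : ∀ u, inner ℂ n (M u) = c * inner ℂ e u) (hM' : ∀ u, inner ℂ n (M' u) = c * inner ℂ e u)
    (hT : ∀ χ ∈ Icc (0 : ℝ) 1, ∀ κ : ℝ, ∀ u : V,
      M (u - ((χ : ℂ) • u + ((κ : ℂ) * inner ℂ e u) • e)) +
        M' ((χ : ℂ) • u + ((κ : ℂ) * inner ℂ e u) • e) = 0 → u = 0)
    (hK : ∀ᶠ u in 𝓝[K] ((a : ℂ) • e), ∃ t : ℝ, u = (t : ℂ) • e) :
    ∃ c C, GlueLocal (interp e a) M M' K ((a : ℂ) • e) ((a : ℂ) • e) c C := by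
  obtain ⟨c₀, hc₀, hlow⟩ := exists_uniform_lower hT
  have hseg : ∀ᶠ z : ℕ × V in atTop ×ˢ 𝓝[K] ((a : ℂ) • e), ∃ t : ℝ, z.2 = (t : ℂ) • e :=
    hK.prod_inr _
  have hns : ∀ r : ℝ, ‖(r : ℂ) • e‖ = |r| := fun r => by
    rw [norm_smul, he, mul_one, Complex.norm_real, Real.norm_eq_abs]
  have harg : ∀ (k : ℕ) (t : ℝ), (k : ℂ) * (inner ℂ e ((t : ℂ) • e) - a) =
      ((k * (t - a) : ℝ) : ℂ) := fun k t => by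
    simp [inner_smul_right, inner_self_eq_norm_sq_to_K, he]
  refine ⟨min c₀ c, 3, ?_, ?_, lt_min hc₀ hc, by norm_num, ?_, ?_⟩
  · rw [tendsto_iff_dist_tendsto_zero]
    have h1 : Tendsto (fun z : ℕ × V => 3 * ‖z.2 - (a : ℂ) • e‖) (atTop ×ˢ 𝓝[K] ((a : ℂ) • e))
        (𝓝 0) := by
      have := (((tendsto_snd_within K ((a : ℂ) • e)).sub_const ((a : ℂ) • e)).norm).const_mul 3
      simpa using this
    refine squeeze_zero' (Eventually.of_forall fun _ => dist_nonneg) ?_ h1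
    filter_upwards [hseg] with z hz
    obtain ⟨t, ht⟩ := hz
    rw [ht, dist_eq_norm, interp_segment he, ← sub_smul, ← sub_smul, ← Complex.ofReal_sub,
      ← Complex.ofReal_sub, hns, hns]
    have := sigmoid_lipschitz z.1 a t a
    simpa using this
  · filter_upwards [hseg] with z hz
    obtain ⟨t, ht⟩ := hz
    refine interp_contDiffAt ?_
    rw [ht, harg]
    exact denom_ne_ofReal _
  · filter_upwards [hseg] with z hz v
    obtain ⟨t, ht⟩ := hz
    have hd : 1 + Complex.exp (-(z.1 * (inner ℂ e z.2 - a))) ≠ 0 := by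
      rw [ht, harg]
      exact denom_ne_ofReal _
    rw [(interp_hasFDerivAt hd).fderiv]
    set χ := Real.sigmoid (z.1 * (t - a)) with hχ
    set κ := z.1 * (t - a) * (χ * (1 - χ)) with hκ
    have h1 := abs_le.1 (abs_mul_sigmoid_le (z.1 * (t - a)))
    have h2 := Real.sigmoid_pos (z.1 * (t - a))
    have h3 := Real.sigmoid_lt_one (z.1 * (t - a))
    rw [← hχ] at h1 h2 h3
    rw [← hκ] at h1
    have e1 : interpDeriv e a z.1 z.2 v = (χ : ℂ) • v + ((κ : ℂ) * inner ℂ e v) • e := by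
      rw [interpDeriv, ht, harg, sg_ofReal, sgd_ofReal, ← sub_smul]
      simp only [add_apply, smul_apply, ContinuousLinearMap.id_apply,
        ContinuousLinearMap.smulRightL_apply_apply, ContinuousLinearMap.smulRight_apply,
        innerSL_apply_apply, smul_smul]
      congr 2
      rw [hκ]; push_cast; ring
    rw [sub_apply, ContinuousLinearMap.id_apply, e1, sub_sub_cancel]
    refine ⟨le_trans ?_ (hlow χ ⟨h2.le, h3.le⟩ κ h1 v), ?_⟩
    · gcongr; exact min_le_left _ _
    · have k1 : ‖v - (χ : ℂ) • v‖ ≤ ‖v‖ := by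
        have : v - (χ : ℂ) • v = ((1 - χ : ℝ) : ℂ) • v := by push_cast; rw [sub_smul, one_smul]
        rw [this, norm_smul, Complex.norm_real, Real.norm_eq_abs, abs_of_pos (by linarith)]
        nlinarith [norm_nonneg v]
      have k2 : ‖((κ : ℂ) * inner ℂ e v) • e‖ ≤ ‖v‖ := by
        rw [norm_smul, he, mul_one, norm_mul, Complex.norm_real, Real.norm_eq_abs]
        have := norm_inner_le_of_unit he v
        calc |κ| * ‖inner ℂ e v‖ ≤ 1 * ‖v‖ := by gcongr; exact abs_le.2 h1
          _ = ‖v‖ := one_mul _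
      have k3 := norm_sub_le (v - (χ : ℂ) • v) (((κ : ℂ) * inner ℂ e v) • e)
      rw [← sub_sub]
      linarith [norm_nonneg v]
  · have hseg2 : ∀ᶠ z : ℕ × V × V in atTop ×ˢ 𝓝[K ×ˢ K] ((a : ℂ) • e, (a : ℂ) • e),
        (∃ t : ℝ, z.2.1 = (t : ℂ) • e) ∧ (∃ t : ℝ, z.2.2 = (t : ℂ) • e) := by
      rw [nhdsWithin_prod_eq]
      exact (hK.prod_mk hK).prod_inr _
    filter_upwards [hseg2] with z hz
    obtain ⟨⟨t, ht⟩, t', ht'⟩ := hz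
    constructor
    · set w := interp e a z.1 z.2.1 - interp e a z.1 z.2.2
      have h1 : inner ℂ n (M w + M' (z.2.1 - z.2.2 - w)) = c * inner ℂ e (z.2.1 - z.2.2) := by
        rw [inner_add_right, hM, hM', inner_sub_right e _ w]; ring
      have h2 := norm_inner_le_of_unit hn (M w + M' (z.2.1 - z.2.2 - w))
      refine le_trans ?_ h2
      rw [h1, norm_mul, Complex.norm_real, Real.norm_eq_abs, abs_of_pos hc, ht, ht', ← sub_smul,
        ← Complex.ofReal_sub, hns, inner_smul_right, inner_self_eq_norm_sq_to_K, he]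
      simp only [norm_mul, Complex.norm_real, Real.norm_eq_abs]
      simp only [Complex.coe_algebraMap, Complex.ofReal_one, one_pow, norm_one, mul_one]
      gcongr
      exact min_le_right _ _
    · rw [ht, ht', interp_segment he, interp_segment he, ← sub_smul, ← sub_smul,
        ← Complex.ofReal_sub, ← Complex.ofReal_sub, hns, hns]
      exact sigmoid_lipschitz _ _ _ _

end GlueLocalConds

/-! ### Gluing along the skeleton of a dumbbell -/

section Glued
open Set Filter Topology ComplexConjugate

variable {V : Type*} [NormedAddCommGroup V] [InnerProductSpace ℂ V] [FiniteDimensional ℂ V]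

/-- The compact skeleton of a dumbbell: two closed balls joined by a segment. -/
def skeleton (e : V) (s b R : ℝ) : Set V :=
  closedBall 0 s ∪ ((fun t : ℝ => (t : ℂ) • e) '' Icc s b ∪ closedBall (((b + R : ℝ) : ℂ) • e) R)

lemma isCompact_skeleton (e : V) (s b R : ℝ) : IsCompact (skeleton e s b R) := by
  have : ProperSpace V := FiniteDimensional.proper ℂ V
  refine (isCompact_closedBall _ _).union ((isCompact_Icc.image ?_).union (isCompact_closedBall _ _))
  fun_prop

lemma inner_ofReal_smul {e : V} (he : ‖e‖ = 1) (t : ℝ) : inner ℂ e ((t : ℂ) • e) = (t : ℂ) := by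
  simp [inner_smul_right, inner_self_eq_norm_sq_to_K, he]

lemma norm_ofReal_smul {e : V} (he : ‖e‖ = 1) (t : ℝ) : ‖(t : ℂ) • e‖ = |t| := by
  rw [norm_smul, he, mul_one, Complex.norm_real, Real.norm_eq_abs]

lemma abs_re_inner_le {e : V} (he : ‖e‖ = 1) (u : V) : |(inner ℂ e u).re| ≤ ‖u‖ :=
  (Complex.abs_re_le_norm _).trans (norm_inner_le_of_unit he u)

lemma le_re_of_mem_closedBall {e : V} (he : ‖e‖ = 1) {b R : ℝ} {u : V}
    (hu : u ∈ closedBall (((b + R : ℝ) : ℂ) • e) R) : b ≤ (inner ℂ e u).re := by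
  rw [mem_closedBall, dist_eq_norm] at hu
  have h1 := (abs_re_inner_le he _).trans hu
  rw [inner_sub_right, inner_ofReal_smul he, Complex.sub_re, Complex.ofReal_re] at h1
  linarith [(abs_le.1 h1).1]

/-- A ball embedding `F` and an affine map `A` that agrees with it at `q = a e` and whose linear part
`M'` has the same normal component as the derivative `M` of `F` there can be approximated on a dumbbell skeleton by a single embedding. -/
lemma exists_glued {F : V → V} {U : Set V} (hU : IsOpen U) (hF : IsBallEmb F U)
    {e n : V} (he : ‖e‖ = 1) (hn : ‖n‖ = 1) {s a b R c : ℝ} (hs : 0 < s) (hsa : s < a) (ha1 : a < 1)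
    (hab : a < b) (hc : 0 < c) {M M' : V →L[ℂ] V} (hMF : fderiv ℂ F ((a : ℂ) • e) = M)
    (hM : ∀ u, inner ℂ n (M u) = c * inner ℂ e u) (hM' : ∀ u, inner ℂ n (M' u) = c * inner ℂ e u)
    (hT : ∀ χ ∈ Icc (0 : ℝ) 1, ∀ κ : ℝ, ∀ u : V,
      M (u - ((χ : ℂ) • u + ((κ : ℂ) * inner ℂ e u) • e)) +
        M' ((χ : ℂ) • u + ((κ : ℂ) * inner ℂ e u) • e) = 0 → u = 0)
    {A : V → V} (hA : ∀ x, A x = F ((a : ℂ) • e) + M' (x - (a : ℂ) • e))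
    (hA1 : ∀ t ∈ Ioc a b, A ((t : ℂ) • e) ∈ U \ F '' closedBall 0 a)
    (hA2 : ∀ x ∈ closedBall (((b + R : ℝ) : ℂ) • e) R, A x ∈ U \ F '' closedBall 0 a)
    {η : ℝ} (hη : 0 < η) :
    ∃ G : V → V, (∀ x ∈ skeleton e s b R, ContDiffAt ℂ 1 G x) ∧ InjOn G (skeleton e s b R) ∧
      (∀ x ∈ skeleton e s b R, Function.Injective (fderiv ℂ G x)) ∧
      MapsTo G (skeleton e s b R) U ∧ (∀ x ∈ closedBall 0 s, ‖G x - F x‖ < η) ∧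
      (∀ x ∈ closedBall (((b + R : ℝ) : ℂ) • e) R, ‖G x - A x‖ < η) := by
  classical
  have : ProperSpace V := FiniteDimensional.proper ℂ V
  have ha0 : 0 < a := hs.trans hsa
  set q := (a : ℂ) • e with hq
  set K := skeleton e s b R with hK
  have hqn : ‖q‖ = a := by rw [hq, norm_ofReal_smul he, abs_of_pos ha0]
  have hqe : (inner ℂ e q).re = a := by rw [hq, inner_ofReal_smul he, Complex.ofReal_re]
  have hball : ∀ x : V, ‖x‖ ≤ a → x ∈ ball (0 : V) 1 := fun x hx => by
    rw [mem_ball_zero_iff]; linarith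
  have hM'i : Function.Injective M' := by
    rw [injective_iff_map_eq_zero]
    intro u hu
    refine hT 1 ⟨zero_le_one, le_rfl⟩ 0 u ?_
    simp [hu]
  have htri : ∀ x ∈ K, ((inner ℂ e x).re < a ∧ ‖x‖ < a) ∨ x = q ∨
      (a < (inner ℂ e x).re ∧ A x ∈ U \ F '' closedBall 0 a) := by
    rintro x (hx | ⟨t, ht, rfl⟩ | hx)
    · rw [mem_closedBall_zero_iff] at hx
      left
      exact ⟨by linarith [(abs_le.1 (abs_re_inner_le he x)).2], by linarith⟩
    · simp only
      rw [inner_ofReal_smul he, Complex.ofReal_re, norm_ofReal_smul he,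
        abs_of_pos (hs.trans_le ht.1)]
      rcases lt_trichotomy t a with h | h | h
      · exact Or.inl ⟨h, h⟩
      · exact Or.inr (Or.inl (by rw [h]))
      · exact Or.inr (Or.inr ⟨h, hA1 t ⟨h, ht.2⟩⟩)
    · exact Or.inr (Or.inr ⟨hab.trans_le (le_re_of_mem_closedBall he hx), hA2 x hx⟩)
  let P : V → V := fun x => if (inner ℂ e x).re ≤ a then x else q
  have hP1 : ∀ x, (inner ℂ e x).re ≤ a → P x = x := fun x hx => if_pos hx
  have hP2 : ∀ x, a < (inner ℂ e x).re → P x = q := fun x hx => if_neg (not_le.2 hx)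
  have hPK : ∀ x ∈ K, P x ∈ ball (0 : V) 1 := fun x hx => by
    rcases htri x hx with h | h | h
    · rw [hP1 x h.1.le]; exact hball x h.2.le
    · rw [hP1 x (by rw [h, hqe]), h]; exact hball q hqn.le
    · rw [hP2 x h.1]; exact hball q hqn.le
  have hG1 : ∀ x ∈ K, (inner ℂ e x).re ≤ a → F (P x) + M' (x - P x) = F x := fun x _ h => by
    rw [hP1 x h, sub_self, map_zero, add_zero]
  have hG2 : ∀ x ∈ K, a < (inner ℂ e x).re → F (P x) + M' (x - P x) = A x := fun x _ h => by
    rw [hP2 x h, hA]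
  have hKq : ∀ᶠ u in 𝓝[K] q, ∃ t : ℝ, u = (t : ℂ) • e := by
    have h1 : Continuous fun u : V => (inner ℂ e u).re := by fun_prop
    have h2 : ∀ᶠ u in 𝓝[K] q, (inner ℂ e u).re ∈ Ioo s b :=
      nhdsWithin_le_nhds (h1.continuousAt.eventually_mem (by
        rw [hqe]; exact Ioo_mem_nhds hsa hab))
    filter_upwards [h2, self_mem_nhdsWithin] with u hu huK
    rcases huK with hx | ⟨t, ht, rfl⟩ | hx
    · rw [mem_closedBall_zero_iff] at hx
      linarith [hu.1, (abs_le.1 (abs_re_inner_le he u)).2]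
    · exact ⟨t, rfl⟩
    · linarith [hu.2, le_re_of_mem_closedBall he hx]
  have hloc : ∀ x ∈ K, ∃ c C, GlueLocal (interp e a) (fderiv ℂ F (P x)) M' K x (P x) c C := by
    intro x hx
    rcases htri x hx with h | h | h
    · rw [hP1 x h.1.le]
      exact exists_glueLocal_left h.1 (hF.immersion x (hball x h.2.le))
    · rw [hP1 x (by rw [h, hqe]), h, hMF]
      exact exists_glueLocal_mid he hn hc hM hM' hT hKq
    · rw [hP2 x h.1]
      exact exists_glueLocal_right h.1 hM'i
  have hFP : ∀ x ∈ K, ContDiffAt ℂ 1 F (P x) := fun x hx => hF.contDiffAt (hPK x hx)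
  have hdich : ∀ x ∈ K, ((inner ℂ e x).re ≤ a ∧ ‖x‖ ≤ a) ∨
      (a < (inner ℂ e x).re ∧ A x ∈ U \ F '' closedBall 0 a) := fun x hx => by
    rcases htri x hx with h | h | h
    · exact Or.inl ⟨h.1.le, h.2.le⟩
    · rw [h]; exact Or.inl ⟨hqe.le, hqn.le⟩
    · exact Or.inr h
  have hinj : InjOn (fun x => F (P x) + M' (x - P x)) K := by
    intro x hx y hy hxy
    simp only at hxy
    rcases hdich x hx with h | h <;> rcases hdich y hy with h' | h'
    · rw [hG1 x hx h.1, hG1 y hy h'.1] at hxy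
      exact hF.inj (hball x h.2) (hball y h'.2) hxy
    · rw [hG1 x hx h.1, hG2 y hy h'.1] at hxy
      exact absurd ⟨x, mem_closedBall_zero_iff.2 h.2, hxy⟩ h'.2.2
    · rw [hG2 x hx h.1, hG1 y hy h'.1] at hxy
      exact absurd ⟨y, mem_closedBall_zero_iff.2 h'.2, hxy.symm⟩ h.2.2
    · rw [hG2 x hx h.1, hG2 y hy h'.1, hA, hA] at hxy
      exact sub_left_injective (hM'i (add_left_cancel hxy))
  have hmU : ∀ x ∈ K, F (P x) + M' (x - P x) ∈ U := fun x hx => by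
    rcases hdich x hx with h | h
    · rw [hG1 x hx h.1]; exact hF.mapsTo (hball x h.2)
    · rw [hG2 x hx h.1]; exact h.2.1
  have hS1 : closedBall 0 s ⊆ K := subset_union_left
  have hS2 : closedBall (((b + R : ℝ) : ℂ) • e) R ⊆ K :=
    subset_union_right.trans subset_union_right
  have hten : ∀ x ∈ K, Tendsto (fun z : ℕ × V => interp e a z.1 z.2) (atTop ×ˢ 𝓝[K] x)
      (𝓝 (P x)) := fun x hx => by
    obtain ⟨c, C, h⟩ := hloc x hx
    exact h.tendsto
  have hs1 : ∀ x ∈ closedBall (0 : V) s, ‖x‖ ≤ s := fun x hx => mem_closedBall_zero_iff.1 hx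
  have ev1 := eventually_glue_embedding (isCompact_skeleton e s b R) hU hFP hloc hinj hmU
  have ev2 : ∀ᶠ k in atTop, ∀ x ∈ closedBall (0 : V) s, ‖glue F M' (interp e a k) x - F x‖ < η :=
    eventually_glue_close hη (isCompact_closedBall _ _) hS1 (fun x hx => hFP x (hS1 hx))
      (fun x hx => hten x (hS1 hx)) (fun x hx => (hF.contDiffAt (hball x
        ((hs1 x hx).trans hsa.le))).continuousAt.continuousWithinAt)
      (fun x hx => hG1 x (hS1 hx) (by
        linarith [hs1 x hx, (abs_le.1 (abs_re_inner_le he x)).2]))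
  have hAc : Continuous A := by
    rw [funext hA]; fun_prop
  have ev3 : ∀ᶠ k in atTop, ∀ x ∈ closedBall (((b + R : ℝ) : ℂ) • e) R,
      ‖glue F M' (interp e a k) x - A x‖ < η :=
    eventually_glue_close hη (isCompact_closedBall _ _) hS2 (fun x hx => hFP x (hS2 hx))
      (fun x hx => hten x (hS2 hx)) hAc.continuousOn
      (fun x hx => hG2 x (hS2 hx) (hab.trans_le (le_re_of_mem_closedBall he hx)))
  obtain ⟨k, h1, h2, h3⟩ := (ev1.and (ev2.and ev3)).exists
  exact ⟨_, h1.1, h1.2.1, h1.2.2.1, h1.2.2.2, h2, h3⟩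

end Glued

/-! ### Geometry at a nearest point -/

section Frame
open Set Filter Topology ComplexConjugate

variable {V : Type*} [NormedAddCommGroup V] [InnerProductSpace ℂ V] [FiniteDimensional ℂ V]

/-- First-order condition at a nearest point: admissible directions do not point towards `x0`. -/
lemma re_inner_nonpos_of_nearest {F : V → V} {M : V →L[ℂ] V} {q x0 u : V} {S : Set V}
    (hF : HasFDerivAt F M q) (hmin : ∀ x ∈ S, ‖x0 - F q‖ ≤ ‖x0 - F x‖)
    (hu : ∀ᶠ t : ℝ in 𝓝[>] 0, q + (t : ℂ) • u ∈ S) :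
    (inner ℂ (x0 - F q) (M u)).re ≤ 0 := by
  have h1 : HasDerivAt (fun t : ℝ => q + (t : ℂ) • u) u 0 := by
    have := ((Complex.ofRealCLM.hasDerivAt (x := (0 : ℝ))).smul_const u).const_add q
    simpa using this
  have h2 : HasDerivAt (fun t : ℝ => x0 - F (q + (t : ℂ) • u)) (-(M u)) 0 := by
    have hq : q = q + ((0 : ℝ) : ℂ) • u := by simp
    have := (hF.restrictScalars ℝ).comp_hasDerivAt_of_eq 0 h1 hq
    exact this.const_sub x0
  have h3 := Complex.reCLM.hasFDerivAt.comp_hasDerivAt 0 (HasDerivAt.inner ℂ h2 h2)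
  have h4 := h3.tendsto_slope_zero_right
  have h5 : 0 ≤ Complex.reCLM (inner ℂ (x0 - F (q + ((0 : ℝ) : ℂ) • u)) (-(M u)) +
      inner ℂ (-(M u)) (x0 - F (q + ((0 : ℝ) : ℂ) • u))) := by
    refine ge_of_tendsto h4 ?_
    filter_upwards [hu, self_mem_nhdsWithin] with t ht ht0
    have ht0' : 0 < t := ht0
    refine smul_nonneg (inv_nonneg.2 ht0'.le) (sub_nonneg.2 ?_)
    have h6 := hmin _ ht
    simp only [Function.comp, zero_add, Complex.reCLM_apply, inner_self_eq_norm_sq_to_K,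
      Complex.ofReal_zero, zero_smul, add_zero]
    have h7 : ∀ r : ℝ, ((((r : ℝ) : ℂ)) ^ 2).re = r ^ 2 := fun r => by
      rw [← Complex.ofReal_pow, Complex.ofReal_re]
    simp only [Complex.coe_algebraMap, h7]
    gcongr
  simp only [Complex.ofReal_zero, zero_smul, add_zero, Complex.reCLM_apply, Complex.add_re,
    inner_neg_right, inner_neg_left, Complex.neg_re] at h5
  have h8 : (inner ℂ (M u) (x0 - F q)).re = (inner ℂ (x0 - F q) (M u)).re := by
    rw [← inner_conj_symm, Complex.conj_re]
  rw [h8] at h5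
  linarith

lemma re_inner_self (x : V) : (inner ℂ x x : ℂ).re = ‖x‖ ^ 2 := by
  have := inner_self_eq_norm_sq (𝕜 := ℂ) x
  simpa only [RCLike.re_eq_complex_re] using this

lemma norm_add_sq_re (q w : V) : ‖q + w‖ ^ 2 = ‖q‖ ^ 2 + 2 * (inner ℂ q w).re + ‖w‖ ^ 2 := by
  have := norm_add_sq (𝕜 := ℂ) q w
  simpa using this

/-- At a point `F q` of the image of a closed ball nearest to an outside point `x0`, the base point
`q` is on the sphere and the outward normals correspond under the derivative. -/
lemma nearest_point_frame {F : V → V} {M : V →L[ℂ] V} {q x0 : V} {a : ℝ} (ha : 0 < a)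
    (hF : HasFDerivAt F M q) (hM : Function.Injective M) (hq : q ∈ closedBall (0 : V) a)
    (hx0 : x0 ≠ F q) (hmin : ∀ x ∈ closedBall (0 : V) a, ‖x0 - F q‖ ≤ ‖x0 - F x‖) :
    ‖q‖ = a ∧ ∃ c > 0, ∀ u, inner ℂ (x0 - F q) (M u) = ((c : ℝ) : ℂ) * inner ℂ q u := by
  have : CompleteSpace V := FiniteDimensional.complete ℂ V
  have hsurj : Function.Surjective (M : V →ₗ[ℂ] V) := LinearMap.injective_iff_surjective.1 hM
  obtain ⟨u₀, hu₀⟩ := hsurj (x0 - F q)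
  have hu₀' : M u₀ = x0 - F q := hu₀
  have hd : 0 < ‖x0 - F q‖ := norm_pos_iff.2 (sub_ne_zero.2 hx0)
  have hpos : 0 < (inner ℂ (x0 - F q) (M u₀)).re := by
    rw [hu₀', re_inner_self]
    positivity
  rw [mem_closedBall_zero_iff] at hq
  have hqa : ‖q‖ = a := by
    refine le_antisymm hq (not_lt.1 fun hlt => ?_)
    refine absurd (re_inner_nonpos_of_nearest (u := u₀) hF hmin ?_) (not_le.2 hpos)
    have hc : Continuous fun t : ℝ => q + (t : ℂ) • u₀ := by fun_prop
    refine nhdsWithin_le_nhds (hc.continuousAt.eventually_mem ?_)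
    simp only [Complex.ofReal_zero, zero_smul, add_zero]
    exact mem_of_superset (isOpen_ball.mem_nhds (mem_ball_zero_iff.2 hlt)) ball_subset_closedBall
  refine ⟨hqa, ?_⟩
  set m := ContinuousLinearMap.adjoint M (x0 - F q) with hm
  have hmu : ∀ u, inner ℂ (x0 - F q) (M u) = inner ℂ m u := fun u =>
    (ContinuousLinearMap.adjoint_inner_left M u _).symm
  have hm0 : m ≠ 0 := fun h0 => by
    rw [hmu, h0, inner_zero_left] at hpos; simp at hpos
  have key : ∀ u, (inner ℂ q u).re < 0 → (inner ℂ m u).re ≤ 0 := fun u hu => by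
    rw [← hmu]
    refine re_inner_nonpos_of_nearest hF hmin ?_
    have h1 : ∀ᶠ t : ℝ in 𝓝[>] 0, t * ‖u‖ ^ 2 < -2 * (inner ℂ q u).re := by
      have hc : Continuous fun t : ℝ => t * ‖u‖ ^ 2 := by fun_prop
      exact nhdsWithin_le_nhds (hc.continuousAt.eventually_lt_const (by simp; linarith))
    filter_upwards [h1, self_mem_nhdsWithin] with t ht ht0
    have ht0' : 0 < t := ht0
    rw [mem_closedBall_zero_iff]
    refine (sq_le_sq₀ (norm_nonneg _) ha.le).1 ?_
    rw [norm_add_sq_re, inner_smul_right, Complex.re_ofReal_mul, norm_smul, Complex.norm_real,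
      Real.norm_eq_abs, abs_of_pos ht0', hqa]
    nlinarith
  set r := (inner ℂ q m).re with hr
  have hr' : (inner ℂ m q).re = r := by rw [hr, ← inner_conj_symm, Complex.conj_re]
  have hqq : (inner ℂ q q : ℂ).re = a ^ 2 := by
    rw [re_inner_self, hqa]
  have hmm : (inner ℂ m m : ℂ).re = ‖m‖ ^ 2 := re_inner_self m
  -- test the direction `m - (r / a² + ε) q`
  have h1 : ∀ ε > 0, ‖m‖ ^ 2 - (r / a ^ 2 + ε) * r ≤ 0 := fun ε hε => by
    have := key (m - ((r / a ^ 2 + ε : ℝ) : ℂ) • q) (by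
      rw [inner_sub_right, inner_smul_right, Complex.sub_re, Complex.re_ofReal_mul, hqq, ← hr]
      have : (r / a ^ 2 + ε) * a ^ 2 = r + ε * a ^ 2 := by field_simp
      rw [this]
      have : 0 < ε * a ^ 2 := by positivity
      linarith)
    rwa [inner_sub_right, inner_smul_right, Complex.sub_re, Complex.re_ofReal_mul, hr', hmm] at this
  have h2 : ‖m‖ ^ 2 - r / a ^ 2 * r ≤ 0 := by
    have hc : Tendsto (fun ε : ℝ => ‖m‖ ^ 2 - (r / a ^ 2 + ε) * r) (𝓝[>] 0)
        (𝓝 (‖m‖ ^ 2 - (r / a ^ 2 + 0) * r)) := by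
      have : Continuous fun ε : ℝ => ‖m‖ ^ 2 - (r / a ^ 2 + ε) * r := by fun_prop
      exact (this.tendsto 0).mono_left nhdsWithin_le_nhds
    rw [add_zero] at hc
    refine le_of_tendsto hc ?_
    filter_upwards [self_mem_nhdsWithin] with ε hε using h1 ε hε
  have h3 : m = ((r / a ^ 2 : ℝ) : ℂ) • q := by
    rw [← sub_eq_zero, ← norm_le_zero_iff]
    refine (sq_le_sq₀ (norm_nonneg _) le_rfl).1 ?_
    rw [sub_eq_add_neg, norm_add_sq_re, inner_neg_right, inner_smul_right, Complex.neg_re,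
      Complex.re_ofReal_mul, hr', norm_neg, norm_smul, Complex.norm_real, Real.norm_eq_abs, mul_pow,
      sq_abs, hqa]
    have : (r / a ^ 2) ^ 2 * a ^ 2 = r / a ^ 2 * r := by field_simp
    rw [this]
    linarith
  have h4 : 0 ≤ r := by
    have := key (-q) (by rw [inner_neg_right, Complex.neg_re, hqq]; nlinarith)
    rw [inner_neg_right, Complex.neg_re, hr'] at this
    linarith
  have h5 : r ≠ 0 := fun h0 => hm0 (by rw [h3, h0]; simp)
  refine ⟨r / a ^ 2, by positivity, fun u => ?_⟩
  rw [hmu, h3, inner_smul_left, Complex.conj_ofReal]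

/-- A linear isometry carrying one unit vector to another. -/
lemma exists_isometry {e n : V} (he : ‖e‖ = 1) (hn : ‖n‖ = 1) :
    ∃ R : V ≃ₗᵢ[ℂ] V, R e = n := by
  let L := (LinearIsometry.toSpanSingleton ℂ V hn).comp
    (LinearIsometryEquiv.toSpanUnitSingleton (𝕜 := ℂ) e he).symm.toLinearIsometry
  have hL : L (LinearIsometryEquiv.toSpanUnitSingleton (𝕜 := ℂ) e he 1) = n := by
    change LinearIsometry.toSpanSingleton ℂ V hn ((LinearIsometryEquiv.toSpanUnitSingleton
      (𝕜 := ℂ) e he).symm (LinearIsometryEquiv.toSpanUnitSingleton (𝕜 := ℂ) e he 1)) = n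
    rw [LinearIsometryEquiv.symm_apply_apply]
    simp
  refine ⟨L.extend.toLinearIsometryEquiv rfl, ?_⟩
  have := LinearIsometry.extend_apply L (LinearIsometryEquiv.toSpanUnitSingleton (𝕜 := ℂ) e he 1)
  rw [hL] at this
  simpa using this

/-- Given the derivative `M` at the junction, there is a conformal `M'` with the same behaviour in
the normal direction such that the interpolating family between `M` and `M'` stays injective. The
phase `ω` on `e^⊥` is chosen so that no `-τ ω`, `τ > 0`, is an eigenvalue of `R⁻¹ M`. -/
lemma exists_conformal {M : V →L[ℂ] V} (hMi : Function.Injective M) {e n : V} (he : ‖e‖ = 1)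
    (hn : ‖n‖ = 1) {c : ℝ} (hc : 0 < c) (hM : ∀ u, inner ℂ n (M u) = c * inner ℂ e u) :
    ∃ M' : V →L[ℂ] V, (∀ u, ‖M' u‖ = c * ‖u‖) ∧ M' e = (c : ℂ) • n ∧
      (∀ u, inner ℂ n (M' u) = c * inner ℂ e u) ∧
      ∀ χ ∈ Icc (0 : ℝ) 1, ∀ κ : ℝ, ∀ u : V,
        M (u - ((χ : ℂ) • u + ((κ : ℂ) * inner ℂ e u) • e)) +
          M' ((χ : ℂ) • u + ((κ : ℂ) * inner ℂ e u) • e) = 0 → u = 0 := by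
  obtain ⟨R, hR⟩ := exists_isometry he hn
  let T : Module.End ℂ V := (R.symm.toLinearEquiv : V →ₗ[ℂ] V) ∘ₗ (M : V →ₗ[ℂ] V)
  have hTapp : ∀ u, T u = R.symm (M u) := fun u => rfl
  obtain ⟨ω, hω1, hω2⟩ : ∃ ω : ℂ, ‖ω‖ = 1 ∧ ∀ τ : ℝ, 0 < τ → ¬ T.HasEigenvalue (-(τ * ω)) := by
    have hfin : ((fun μ : ℂ => -(((‖μ‖⁻¹ : ℝ) : ℂ) * μ)) '' {μ | T.HasEigenvalue μ}).Finite :=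
      (Module.End.finite_hasEigenvalue T).image _
    have hinf : (sphere (0 : ℂ) 1).Infinite := by
      refine (isPreconnected_sphere (by rw [Complex.rank_real_complex]; norm_num) 0 1
        ).infinite_of_nontrivial ⟨1, by simp, -1, by simp, ?_⟩
      intro h
      have := congrArg Complex.re h
      norm_num at this
    obtain ⟨ω, hω, hω'⟩ := hinf.exists_notMem_finite hfin
    refine ⟨ω, by simpa using hω, fun τ hτ hev => hω' ⟨_, hev, ?_⟩⟩
    have hω1 : ‖ω‖ = 1 := by simpa using hω
    have hτ' : (τ : ℂ) ≠ 0 := by exact_mod_cast hτ.ne'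
    simp only [norm_neg, norm_mul, Complex.norm_real, Real.norm_eq_abs, abs_of_pos hτ, hω1, mul_one]
    push_cast
    field_simp
  have hω0 : ω ≠ 0 := by rw [← norm_ne_zero_iff, hω1]; exact one_ne_zero
  let D : V →L[ℂ] V := ω • ContinuousLinearMap.id ℂ V +
    (1 - ω) • (innerSL ℂ e).smulRight e
  have hD : ∀ u, D u = ω • u + ((1 - ω) * inner ℂ e u) • e := fun u => by
    simp [D, smul_smul]
  have hee : inner ℂ e e = (1 : ℂ) := by simp [inner_self_eq_norm_sq_to_K, he]
  have hDe : ∀ u, inner ℂ e (D u) = inner ℂ e u := fun u => by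
    rw [hD, inner_add_right, inner_smul_right, inner_smul_right, hee]; ring
  have hDn : ∀ u, ‖D u‖ = ‖u‖ := fun u => by
    have h1 := norm_sq_perp he (D u)
    have h2 := norm_sq_perp he u
    have h3 : D u - inner ℂ e (D u) • e = ω • (u - inner ℂ e u • e) := by
      rw [hDe, hD]; module
    rw [h3, hDe, norm_smul, hω1, one_mul, ← h2] at h1
    exact (sq_eq_sq₀ (norm_nonneg _) (norm_nonneg _)).1 h1
  have hRn : ∀ u, inner ℂ n (R u) = inner ℂ e u := fun u => by
    rw [← hR, R.inner_map_map]
  let M' : V →L[ℂ] V := (c : ℂ) • (R.toContinuousLinearEquiv : V →L[ℂ] V).comp D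
  have hM' : ∀ u, M' u = (c : ℂ) • R (D u) := fun u => rfl
  have hM'n : ∀ u, inner ℂ n (M' u) = c * inner ℂ e u := fun u => by
    rw [hM', inner_smul_right, hRn, hDe]
  refine ⟨M', fun u => ?_, ?_, hM'n, ?_⟩
  · rw [hM', norm_smul, R.norm_map, hDn, Complex.norm_real, Real.norm_eq_abs, abs_of_pos hc]
  · have : D e = e := by rw [hD, hee]; module
    rw [hM', this, hR]
  · intro χ hχ κ u h0
    have hcc : (c : ℂ) ≠ 0 := by exact_mod_cast hc.ne'
    have h1 := congrArg (inner ℂ n) h0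
    rw [inner_add_right, hM, hM'n, inner_sub_right, inner_zero_right] at h1
    have h2 : inner ℂ e u = (0 : ℂ) := by
      have : (c : ℂ) * inner ℂ e u = 0 := by linear_combination h1
      exact (mul_eq_zero.1 this).resolve_left hcc
    rw [h2, mul_zero, zero_smul, add_zero] at h0
    have h3 : M (u - (χ : ℂ) • u) = (1 - (χ : ℂ)) • M u := by
      rw [M.map_sub, M.map_smul, sub_smul, one_smul]
    have h4 : M' ((χ : ℂ) • u) = ((χ : ℂ) * c * ω) • R u := by
      rw [M'.map_smul, hM', hD, h2, mul_zero, zero_smul, add_zero, R.map_smul, smul_smul, smul_smul,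
        mul_assoc]
    rw [h3, h4] at h0
    rcases hχ.1.eq_or_lt with hχ0 | hχ0
    · rw [← hχ0] at h0
      simp only [Complex.ofReal_zero, sub_zero, one_smul, zero_mul, zero_smul, add_zero] at h0
      exact hMi (by rw [h0, map_zero])
    have hχc : (χ : ℂ) ≠ 0 := by exact_mod_cast hχ0.ne'
    rcases hχ.2.eq_or_lt with hχ1 | hχ1
    · rw [hχ1] at h0
      simp only [Complex.ofReal_one, sub_self, zero_smul, zero_add, one_mul] at h0
      have := (smul_eq_zero.1 h0).resolve_left (mul_ne_zero hcc hω0)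
      exact (map_eq_zero_iff R R.injective).1 this
    · by_contra hu
      refine hω2 (χ * c / (1 - χ)) (by have := sub_pos.2 hχ1; positivity) ?_
      refine Module.End.hasEigenvalue_of_hasEigenvector (x := u)
        (Module.End.hasEigenvector_iff.2 ⟨Module.End.mem_eigenspace_iff.2 ?_, hu⟩)
      have h1χ : (1 - (χ : ℂ)) ≠ 0 := by
        have : ((1 - χ : ℝ) : ℂ) ≠ 0 := by exact_mod_cast (sub_pos.2 hχ1).ne'
        simpa using this
      rw [hTapp]
      apply R.injective
      rw [R.apply_symm_apply, R.map_smul]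
      refine smul_right_injective V h1χ ?_
      simp only [smul_smul]
      rw [eq_neg_of_add_eq_zero_left h0, ← neg_smul]
      congr 1
      push_cast
      field_simp

end Frame

/-! ### Filling a ball that touches the image -/

section Fill
open Set Filter Topology ComplexConjugate

variable {V : Type*} [NormedAddCommGroup V] [InnerProductSpace ℂ V] [FiniteDimensional ℂ V]

lemma IsBallEmb.exists_radius {G : V → V} {U K : Set V} (hG : IsBallEmb G U) (hK : IsCompact K)
    (h : K ⊆ G '' ball 0 1) : ∃ t, 0 < t ∧ t < 1 ∧ K ⊆ G '' ball 0 t := by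
  have : Nonempty {t : ℝ // 0 < t ∧ t < 1} := ⟨⟨1 / 2, by norm_num⟩⟩
  obtain ⟨t, ht⟩ := hK.elim_directed_cover
    (fun t : {t : ℝ // 0 < t ∧ t < 1} => G '' ball 0 t.1)
    (fun t => hG.isOpen_image isOpen_ball (ball_subset_ball t.2.2.le))
    (fun y hy => by
      obtain ⟨x, hx, rfl⟩ := h hy
      rw [mem_ball_zero_iff] at hx
      obtain ⟨t, h1, h2⟩ := exists_between hx
      exact mem_iUnion.2 ⟨⟨t, (norm_nonneg x).trans_lt h1, h2⟩, x, mem_ball_zero_iff.2 h1, rfl⟩)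
    (fun t t' => ⟨⟨max t.1 t'.1, lt_max_of_lt_left t.2.1, max_lt t.2.2 t'.2.2⟩,
      image_mono (ball_subset_ball (le_max_left _ _)),
      image_mono (ball_subset_ball (le_max_right _ _))⟩)
  exact ⟨t.1, t.2.1, t.2.2, ht⟩

lemma IsBallEmb.continuousAt {F : V → V} {U : Set V} (h : IsBallEmb F U) {x : V}
    (hx : x ∈ ball (0 : V) 1) : ContinuousAt F x := (h.contDiffAt hx).continuousAt

lemma isPreconnected_ball' (c : V) (r : ℝ) : IsPreconnected (ball c r) :=
  (convex_ball c r).isPreconnected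

/-- The largest ball around `x0` missing `F(closedBall 0 a)` can be added, up to an arbitrarily small
shrinking, to the image of a ball embedding. -/
lemma exists_fill {F : V → V} {U : Set V} (hU : IsOpen U) (hF : IsBallEmb F U)
    {s a d d' : ℝ} (hs : 0 < s) (hsa : s < a) (ha1 : a < 1) (hd'0 : 0 < d') (hd' : d' < d)
    {x0 q : V} (hq : q ∈ closedBall (0 : V) a) (hqd : ‖x0 - F q‖ = d)
    (hmin : ∀ x ∈ closedBall (0 : V) a, d ≤ ‖x0 - F x‖) (hUd : ball x0 d ⊆ U) :
    ∃ (G : V → V) (t : ℝ), 0 < t ∧ t < 1 ∧ IsBallEmb G U ∧ F '' closedBall 0 s ⊆ G '' ball 0 t ∧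
      closedBall x0 d' ⊆ G '' ball 0 t := by
  have : ProperSpace V := FiniteDimensional.proper ℂ V
  have ha0 : 0 < a := hs.trans hsa
  have hd0 : 0 < d := hd'0.trans hd'
  have hball : ∀ x : V, x ∈ closedBall (0 : V) a → x ∈ ball (0 : V) 1 := fun x hx => by
    rw [mem_closedBall_zero_iff] at hx; rw [mem_ball_zero_iff]; linarith
  have hFq := hF.contDiffAt (hball q hq)
  have hx0 : x0 ≠ F q := fun h0 => by rw [h0, sub_self, norm_zero] at hqd; linarith
  obtain ⟨hqa, c₀, hc₀, hin⟩ := nearest_point_frame ha0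
    (hFq.differentiableAt one_ne_zero).hasFDerivAt (hF.immersion q (hball q hq)) hq hx0
    (fun x hx => by rw [hqd]; exact hmin x hx)
  set M := fderiv ℂ F q with hMdef
  have hac : (a : ℂ) ≠ 0 := by exact_mod_cast ha0.ne'
  have hdc : (d : ℂ) ≠ 0 := by exact_mod_cast hd0.ne'
  obtain ⟨e, hqe⟩ : ∃ e : V, q = (a : ℂ) • e := ⟨(a : ℂ)⁻¹ • q, by
    rw [smul_smul, mul_inv_cancel₀ hac, one_smul]⟩
  obtain ⟨n, hxn⟩ : ∃ n : V, x0 - F q = (d : ℂ) • n := ⟨(d : ℂ)⁻¹ • (x0 - F q), by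
    rw [smul_smul, mul_inv_cancel₀ hdc, one_smul]⟩
  have he : ‖e‖ = 1 := by
    rw [hqe, norm_smul, Complex.norm_real, Real.norm_eq_abs, abs_of_pos ha0] at hqa
    exact mul_left_cancel₀ ha0.ne' (hqa.trans (mul_one a).symm)
  have hn : ‖n‖ = 1 := by
    rw [hxn, norm_smul, Complex.norm_real, Real.norm_eq_abs, abs_of_pos hd0] at hqd
    exact mul_left_cancel₀ hd0.ne' (hqd.trans (mul_one d).symm)
  set c : ℝ := c₀ * a / d with hcdef
  have hc : 0 < c := by positivity
  have hcc : (c : ℂ) ≠ 0 := by exact_mod_cast hc.ne'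
  have hMn : ∀ u, inner ℂ n (M u) = c * inner ℂ e u := fun u => by
    have := hin u
    rw [hxn, hqe, inner_smul_left, inner_smul_left, Complex.conj_ofReal, Complex.conj_ofReal] at this
    rw [hcdef]
    push_cast
    field_simp
    linear_combination this
  obtain ⟨M', hM'1, hM'e, hM'n, hT⟩ := exists_conformal (hF.immersion q (hball q hq)) he hn hc hMn
  obtain ⟨s₁, hs1, hs1a⟩ := exists_between hsa
  obtain ⟨d₁, hd1, hd1d⟩ := exists_between hd'
  have hs10 : 0 < s₁ := hs.trans hs1
  have hd10 : 0 < d₁ := hd'0.trans hd1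
  set R : ℝ := d₁ / c with hRdef
  have hR0 : 0 < R := by positivity
  have hcR : c * R = d₁ := by rw [hRdef]; field_simp
  set b : ℝ := a + (d - d₁) / c with hbdef
  have hbc : (b - a) * c = d - d₁ := by rw [hbdef]; field_simp; ring
  have hab : a < b := by
    have : 0 < (d - d₁) / c := div_pos (sub_pos.2 hd1d) hc
    linarith
  let A : V → V := fun x => F ((a : ℂ) • e) + M' (x - (a : ℂ) • e)
  have hA : ∀ x, A x = F ((a : ℂ) • e) + M' (x - (a : ℂ) • e) := fun x => rfl
  have hAt : ∀ t : ℝ, A ((t : ℂ) • e) - x0 = (((t - a) * c - d : ℝ) : ℂ) • n := fun t => by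
    have h1 : x0 = F q + (d : ℂ) • n := by rw [← hxn]; abel
    rw [hA, ← sub_smul, M'.map_smul, hM'e, h1, ← hqe]
    push_cast
    module
  have hAx0 : A (((b + R : ℝ) : ℂ) • e) = x0 := by
    rw [← sub_eq_zero, hAt]
    have : (b + R - a) * c - d = 0 := by linarith
    rw [this]; simp
  have hAn : ∀ x y, ‖A x - A y‖ = c * ‖x - y‖ := fun x y => by
    rw [hA, hA, add_sub_add_left_eq_sub, ← map_sub, hM'1, sub_sub_sub_cancel_right]
  have hin_ball : ∀ z, ‖z - x0‖ < d → z ∈ U \ F '' closedBall 0 a := fun z hz => by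
    refine ⟨hUd (by rwa [mem_ball, dist_eq_norm]), ?_⟩
    rintro ⟨x, hx, rfl⟩
    have := hmin x hx
    rw [norm_sub_rev] at this
    linarith
  have hA1 : ∀ t ∈ Ioc a b, A ((t : ℂ) • e) ∈ U \ F '' closedBall 0 a := fun t ht => by
    refine hin_ball _ ?_
    rw [hAt, norm_smul, hn, mul_one, Complex.norm_real, Real.norm_eq_abs, abs_lt]
    have h1 : 0 < (t - a) * c := mul_pos (sub_pos.2 ht.1) hc
    have h2 : (t - a) * c ≤ (b - a) * c := by have := ht.2; gcongr
    constructor <;> linarith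
  have hA2 : ∀ x ∈ closedBall (((b + R : ℝ) : ℂ) • e) R, A x ∈ U \ F '' closedBall 0 a := by
    intro x hx
    refine hin_ball _ ?_
    rw [mem_closedBall, dist_eq_norm] at hx
    rw [← hAx0, hAn]
    have : c * ‖x - ((b + R : ℝ) : ℂ) • e‖ ≤ c * R := by gcongr
    linarith
  -- the shrinking factor `r` and the intermediate radii
  obtain ⟨r, hr, hr1⟩ : ∃ r, max (s / s₁) (d' / d₁) < r ∧ r < 1 :=
    exists_between (max_lt ((div_lt_one hs10).2 hs1) ((div_lt_one hd10).2 hd1))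
  have hr0 : 0 < r := lt_of_le_of_lt (le_max_of_le_left (by positivity)) hr
  have hrs : s < s₁ * r := by
    have := (le_max_left _ _).trans_lt hr
    rw [div_lt_iff₀ hs10] at this; linarith
  have hrd : d' < d₁ * r := by
    have := (le_max_right _ _).trans_lt hr
    rw [div_lt_iff₀ hd10] at this; linarith
  obtain ⟨s₂, hs2, hs2r⟩ := exists_between hrs
  obtain ⟨d₂, hd2, hd2r⟩ := exists_between hrd
  have hs1r : s₁ * r < s₁ := by nlinarith
  have hRr : R * r < R := by nlinarith
  obtain ⟨c₁, hc₁, C₁, -, hbil⟩ := exists_bilipschitz (F := F) (isCompact_closedBall (0 : V) a)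
    (fun x hx => hF.contDiffAt (hball x hx)) (fun x hx y hy => hF.inj (hball x hx) (hball y hy))
    (fun x hx => hF.immersion x (hball x hx))
  have hopen0 : IsOpen (F '' ball 0 s₂) :=
    hF.isOpen_image isOpen_ball (ball_subset_ball (by linarith))
  obtain ⟨ε₀, hε₀, hε⟩ := Metric.isOpen_iff.1 hopen0 (F 0) ⟨0, mem_ball_self (by linarith), rfl⟩
  set η := min ε₀ (min (c₁ * (s₁ * r - s₂)) (min d₂ (d₁ * r - d₂))) with hη
  have hη0 : 0 < η := by
    refine lt_min hε₀ (lt_min (mul_pos hc₁ (by linarith)) (lt_min (by linarith) (by linarith)))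
  have hη1 : η ≤ ε₀ := min_le_left _ _
  have hη2 : η ≤ c₁ * (s₁ * r - s₂) := (min_le_right _ _).trans (min_le_left _ _)
  have hη3 : η ≤ d₂ := ((min_le_right _ _).trans (min_le_right _ _)).trans (min_le_left _ _)
  have hη4 : η ≤ d₁ * r - d₂ := ((min_le_right _ _).trans (min_le_right _ _)).trans (min_le_right _ _)
  obtain ⟨H, hH1, hH2, hH3, hH4, hHF, hHA⟩ := exists_glued (s := s₁) (R := R) hU hF he hn hs10 hs1a ha1
    hab hc (by rw [← hqe]) hMn hM'n hT hA hA1 hA2 hη0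
  obtain ⟨N, hNo, hKN, hN1, hN2, hN3, hN4⟩ := exists_nhd_embedding (isCompact_skeleton e s₁ b R) hU
    hH1 hH2 hH3 hH4
  have hKN1 : closedBall 0 s₁ ⊆ N := fun x hx => hKN (Or.inl hx)
  have hKN2 : ∀ t ∈ Icc s₁ b, (t : ℂ) • e ∈ N := fun t ht => hKN (Or.inr (Or.inl ⟨t, ht, rfl⟩))
  have hKN3 : closedBall (((b + R : ℝ) : ℂ) • e) R ⊆ N := fun x hx => hKN (Or.inr (Or.inr hx))
  obtain ⟨Φ, hΦ, hΦ1, hΦ2⟩ := exists_dumbbell' he hs10 (hs1a.trans hab) hR0 hr0 hr1 hNo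
    hKN1 hKN2 hKN3
  have hG : IsBallEmb (H ∘ Φ) U := hΦ.comp_left hN1 hN2 hN3 hN4
  have hopen : ∀ S ⊆ N, IsOpen S → IsOpen (H '' S) := fun S hS hSo =>
    isOpen_image_of_immersion hSo (fun x hx => hN1 x (hS hx)) (fun x hx => hN3 x (hS hx))
  have hcont : ∀ S ⊆ N, ContinuousOn H S := fun S hS x hx =>
    (hN1 x (hS hx)).continuousAt.continuousWithinAt
  have hsub1 : closedBall (0 : V) (s₁ * r) ⊆ N := (closedBall_subset_closedBall hs1r.le).trans hKN1
  have hsub2 : closedBall (((b + R : ℝ) : ℂ) • e) (R * r) ⊆ N :=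
    (closedBall_subset_closedBall hRr.le).trans hKN3
  have hcov1 : F '' ball 0 s₂ ⊆ H '' ball 0 (s₁ * r) := by
    refine subset_image_of_close (F := F) (η := η) ((isPreconnected_ball' 0 s₂).image F fun x hx =>
      (hF.continuousAt (ball_subset_ball (by linarith) hx)).continuousWithinAt)
      (hcont _ hsub1) (hopen _ (ball_subset_closedBall.trans hsub1) isOpen_ball)
      (fun x hx => hHF x (closedBall_subset_closedBall hs1r.le hx)) ?_ ?_
    · rintro x hx _ ⟨y, hy, rfl⟩
      rw [mem_sphere_zero_iff_norm] at hx
      rw [mem_ball_zero_iff] at hy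
      have h1 := (hbil x (mem_closedBall_zero_iff.2 (by linarith)) y
        (mem_closedBall_zero_iff.2 (by linarith))).1
      have h2 := norm_sub_norm_le x y
      have h3 : c₁ * (s₁ * r - s₂) ≤ c₁ * ‖x - y‖ := by gcongr; linarith
      linarith
    · refine ⟨H 0, hε ?_, 0, mem_ball_self (by positivity), rfl⟩
      rw [mem_ball, dist_eq_norm]
      exact (hHF 0 (mem_closedBall_self hs10.le)).trans_le hη1
  have hcov2 : ball x0 d₂ ⊆ H '' ball (((b + R : ℝ) : ℂ) • e) (R * r) := by
    refine subset_image_of_close (F := A) (η := η) (isPreconnected_ball' x0 d₂)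
      (hcont _ hsub2) (hopen _ (ball_subset_closedBall.trans hsub2) isOpen_ball)
      (fun x hx => hHA x (closedBall_subset_closedBall hRr.le hx)) ?_ ?_
    · intro x hx y hy
      rw [mem_sphere, dist_eq_norm] at hx
      rw [mem_ball, dist_eq_norm] at hy
      have h1 : ‖A x - x0‖ = d₁ * r := by
        rw [← hAx0, hAn, hx, ← mul_assoc, hcR]
      have h2 := norm_sub_le_norm_sub_add_norm_sub (A x) y x0
      linarith
    · refine ⟨H (((b + R : ℝ) : ℂ) • e), ?_, _, mem_ball_self (by positivity), rfl⟩
      have := hHA _ (mem_closedBall_self (x := ((b + R : ℝ) : ℂ) • e) hR0.le)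
      rw [hAx0] at this
      rw [mem_ball, dist_eq_norm]
      exact this.trans_le hη3
  have hcov : F '' closedBall 0 s ∪ closedBall x0 d' ⊆ (H ∘ Φ) '' ball 0 1 := by
    rw [image_comp]
    refine union_subset ?_ ?_
    · refine (image_mono (closedBall_subset_ball hs2)).trans (hcov1.trans (image_mono ?_))
      exact ball_subset_closedBall.trans hΦ1
    · refine (closedBall_subset_ball hd2).trans (hcov2.trans (image_mono ?_))
      exact ball_subset_closedBall.trans hΦ2
  have hcomp : IsCompact (F '' closedBall 0 s ∪ closedBall x0 d') := by
    refine ((isCompact_closedBall _ _).image_of_continuousOn fun x hx => ?_).union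
      (isCompact_closedBall _ _)
    exact (hF.continuousAt (hball x (closedBall_subset_closedBall hsa.le hx))).continuousWithinAt
  obtain ⟨t, ht0, ht1, ht⟩ := hG.exists_radius hcomp hcov
  exact ⟨_, t, ht0, ht1, hG, subset_union_left.trans ht, subset_union_right.trans ht⟩

end Fill

/-! ### Reaching points and absorbing disjoint balls -/

section Joining
open Set Filter Topology ComplexConjugate

variable {V : Type*} [NormedAddCommGroup V] [InnerProductSpace ℂ V] [FiniteDimensional ℂ V]

lemma IsBallEmb.mono {F : V → V} {U U' : Set V} (h : IsBallEmb F U) (hUU : U ⊆ U') :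
    IsBallEmb F U' :=
  ⟨h.contDiff, h.inj, h.immersion, h.mapsTo.mono_right hUU⟩

lemma isBallEmb_affine (w : V) {ρ : ℝ} (hρ : 0 < ρ) :
    IsBallEmb (fun u : V => w + (ρ : ℂ) • u) (ball w ρ) := by
  have hc : (ρ : ℂ) ≠ 0 := by exact_mod_cast hρ.ne'
  refine ⟨by fun_prop, (affine_injective hc w).injOn,
    fun x _ => fderiv_affine_injective hc w x, fun u hu => ?_⟩
  rw [mem_ball_zero_iff] at hu
  rw [mem_ball_iff_norm, add_sub_cancel_left, norm_smul, Complex.norm_real, Real.norm_of_nonneg hρ.le]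
  nlinarith

/-- If the image of a smaller closed ball already lies in an open set `U'`, precomposing with a
dilation yields an embedding into `U'` that has the same set as image of a closed ball. -/
lemma IsBallEmb.restrict {F : V → V} {U U' : Set V} (hF : IsBallEmb F U) (hU' : IsOpen U')
    {s : ℝ} (hs : 0 < s) (hs1 : s < 1) (h : F '' closedBall 0 s ⊆ U') :
    ∃ G t, 0 < t ∧ t < 1 ∧ IsBallEmb G U' ∧ G '' closedBall 0 t = F '' closedBall 0 s := by
  have hO : IsOpen (ball (0 : V) 1 ∩ F ⁻¹' U') :=
    hF.contDiff.continuousOn.isOpen_inter_preimage isOpen_ball hU'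
  obtain ⟨δ, hδ, hsub⟩ := (isCompact_closedBall (0 : V) s).exists_thickening_subset_open hO
    (fun x hx => ⟨closedBall_subset_ball hs1 hx, h (mem_image_of_mem F hx)⟩)
  rw [thickening_closedBall hδ hs.le] at hsub
  have ha : 0 < δ + s := by linarith
  have hΦ := isBallEmb_affine (0 : V) ha
  have hc : ((δ + s : ℝ) : ℂ) ≠ 0 := by exact_mod_cast ha.ne'
  refine ⟨F ∘ fun u : V => 0 + ((δ + s : ℝ) : ℂ) • u, s / (δ + s), by positivity, ?_, ?_, ?_⟩
  · rw [div_lt_one ha]; linarith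
  · exact hΦ.comp_left (fun x hx => hF.contDiffAt (hsub hx).1)
      (hF.inj.mono fun x hx => (hsub hx).1) (fun x hx => hF.immersion x (hsub hx).1)
      (fun x hx => (hsub hx).2)
  apply Subset.antisymm
  · rintro _ ⟨x, hx, rfl⟩
    refine ⟨_, ?_, rfl⟩
    rw [mem_closedBall_zero_iff] at hx ⊢
    beta_reduce
    rw [zero_add, norm_smul, Complex.norm_real, Real.norm_of_nonneg ha.le]
    rw [le_div_iff₀ ha] at hx
    linarith
  · rintro _ ⟨x, hx, rfl⟩
    refine ⟨((δ + s : ℝ) : ℂ)⁻¹ • x, ?_, ?_⟩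
    · rw [mem_closedBall_zero_iff] at hx ⊢
      rw [norm_smul, norm_inv, Complex.norm_real, Real.norm_of_nonneg ha.le, div_eq_inv_mul]
      gcongr
    · simp only [Function.comp_apply, zero_add]
      rw [smul_inv_smul₀ hc]

lemma one_lt_rank_real [Nontrivial V] : 1 < Module.rank ℝ V := by
  have h1 : Module.finrank ℝ V = 2 * Module.finrank ℂ V := by
    rw [← Module.finrank_mul_finrank ℝ ℂ V, Complex.finrank_real_complex]
  have h2 : 0 < Module.finrank ℂ V := Module.finrank_pos
  have : FiniteDimensional ℝ V := FiniteDimensional.complexToReal V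
  rw [← Module.finrank_eq_rank]
  have : 1 < Module.finrank ℝ V := by omega
  exact_mod_cast this

lemma isPreconnected_shell [Nontrivial V] (x : V) {r R : ℝ} (hr : 0 < r) :
    IsPreconnected (ball x R \ closedBall x r) := by
  have h1 : IsPreconnected (sphere (0 : V) 1 ×ˢ Ioo r R) :=
    (isPreconnected_sphere one_lt_rank_real 0 1).prod isPreconnected_Ioo
  have h2 := h1.image (fun p : V × ℝ => x + ((p.2 : ℝ) : ℂ) • p.1) (by fun_prop)
  convert h2 using 1
  ext y
  constructor
  · rintro ⟨hy, hy'⟩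
    rw [mem_ball_iff_norm] at hy
    rw [mem_closedBall_iff_norm, not_le] at hy'
    have hpos : 0 < ‖y - x‖ := hr.trans hy'
    have hc : ((‖y - x‖ : ℝ) : ℂ) ≠ 0 := by exact_mod_cast hpos.ne'
    refine ⟨(((‖y - x‖ : ℝ) : ℂ)⁻¹ • (y - x), ‖y - x‖), ⟨?_, hy', hy⟩, ?_⟩
    · rw [mem_sphere_zero_iff_norm, norm_smul, norm_inv, Complex.norm_real, norm_norm,
        inv_mul_cancel₀ hpos.ne']
    · simp only
      rw [smul_inv_smul₀ hc, add_sub_cancel]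
  · rintro ⟨⟨e, t⟩, ⟨he, ht⟩, rfl⟩
    have he : ‖e‖ = 1 := by simpa using he
    have ht : r < t ∧ t < R := ht
    have ht0 : 0 ≤ t := by linarith
    refine ⟨?_, ?_⟩
    · rw [mem_ball_iff_norm, add_sub_cancel_left, norm_smul, Complex.norm_real,
        Real.norm_of_nonneg ht0, he, mul_one]
      exact ht.2
    · rw [mem_closedBall_iff_norm, add_sub_cancel_left, norm_smul, Complex.norm_real,
        Real.norm_of_nonneg ht0, he, mul_one, not_le]
      exact ht.1

/-- Removing a closed ball from a connected open set of complex dimension at least one does not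
disconnect it: a separation of the complement would extend over the ball, since the surrounding
shell is connected. -/
lemma isPreconnected_diff_closedBall [Nontrivial V] {U : Set V} (hU : IsOpen U)
    (hc : IsPreconnected U) {x : V} {r R : ℝ} (hr : 0 < r) (hrR : r < R) (hR : ball x R ⊆ U) :
    IsPreconnected (U \ closedBall x r) := by
  have hU' : IsOpen (U \ closedBall x r) := hU.sdiff isClosed_closedBall
  have hxU : x ∈ ball x R := mem_ball_self (hr.trans hrR)
  -- the case distinction on which of the two open sets contains the shell is symmetric
  have key : ∀ u v : Set V, IsOpen u → IsOpen v → U \ closedBall x r ⊆ u ∪ v →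
      (U \ closedBall x r) ∩ (u ∩ v) = ∅ → ball x R \ closedBall x r ⊆ u →
      U \ closedBall x r ⊆ u := by
    intro u v hu hv hcov hdis hS
    have hd : Disjoint ((u ∩ (U \ closedBall x r)) ∪ ball x R) (v ∩ (U \ closedBall x r)) := by
      rw [Set.disjoint_left]
      rintro y (⟨hyu, hyU⟩ | hyB) ⟨hyv, hyU'⟩
      · exact (hdis ▸ (⟨hyU, hyu, hyv⟩ : y ∈ (U \ closedBall x r) ∩ (u ∩ v)) : y ∈ (∅ : Set V))
      · exact (hdis ▸ (⟨hyU', hS ⟨hyB, hyU'.2⟩, hyv⟩ :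
          y ∈ (U \ closedBall x r) ∩ (u ∩ v)) : y ∈ (∅ : Set V))
    have hsub := hc.subset_left_of_subset_union ((hu.inter hU').union isOpen_ball)
      (hv.inter hU') hd (fun y hy => ?_) ⟨x, hR hxU, Or.inr hxU⟩
    · intro y hy
      rcases hsub hy.1 with h | h
      · exact h.1
      · exact hS ⟨h, hy.2⟩
    · by_cases hyr : y ∈ closedBall x r
      · exact Or.inl (Or.inr (closedBall_subset_ball hrR hyr))
      · rcases hcov ⟨hy, hyr⟩ with h | h
        · exact Or.inl (Or.inl ⟨h, hy, hyr⟩)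
        · exact Or.inr ⟨h, hy, hyr⟩
  rw [isPreconnected_iff_subset_of_disjoint]
  intro u v hu hv hcov hdis
  have hSU : ball x R \ closedBall x r ⊆ U \ closedBall x r := sdiff_subset_sdiff_left hR
  have := (isPreconnected_iff_subset_of_disjoint.1 (isPreconnected_shell x hr (R := R))) u v hu hv
    (hSU.trans hcov) (subset_empty_iff.1 ((inter_subset_inter_left _ hSU).trans hdis.subset))
  rcases this with h | h
  · exact Or.inl (key u v hu hv hcov hdis h)
  · exact Or.inr (key v u hv hu (by rwa [union_comm]) (by rwa [inter_comm v u]) h)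

/-- The image of the ball can be enlarged so as to contain any prescribed point: the set of
points so reached is open, and by `exists_fill` it is relatively closed. -/
lemma exists_reach {U : Set V} (hU : IsOpen U) (hc : IsPreconnected U) {F : V → V}
    (hF : IsBallEmb F U) {s : ℝ} (hs : 0 < s) (hs1 : s < 1) {p : V} (hp : p ∈ U) :
    ∃ G t, 0 < t ∧ t < 1 ∧ IsBallEmb G U ∧ F '' closedBall 0 s ⊆ G '' ball 0 t ∧
      p ∈ G '' ball 0 t := by
  let O : Set V := {y | ∃ G t, 0 < t ∧ t < 1 ∧ IsBallEmb G U ∧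
    F '' closedBall 0 s ⊆ G '' ball 0 t ∧ y ∈ G '' ball 0 t}
  have hO : IsOpen O := by
    rw [isOpen_iff_mem_nhds]
    rintro y ⟨G, t, ht, ht1, hG, hK, hy⟩
    have : IsOpen (G '' ball 0 t) := hG.isOpen_image isOpen_ball (ball_subset_ball ht1.le)
    exact mem_of_superset (this.mem_nhds hy) fun z hz => ⟨G, t, ht, ht1, hG, hK, hz⟩
  have h0 : F 0 ∈ O := by
    refine ⟨F, (s + 1) / 2, by linarith, by linarith, hF, ?_, ?_⟩
    · exact image_mono (closedBall_subset_ball (by linarith))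
    · exact mem_image_of_mem F (mem_ball_self (by linarith))
  have hne : (U ∩ O).Nonempty := ⟨F 0, hF.mapsTo (mem_ball_self one_pos), h0⟩
  have hcl : closure O ∩ U ⊆ O := by
    rintro y ⟨hy, hyU⟩
    by_contra hyO
    obtain ⟨ε, hε, hεU⟩ := Metric.isOpen_iff.1 hU y hyU
    obtain ⟨z, ⟨G, t, ht, ht1, hG, hK, w, hw, rfl⟩, hz⟩ := Metric.mem_closure_iff.1 hy ε hε
    set a := (t + 1) / 2 with ha
    have hta : t < a := by linarith
    have ha1 : a < 1 := by linarith
    have hcont : ContinuousOn (fun x => ‖y - G x‖) (closedBall 0 a) :=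
      (continuousOn_const.sub (hG.contDiff.continuousOn.mono (closedBall_subset_ball ha1))).norm
    have hwa : w ∈ closedBall (0 : V) a := ball_subset_closedBall (ball_subset_ball hta.le hw)
    obtain ⟨q, hq, hmin⟩ := (isCompact_closedBall (0 : V) a).exists_isMinOn ⟨w, hwa⟩ hcont
    have hmin' : ∀ x ∈ closedBall (0 : V) a, ‖y - G q‖ ≤ ‖y - G x‖ := fun x hx => hmin hx
    have hd0 : 0 < ‖y - G q‖ := by
      rw [norm_pos_iff, sub_ne_zero]
      rintro rfl
      refine hyO ⟨G, (a + 1) / 2, by linarith, by linarith, hG, ?_, ?_⟩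
      · exact hK.trans (image_mono (ball_subset_ball (by linarith)))
      · exact mem_image_of_mem G (closedBall_subset_ball (by linarith) hq)
    have hdε : ‖y - G q‖ < ε := (hmin' w hwa).trans_lt (by rwa [← dist_eq_norm])
    obtain ⟨G', t', ht', ht1', hG', hK', hy'⟩ := exists_fill hU hG ht hta ha1 (half_pos hd0)
      (half_lt_self hd0) hq rfl hmin' ((ball_subset_ball hdε.le).trans hεU)
    refine hyO ⟨G', t', ht', ht1', hG', ?_, hy' (mem_closedBall_self (half_pos hd0).le)⟩
    exact (hK.trans (image_mono ball_subset_closedBall)).trans hK'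
  exact hc.subset_of_closure_inter_subset hO hne hcl hp

lemma exists_unit_vector [Nontrivial V] : ∃ e : V, ‖e‖ = 1 :=
  exists_norm_eq V zero_le_one

/-- Finitely many disjoint closed balls in `U` can be absorbed by the image. One ball is set aside
in a slightly larger closed ball, the others are absorbed within the complement of the latter,
which is still connected, then the image is brought near the ball set aside and fills it. -/
lemma exists_absorb [Nontrivial V] (r : V → ℝ) (T : Finset V) :
    ∀ {U : Set V}, IsOpen U → IsPreconnected U → ∀ {F : V → V}, IsBallEmb F U → ∀ {s : ℝ},
      0 < s → s < 1 → (∀ x ∈ T, 0 < r x) → (∀ x ∈ T, closedBall x (r x) ⊆ U) →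
      (∀ x ∈ T, Disjoint (closedBall x (r x)) (F '' closedBall 0 s)) →
      ((T : Set V).PairwiseDisjoint fun x => closedBall x (r x)) →
      ∃ G t, 0 < t ∧ t < 1 ∧ IsBallEmb G U ∧ F '' closedBall 0 s ⊆ G '' ball 0 t ∧
        ∀ x ∈ T, closedBall x (r x) ⊆ G '' ball 0 t := by
  classical
  induction T using Finset.induction_on with
  | empty =>
    intro U hU hc F hF s hs hs1 _ _ _ _
    exact ⟨F, (s + 1) / 2, by linarith, by linarith, hF,
      image_mono (closedBall_subset_ball (by linarith)), by simp⟩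
  | insert b T hb ih =>
    intro U hU hc F hF s hs hs1 hr hsub hdK hdis
    have hKc : IsCompact (F '' closedBall 0 s) := (isCompact_closedBall 0 s).image_of_continuousOn
      (hF.contDiff.continuousOn.mono (closedBall_subset_ball hs1))
    -- the part of the data which the enlarged ball around `b` has to avoid
    set C : Set V := F '' closedBall 0 s ∪ ⋃ x ∈ T, closedBall x (r x) with hC
    have hCcl : IsClosed C := hKc.isClosed.union
      (T.finite_toSet.isClosed_biUnion fun x _ => isClosed_closedBall)
    have hrb : 0 < r b := hr b (Finset.mem_insert_self b T)
    have hbC : closedBall b (r b) ⊆ U ∩ Cᶜ := by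
      intro y hy
      refine ⟨hsub b (Finset.mem_insert_self b T) hy, ?_⟩
      rintro (hyK | hyT)
      · exact Set.disjoint_left.1 (hdK b (Finset.mem_insert_self b T)) hy hyK
      · obtain ⟨x, hx, hyx⟩ := mem_iUnion₂.1 hyT
        exact Set.disjoint_left.1 (hdis (x := b) (y := x) (by simp) (by simp [hx])
          (fun h => hb (by rwa [h]))) hy hyx
    obtain ⟨δ, hδ, hδs⟩ := (isCompact_closedBall b (r b)).exists_thickening_subset_open
      (hU.inter hCcl.isOpen_compl) hbC
    rw [thickening_closedBall hδ hrb.le] at hδs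
    set r1 := δ + r b with hr1
    set r2 := δ / 2 + r b with hr2
    have h2 : 0 < r2 := by positivity
    have h21 : r2 < r1 := by linarith
    have hBU : ball b r1 ⊆ U := hδs.trans inter_subset_left
    set U' := U \ closedBall b r2 with hU'
    have hUo : IsOpen U' := hU.sdiff isClosed_closedBall
    have hUc : IsPreconnected U' := isPreconnected_diff_closedBall hU hc h2 h21 hBU
    have hav : ∀ y ∈ C, y ∉ closedBall b r2 := fun y hy hyb =>
      (hδs (closedBall_subset_ball h21 hyb)).2 hy
    have hFU : F '' closedBall 0 s ⊆ U' := by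
      intro y hy
      refine ⟨?_, hav y (Or.inl hy)⟩
      obtain ⟨x, hx, rfl⟩ := hy
      exact hF.mapsTo (closedBall_subset_ball hs1 hx)
    obtain ⟨F₁, s₁, hs₁, hs₁1, hF₁, hF₁s⟩ := hF.restrict hUo hs hs1 hFU
    obtain ⟨G, t, ht, ht1, hG, hKG, hTG⟩ := ih hUo hUc hF₁ hs₁ hs₁1
      (fun x hx => hr x (Finset.mem_insert_of_mem hx))
      (fun x hx y hy => ⟨hsub x (Finset.mem_insert_of_mem hx) hy,
        hav y (Or.inr (mem_iUnion₂.2 ⟨x, hx, hy⟩))⟩)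
      (fun x hx => by rw [hF₁s]; exact hdK x (Finset.mem_insert_of_mem hx))
      (hdis.subset (by simp))
    rw [hF₁s] at hKG
    -- a point of the shell between the radii `r2` and `r1`
    obtain ⟨e, he⟩ := exists_unit_vector (V := V)
    set ρ := (r1 + r2) / 2 with hρ
    have hρ0 : 0 ≤ ρ := by linarith
    have hnp : ‖(b + (ρ : ℂ) • e) - b‖ = ρ := by
      rw [add_sub_cancel_left, norm_smul, Complex.norm_real, Real.norm_of_nonneg hρ0, he, mul_one]
    have hpU : b + (ρ : ℂ) • e ∈ U' := by
      refine ⟨hBU ?_, ?_⟩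
      · rw [mem_ball_iff_norm, hnp]; linarith
      · rw [mem_closedBall_iff_norm, hnp]; linarith
    obtain ⟨H, t', ht', ht1', hH, hGH, w, hw, hwp⟩ := exists_reach hUo hUc hG ht ht1 hpU
    set a := (t' + 1) / 2 with ha
    have hta : t' < a := by linarith
    have ha1 : a < 1 := by linarith
    have hcont : ContinuousOn (fun x => ‖b - H x‖) (closedBall 0 a) :=
      (continuousOn_const.sub (hH.contDiff.continuousOn.mono (closedBall_subset_ball ha1))).norm
    have hwa : w ∈ closedBall (0 : V) a := ball_subset_closedBall (ball_subset_ball hta.le hw)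
    obtain ⟨q, hq, hmin⟩ := (isCompact_closedBall (0 : V) a).exists_isMinOn ⟨w, hwa⟩ hcont
    have hmin' : ∀ x ∈ closedBall (0 : V) a, ‖b - H q‖ ≤ ‖b - H x‖ := fun x hx => hmin hx
    have hlo : r2 < ‖b - H q‖ := by
      have := (hH.mapsTo (closedBall_subset_ball ha1 hq)).2
      rwa [mem_closedBall_iff_norm', not_le] at this
    have hhi : ‖b - H q‖ < r1 := by
      have := hmin' w hwa
      rw [hwp, norm_sub_rev, norm_sub_rev b, hnp] at this
      rw [norm_sub_rev]
      linarith
    obtain ⟨L, l, hl, hl1, hL, hHL, hbL⟩ := exists_fill hU (hH.mono sdiff_subset) ht' hta ha1 hrb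
      (show r b < ‖b - H q‖ by linarith) hq rfl hmin' ((ball_subset_ball hhi.le).trans hBU)
    have hGL : G '' ball 0 t ⊆ L '' ball 0 l :=
      (image_mono ball_subset_closedBall).trans
        (hGH.trans ((image_mono ball_subset_closedBall).trans hHL))
    refine ⟨L, l, hl, hl1, hL, hKG.trans hGL, fun x hx => ?_⟩
    rcases Finset.mem_insert.1 hx with rfl | hx
    · exact hbL
    · exact (hTG x hx).trans hGL

end Joining

/-! ### Exhaustion in measure -/

section Volume
open Set Filter Topology ComplexConjugate
open scoped ENNReal

variable {V : Type*} [NormedAddCommGroup V] [InnerProductSpace ℂ V] [FiniteDimensional ℂ V]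
  [MeasurableSpace V] [BorelSpace V]

/-- The image can be enlarged so as to have almost full measure: by the Besicovitch covering
theorem, finitely many disjoint closed balls fill the complement of the old image up to `ε`. -/
lemma exists_almost_full [Nontrivial V] (μ : Measure V) [SFinite μ] {U : Set V} (hU : IsOpen U)
    (hc : IsPreconnected U) (hfin : μ U ≠ ∞) {F : V → V} (hF : IsBallEmb F U) {s : ℝ}
    (hs : 0 < s) (hs1 : s < 1) {ε : ℝ≥0∞} (hε : ε ≠ 0) :
    ∃ G t, 0 < t ∧ t < 1 ∧ IsBallEmb G U ∧ F '' closedBall 0 s ⊆ G '' ball 0 t ∧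
      μ U ≤ μ (G '' ball 0 t) + ε := by
  have : FiniteDimensional ℝ V := FiniteDimensional.complexToReal V
  set K := F '' closedBall 0 s with hK
  have hKc : IsCompact K := (isCompact_closedBall 0 s).image_of_continuousOn
    (hF.contDiff.continuousOn.mono (closedBall_subset_ball hs1))
  have hO : IsOpen (U \ K) := hU.sdiff hKc.isClosed
  obtain ⟨T, r, hTc, hTs, hr, h0, hdis⟩ := Besicovitch.exists_disjoint_closedBall_covering_ae μ
    (fun x => {ρ | closedBall x ρ ⊆ U \ K}) (U \ K) (fun x hx δ hδ => by
      obtain ⟨η, hη, hη'⟩ := Metric.isOpen_iff.1 hO x hx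
      refine ⟨min η δ / 2, (closedBall_subset_ball ?_).trans hη', by positivity, ?_⟩
      · have := min_le_left η δ
        have := lt_min hη hδ
        linarith
      · have := min_le_right η δ
        have := lt_min hη hδ
        linarith)
    (fun _ => 1) (fun _ _ => one_pos)
  have hle : μ (U \ K) ≤ ∑' x : T, μ (closedBall x.1 (r x)) := by
    have : Countable T := hTc
    rw [← measure_biUnion hTc hdis (fun x _ => measurableSet_closedBall)]
    calc μ (U \ K) ≤ μ ((U \ K) \ (⋃ x ∈ T, closedBall x (r x)) ∪ ⋃ x ∈ T, closedBall x (r x)) :=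
          measure_mono (by rw [sdiff_union_self]; exact subset_union_left)
      _ ≤ _ := (measure_union_le _ _).trans (by rw [h0, zero_add])
  obtain ⟨A, hA⟩ : ∃ A : Finset T, μ (U \ K) ≤ ∑ x ∈ A, μ (closedBall x.1 (r x)) + ε := by
    have hUK : μ (U \ K) ≠ ∞ := measure_ne_top_of_subset sdiff_subset hfin
    by_cases hz : μ (U \ K) = 0
    · exact ⟨∅, by simp [hz]⟩
    have hlt : μ (U \ K) - ε < ∑' x : T, μ (closedBall x.1 (r x)) :=
      (ENNReal.sub_lt_self hUK hz hε).trans_le hle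
    rw [ENNReal.tsum_eq_iSup_sum] at hlt
    obtain ⟨A, hA⟩ := lt_iSup_iff.1 hlt
    exact ⟨A, tsub_le_iff_right.1 hA.le⟩
  classical
  set B : Finset V := A.map (Function.Embedding.subtype _) with hB
  have hBT : ∀ x ∈ B, x ∈ T := by
    intro x hx
    obtain ⟨y, _, rfl⟩ := Finset.mem_map.1 hx
    exact y.2
  have hdisB : (B : Set V).PairwiseDisjoint fun x => closedBall x (r x) := hdis.subset hBT
  have hball : ∀ x ∈ B, closedBall x (r x) ⊆ U \ K := fun x hx => (hr x (hBT x hx)).1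
  obtain ⟨G, t, ht, ht1, hG, hKG, hBG⟩ := exists_absorb r B hU hc hF hs hs1
    (fun x hx => (hr x (hBT x hx)).2.1) (fun x hx => (hball x hx).trans sdiff_subset)
    (fun x hx => disjoint_sdiff_left.mono_left (hball x hx)) hdisB
  refine ⟨G, t, ht, ht1, hG, hKG, ?_⟩
  have hsum : ∑ x ∈ A, μ (closedBall x.1 (r x)) = μ (⋃ x ∈ B, closedBall x (r x)) := by
    rw [measure_biUnion_finset hdisB (fun x _ => measurableSet_closedBall), hB, Finset.sum_map]
    rfl
  have hdK : Disjoint K (⋃ x ∈ B, closedBall x (r x)) := by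
    rw [Set.disjoint_iUnion₂_right]
    exact fun x hx => disjoint_sdiff_right.mono_right (hball x hx)
  calc μ U ≤ μ (K ∪ U \ K) := measure_mono (by rw [union_sdiff_self]; exact subset_union_right)
    _ ≤ μ K + μ (U \ K) := measure_union_le _ _
    _ ≤ μ K + (μ (⋃ x ∈ B, closedBall x (r x)) + ε) := by rw [← hsum]; gcongr
    _ = μ (K ∪ ⋃ x ∈ B, closedBall x (r x)) + ε := by
        rw [measure_union' hdK hKc.measurableSet, add_assoc]
    _ ≤ μ (G '' ball 0 t) + ε := by
        gcongr
        exact union_subset hKG (iUnion₂_subset hBG)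

/-- An embedding of the unit ball into `U` together with a radius in `(0, 1)`. -/
structure BallStage (U : Set V) where
  map : V → V
  radius : ℝ
  radius_pos : 0 < radius
  radius_lt_one : radius < 1
  isBallEmb : IsBallEmb map U

lemma BallStage.exists_next [Nontrivial V] (μ : Measure V) [SFinite μ] {U : Set V} (hU : IsOpen U)
    (hc : IsPreconnected U) (hfin : μ U ≠ ∞) (S : BallStage U) (n : ℕ) :
    ∃ S' : BallStage U, S.map '' ball 0 S.radius ⊆ S'.map '' ball 0 S'.radius ∧
      μ U ≤ μ (S'.map '' ball 0 S'.radius) + ((n : ℝ≥0∞) + 1)⁻¹ := by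
  obtain ⟨G, t, ht, ht1, hG, hKG, hμ⟩ := exists_almost_full μ hU hc hfin S.isBallEmb S.radius_pos
    S.radius_lt_one (ε := ((n : ℝ≥0∞) + 1)⁻¹)
    (ENNReal.inv_ne_zero.2 (by finiteness))
  exact ⟨⟨G, t, ht, ht1, hG⟩, (image_mono ball_subset_closedBall).trans hKG, hμ⟩

theorem exists_ballStage_seq [Nontrivial V] (μ : Measure V) [SFinite μ] {U : Set V} (hU : IsOpen U)
    (hc : IsConnected U) (hfin : μ U ≠ ∞) :
    ∃ S : ℕ → BallStage U,
      (∀ j, (S j).map '' ball 0 (S j).radius ⊆ (S (j + 1)).map '' ball 0 (S (j + 1)).radius) ∧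
      Tendsto (fun j => (μ ((S j).map '' ball 0 (S j).radius)).toReal) atTop (𝓝 (μ U).toReal) := by
  obtain ⟨w, hw⟩ := hc.nonempty
  obtain ⟨ρ, hρ, hρU⟩ := Metric.isOpen_iff.1 hU w hw
  let S₀ : BallStage U := ⟨_, 1 / 2, by norm_num, by norm_num, (isBallEmb_affine w hρ).mono hρU⟩
  choose next hnext hnextμ using
    fun (S : BallStage U) (n : ℕ) => S.exists_next μ hU hc.isPreconnected hfin n
  let S : ℕ → BallStage U := fun j => Nat.rec S₀ (fun n T => next T n) j
  have hS : ∀ j, S (j + 1) = next (S j) j := fun j => rfl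
  refine ⟨S, fun j => by rw [hS]; exact hnext _ _, ?_⟩
  refine (ENNReal.tendsto_toReal hfin).comp ?_
  rw [← tendsto_add_atTop_iff_nat 1]
  have hlow : Tendsto (fun j : ℕ => μ U - ((j : ℝ≥0∞) + 1)⁻¹) atTop (𝓝 (μ U)) := by
    have h1 : Tendsto (fun j : ℕ => ((j : ℝ≥0∞) + 1)⁻¹) atTop (𝓝 0) := by
      have := (tendsto_add_atTop_iff_nat 1).2 ENNReal.tendsto_inv_nat_nhds_zero
      simpa using this
    have := ENNReal.Tendsto.sub (tendsto_const_nhds (x := μ U)) h1 (Or.inl hfin)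
    simpa using this
  refine tendsto_of_tendsto_of_tendsto_of_le_of_le hlow tendsto_const_nhds (fun j => ?_)
    (fun j => ?_)
  · exact tsub_le_iff_right.2 (hnextμ (S j) j)
  · refine measure_mono ?_
    rintro _ ⟨x, hx, rfl⟩
    exact (S (j + 1)).isBallEmb.mapsTo (ball_subset_ball (S (j + 1)).radius_lt_one.le hx)

end Volume

/-- **Proposition 2.6.** For a bounded connected open set `U ⊆ ℂ^m` there are injective
holomorphic maps `F_j : B^m(0,1) → U` and numbers `0 < s_j < 1` with
`F_{j+1}(B^m(0,s_{j+1})) ⊇ F_j(B^m(0,s_j))` for all `j`, and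
`vol(F_j(B^m(0,s_j))) → vol(U)` as `j → ∞`. -/
theorem exists_increasing_ball_images_volume_tendsto {m : ℕ}
    (U : Set (EuclideanSpace ℂ (Fin m))) (hUopen : IsOpen U) (hUconn : IsConnected U)
    (hUbdd : Bornology.IsBounded U) :
    ∃ (F : ℕ → EuclideanSpace ℂ (Fin m) → EuclideanSpace ℂ (Fin m)) (s : ℕ → ℝ),
      (∀ j, DifferentiableOn ℂ (F j) (ball 0 1)) ∧
      (∀ j, Set.InjOn (F j) (ball 0 1)) ∧
      (∀ j, F j '' ball 0 1 ⊆ U) ∧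
      (∀ j, 0 < s j ∧ s j < 1) ∧
      (∀ j, F j '' ball 0 (s j) ⊆ F (j + 1) '' ball 0 (s (j + 1))) ∧
      Filter.Tendsto (fun j => (volume (F j '' ball 0 (s j))).toReal)
        Filter.atTop (nhds (volume U).toReal) := by
  rcases Nat.eq_zero_or_pos m with rfl | hm
  · -- `ℂ^0` is a point, and all the balls as well as `U` are the whole space
    have hU : U = Set.univ := Subsingleton.eq_univ_of_nonempty hUconn.nonempty
    have hb : ball (0 : EuclideanSpace ℂ (Fin 0)) (1 / 2) = Set.univ :=
      Subsingleton.eq_univ_of_nonempty ⟨0, mem_ball_self (by norm_num)⟩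
    refine ⟨fun _ => id, fun _ => 1 / 2, fun _ => differentiableOn_id,
      fun _ => Function.injective_id.injOn, fun _ => hU ▸ Set.subset_univ _,
      fun _ => by norm_num, fun _ => subset_rfl, ?_⟩
    simp only [Set.image_id, hb, hU]
    exact tendsto_const_nhds
  · have : Nonempty (Fin m) := ⟨⟨0, hm⟩⟩
    have : Nontrivial (EuclideanSpace ℂ (Fin m)) := inferInstance
    have hfin : volume U ≠ ⊤ := hUbdd.measure_lt_top.ne
    obtain ⟨S, hS, hlim⟩ := exists_ballStage_seq volume hUopen hUconn hfin
    exact ⟨fun j => (S j).map, fun j => (S j).radius,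
      fun j => (S j).isBallEmb.contDiff.differentiableOn one_ne_zero,
      fun j => (S j).isBallEmb.inj, fun j => (S j).isBallEmb.mapsTo.image_subset,
      fun j => ⟨(S j).radius_pos, (S j).radius_lt_one⟩, hS, hlim⟩
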